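/- Fix N ≥ 2 and a transition relation → on {1,…,N} whose subshift is transitive, and let 𝓗 ⊂ SL(2,ℝ)^N be the set of N-tuples uniformly hyperbolic with respect to this subshift. Suppose (A₁,…,A_N) lies on the frontier of a connected component H of 𝓗. Then at least one of the following holds: (i) there is a nonempty admissible word (i₁,…,i_k) with i_k → i₁ such that A_{i_k}⋯A_{i₁} equals Id or −Id; (ii) there is a nonempty admissible word (i₁,…,i_k) with i_k → i₁ such that the product P = A_{i_k}⋯A_{i₁} satisfies |tr P| = 2 and P ≠ ±Id; (iii) (heteroclinic connection) there exist nonempty admissible words u = (u₁,…,u_k) and w = (w₁,…,w_ℓ) with u_k → u₁ and w_ℓ → w₁, and a possibly empty word v = (v₁,…,vₙ) such that the concatenation u·v·w is admissible, the products U = A_{u_k}⋯A_{u₁} and W = A_{w_ℓ}⋯A_{w₁} satisfy |tr U| > 2 and |tr W| > 2, and there exist a nonzero vector x ∈ ℝ² and reals λ, μ with U x = λ x, |λ| > 1, such that the vector y = A_{vₙ}⋯A_{v₁} x satisfies W y = μ y with |μ| < 1. Furthermore, the lengths k, ℓ, n occurring in these alternatives can be bounded by a constant depending only on the component H. -/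

import Mathlib

/-!
The proof is by a limit argument from inside the component.

**Hyperbolicity.** A tuple `B` defines a cocycle on the edges of the transition graph, with the
matrix `B b` on each edge `a → b`. Uniform hyperbolicity is equivalent to the finite-time condition
`BD.Exp`: for some `n`, the norm of an orbit exceeds twice its central value somewhere in each window
of length `2 * n` (`BD.unifHyp_exists_exp`, `BD.Exp.grow`, `BD.Grow.unifHyp`). This condition is open
and invariant under time reversal. The vectors at a symbol with a bounded forward orbit, and those
with a bounded backward orbit, form closed cones `BD.Bd` of stable and unstable directions. They are
invariant and transverse (`BD.Exp.sys`), and they depend continuously on the tuple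
(`BD.TG.ulim_bd`).

**The bound on the lengths.** Two unstable directions at a symbol belong to different classes if
stable directions separate them in the projective line. Transversality makes the number of classes
finite, and by continuity it is locally constant on the locus, so that one number `m` bounds it on
the whole component (`BD.ncl_component`); the same goes for the stable directions. All periods below
come from counting the `N * m` classes or the `N` symbols.

**The boundary.** The locus is open in a locally connected space, so a frontier point `A` of a
component is not hyperbolic (`BD.not_mem_of_frontier`). Take an ultrafilter in the component that
converges to `A`.

If the angle between unstable and stable directions at some symbol is not bounded below, consider a
pair at minimal angle. Each member is extremal in its class. Preimages of extremal unstable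
directions are extremal, so two of the first `N * m + 1` backward iterates sit at the same symbol, in
the same class and on the same side of it, and therefore span the same line
(`BD.Sys.extremal_cycle`). The stable member is treated by time reversal. In the limit the two
directions merge into a line whose past and whose future both run into closed paths of bounded
length that preserve the line. The one in the past does not contract it and the one in the future
does not expand it. This is a heteroclinic connection, or else one of the two closed paths has an eigenvalue of modulus one and its
product is parabolic or `±Id` (`BD.concl_of_small_angle`).

If the angles are bounded below, the limits of the two families are again invariant and transverse
(`BD.sys_lim`). Since `A` is not hyperbolic, its products do not grow exponentially, and this forces
a closed path of bounded length with an eigenvalue of modulus one.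

* If each limit stable cone contains two lines, the width of the cone in the affine chart given by an
  unstable vector is a measure of expansion. A pair of stable directions of extreme width that stays
  stable for `N * m` steps produces an eigenvalue of modulus one (`BD.Sys.unit_cycle`); otherwise compactness
  makes the width contract uniformly and the unstable vectors grow (`BD.Sys.grow`).
* Otherwise transitivity of the subshift makes the stable line unique at all symbols. Closed paths
  do not expand it, by passage to the limit, and if no simple closed path preserves its length then
  excising closed subpaths shows that it is contracted exponentially (`BD.grow_of_lines`).
-/

open Matrix

noncomputable section

/-- `SL(2,ℝ)`. -/
abbrev SL2 := Matrix.SpecialLinearGroup (Fin 2) ℝ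

/-- Operator norm of a `2 × 2` real matrix, induced by the Euclidean norm on `ℝ²`. -/
noncomputable def opNorm (A : Matrix (Fin 2) (Fin 2) ℝ) : ℝ :=
  ‖Matrix.toEuclideanCLM (𝕜 := ℝ) A‖

/-- Trace of an element of `SL(2,ℝ)`. -/
def trace2 (A : SL2) : ℝ := Matrix.trace (A : Matrix (Fin 2) (Fin 2) ℝ)

/-- Topology on `SL(2,ℝ)` induced from the space of `2 × 2` real matrices. -/
instance : TopologicalSpace SL2 := instTopologicalSpaceSubtype

/-- The real projective line: quotient of `ℝ² ∖ {0}` by nonzero scalar multiplication. -/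
abbrev P1 := Projectivization ℝ (Fin 2 → ℝ)

/-- The quotient topology on the real projective line. -/
instance : TopologicalSpace P1 := instTopologicalSpaceQuotient

/-- The projective action of `SL(2,ℝ)` on the real projective line. -/
def projAct (A : SL2) : P1 → P1 :=
  Projectivization.map (Matrix.SpecialLinearGroup.toLin' A).toLinearMap
    (Matrix.SpecialLinearGroup.toLin' A).injective

/-- For a word `w = [i₁, …, iₙ]`, the product `A_{iₙ} ⋯ A_{i₁}`. -/
def wordProd {N : ℕ} (A : Fin N → SL2) (w : List (Fin N)) : SL2 :=
  (w.reverse.map A).prod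

/-- Uniform hyperbolicity with respect to the full shift on `N` symbols:
every product of `n` matrices has operator norm at least `C·λⁿ`. -/
def UnifHyp {N : ℕ} (A : Fin N → SL2) : Prop :=
  ∃ C > (0:ℝ), ∃ lam > (1:ℝ), ∀ w : List (Fin N), w ≠ [] →
    opNorm (wordProd A w : Matrix (Fin 2) (Fin 2) ℝ) ≥ C * lam ^ w.length

/-- Transitivity of the subshift of finite type given by the transition relation `T`:
any symbol can be joined to any other by an admissible word. -/
def TransitiveSubshift {N : ℕ} (T : Fin N → Fin N → Prop) : Prop :=
  ∀ α β : Fin N, ∃ w : List (Fin N), w ≠ [] ∧ w.Chain' T ∧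
    w.head? = some α ∧ w.getLast? = some β

/-- Uniform hyperbolicity with respect to the subshift determined by the
transition relation `T`. -/
def UnifHypSub {N : ℕ} (T : Fin N → Fin N → Prop) (A : Fin N → SL2) : Prop :=
  ∃ C > (0:ℝ), ∃ lam > (1:ℝ), ∀ w : List (Fin N), w ≠ [] → w.Chain' T →
    opNorm (wordProd A w : Matrix (Fin 2) (Fin 2) ℝ) ≥ C * lam ^ w.length

/-- For a word `w` in two letters (`true ↦ A`, `false ↦ B`), the corresponding
product of the matrices `A`, `B` (letters applied right-to-left). -/
def pairProd (A B : SL2) (w : List Bool) : SL2 :=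
  (w.reverse.map fun b => if b then A else B).prod

/-- Uniform hyperbolicity of a pair `(A,B)` with respect to the full shift on two symbols. -/
def UnifHypPair (A B : SL2) : Prop :=
  ∃ C > (0:ℝ), ∃ lam > (1:ℝ), ∀ w : List Bool, w ≠ [] →
    opNorm (pairProd A B w : Matrix (Fin 2) (Fin 2) ℝ) ≥ C * lam ^ w.length

/-- The hyperbolicity locus for the full shift on two symbols. -/
def UHpairs : Set (SL2 × SL2) := {p | UnifHypPair p.1 p.2}

/-- The set of pairs having an elliptic product. -/
def Epairs : Set (SL2 × SL2) :=
  {p | ∃ w : List Bool, w ≠ [] ∧ |trace2 (pairProd p.1 p.2 w)| < 2}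

/-- An open interval in the projective line: a nonempty open connected subset
whose complement contains more than one point. -/
def IsOpenInterval (I : Set P1) : Prop :=
  IsOpen I ∧ IsConnected I ∧ Iᶜ.Nontrivial

/-- `H₀`: pairs possessing a common strictly invariant open interval. -/
def H0 : Set (SL2 × SL2) :=
  {p | ∃ I : Set P1, IsOpenInterval I ∧
        projAct p.1 '' closure I ⊆ I ∧ projAct p.2 '' closure I ⊆ I}

/-- `H_id`: pairs with `|tr A| > 2`, `|tr B| > 2`, `|tr AB| > 2`, `tr A · tr B · tr AB < 0`. -/
def Hid : Set (SL2 × SL2) :=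
  {p | 2 < |trace2 p.1| ∧ 2 < |trace2 p.2| ∧ 2 < |trace2 (p.1 * p.2)| ∧
       trace2 p.1 * trace2 p.2 * trace2 (p.1 * p.2) < 0}

/-- `F₊(A,B) = (A, AB)`. -/
def Fplus (p : SL2 × SL2) : SL2 × SL2 := (p.1, p.1 * p.2)

/-- `F₋(A,B) = (BA, B)`. -/
def Fminus (p : SL2 × SL2) : SL2 × SL2 := (p.2 * p.1, p.2)

/-- `applySeq [ε₁, …, ε_k] = F_{ε_k} ∘ ⋯ ∘ F_{ε₁}`, where `true` stands for `+`
and `false` for `−`. -/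
def applySeq (s : List Bool) (p : SL2 × SL2) : SL2 × SL2 :=
  s.foldl (fun q e => if e then Fplus q else Fminus q) p

/-- A pair `(A,B)` is free if `|tr A| ≥ 2`, `|tr B| ≥ 2`, `|tr AB| ≥ 2` and
`tr A · tr B · tr AB < 0`. -/
def FreePair (p : SL2 × SL2) : Prop :=
  2 ≤ |trace2 p.1| ∧ 2 ≤ |trace2 p.2| ∧ 2 ≤ |trace2 (p.1 * p.2)| ∧
    trace2 p.1 * trace2 p.2 * trace2 (p.1 * p.2) < 0

/-- A pair is straight if it lies in the closure of `H₀`. -/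
def Straight (p : SL2 × SL2) : Prop := p ∈ closure H0

/-- A pair `(A,B)` is twisted if `|tr A| ≥ 2`, `|tr B| ≥ 2` and it is not straight. -/
def Twisted (p : SL2 × SL2) : Prop :=
  2 ≤ |trace2 p.1| ∧ 2 ≤ |trace2 p.2| ∧ ¬ Straight p

/-- A pair is almost hyperbolic if every image of it under the monoid generated by
`F₊`, `F₋` consists of two non-elliptic matrices. -/
def AlmostHyperbolic (p : SL2 × SL2) : Prop :=
  ∀ s : List Bool, 2 ≤ |trace2 (applySeq s p).1| ∧ 2 ≤ |trace2 (applySeq s p).2|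

/-- Group-hyperbolicity of a pair: exponential growth over all reduced words
in the free group on two generators (`true ↦ A`, `false ↦ B`). -/
def GroupHyp (A B : SL2) : Prop :=
  ∃ C > (0:ℝ), ∃ τ > (0:ℝ), ∀ g : FreeGroup Bool, g ≠ 1 →
    opNorm ((FreeGroup.lift (fun b => if b then A else B) g : SL2) :
        Matrix (Fin 2) (Fin 2) ℝ) ≥
      C * Real.exp (τ * (FreeGroup.toWord g).length)

/-- `M` has finitely many connected components, and distinct components have
disjoint closures. -/
def FinCompDisjClosures (M : Set P1) : Prop :=
  {C : Set P1 | ∃ x ∈ M, C = connectedComponentIn M x}.Finite ∧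
    ∀ x ∈ M, ∀ y ∈ M, connectedComponentIn M x ≠ connectedComponentIn M y →
      closure (connectedComponentIn M x) ∩ closure (connectedComponentIn M y) = ∅

end

namespace BD

/-! ### The action on the plane -/

/-- The plane on which `SL(2,ℝ)` acts; all norms of vectors are sup norms. -/
abbrev V2 := Fin 2 → ℝ

/-- The linear action of `SL(2,ℝ)` on the plane. -/
def act (g : SL2) (v : V2) : V2 := (g : Matrix (Fin 2) (Fin 2) ℝ) *ᵥ v

/-- The standard area form on the plane. -/
def om (u v : V2) : ℝ := u 0 * v 1 - u 1 * v 0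

lemma act_apply (g : SL2) (v : V2) (i : Fin 2) : act g v i = g.1 i 0 * v 0 + g.1 i 1 * v 1 := by
  simp [act, Matrix.mulVec, dotProduct, Fin.sum_univ_two]

lemma det_expl (g : SL2) : g.1 0 0 * g.1 1 1 - g.1 0 1 * g.1 1 0 = 1 := by
  have := g.2
  rwa [Matrix.det_fin_two] at this

lemma act_one (v : V2) : act 1 v = v := by simp [act]

lemma act_mul (g h : SL2) (v : V2) : act (g * h) v = act g (act h v) := by
  unfold act
  rw [Matrix.SpecialLinearGroup.coe_mul, Matrix.mulVec_mulVec]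

lemma act_add (g : SL2) (u v : V2) : act g (u + v) = act g u + act g v := by
  simp [act, Matrix.mulVec_add]

lemma act_smul (g : SL2) (c : ℝ) (v : V2) : act g (c • v) = c • act g v := by
  simp [act, Matrix.mulVec_smul]

lemma act_zero (g : SL2) : act g 0 = 0 := by simp [act]

lemma act_inv_act (g : SL2) (v : V2) : act g⁻¹ (act g v) = v := by
  rw [← act_mul, inv_mul_cancel, act_one]

lemma act_act_inv (g : SL2) (v : V2) : act g (act g⁻¹ v) = v := by
  rw [← act_mul, mul_inv_cancel, act_one]

lemma act_eq_zero {g : SL2} {v : V2} : act g v = 0 ↔ v = 0 := by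
  constructor
  · intro h
    rw [← act_inv_act g v, h, act_zero]
  · rintro rfl
    exact act_zero g

lemma om_act (g : SL2) (u v : V2) : om (act g u) (act g v) = om u v := by
  have h := det_expl g
  simp only [om, act_apply]
  linear_combination (u 0 * v 1 - u 1 * v 0) * h

lemma om_act_inv (g : SL2) (u v : V2) : om (act g⁻¹ u) v = om u (act g v) := by
  rw [← om_act g, act_act_inv]

lemma om_self (u : V2) : om u u = 0 := by simp [om]; ring

lemma om_swap (u v : V2) : om v u = - om u v := by unfold om; ring

lemma om_smul_left (c : ℝ) (u v : V2) : om (c • u) v = c * om u v := by simp [om]; ring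

lemma om_smul_right (c : ℝ) (u v : V2) : om u (c • v) = c * om u v := by simp [om]; ring

lemma om_zero_left (v : V2) : om 0 v = 0 := by simp [om]

lemma om_zero_right (v : V2) : om v 0 = 0 := by simp [om]

lemma abs_coord_le (v : V2) (i : Fin 2) : |v i| ≤ ‖v‖ := by
  simpa using norm_le_pi_norm v i

lemma norm_le_of_coord {v : V2} {r : ℝ} (h0 : |v 0| ≤ r) (h1 : |v 1| ≤ r) : ‖v‖ ≤ r := by
  rw [pi_norm_le_iff_of_nonneg ((abs_nonneg _).trans h0)]
  intro i
  fin_cases i <;> simpa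

lemma om_bound (u v : V2) : |om u v| ≤ 2 * ‖u‖ * ‖v‖ := by
  have h : |om u v| ≤ |u 0| * |v 1| + |u 1| * |v 0| := by
    rw [← abs_mul, ← abs_mul]
    exact abs_sub _ _
  have := mul_le_mul (abs_coord_le u 0) (abs_coord_le v 1) (abs_nonneg _) (norm_nonneg _)
  have := mul_le_mul (abs_coord_le u 1) (abs_coord_le v 0) (abs_nonneg _) (norm_nonneg _)
  linarith

lemma om_sub_left (u u' v : V2) : om (u - u') v = om u v - om u' v := by simp [om]; ring

/-- Vanishing of the area form means proportionality. -/
lemma exists_smul_of_om {u v : V2} (hu : u ≠ 0) (h : om u v = 0) : ∃ c : ℝ, v = c • u := by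
  have h' : u 0 * v 1 = u 1 * v 0 := by simpa [om, sub_eq_zero] using h
  by_cases h0 : u 0 = 0
  · have h1 : u 1 ≠ 0 := by
      intro h1
      apply hu
      ext i
      fin_cases i <;> simp [h0, h1]
    refine ⟨v 1 / u 1, ?_⟩
    have : v 0 = 0 := by
      rw [h0, zero_mul] at h'
      exact (mul_eq_zero.1 h'.symm).resolve_left h1
    ext i
    fin_cases i
    · simp [this, h0]
    · simp [h1]
  · refine ⟨v 0 / u 0, ?_⟩
    ext i
    fin_cases i
    · simp [h0]
    · simp
      field_simp
      linarith

/-- The sum of the absolute values of the entries. -/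
def gn (g : SL2) : ℝ := |g.1 0 0| + |g.1 0 1| + |g.1 1 0| + |g.1 1 1|

lemma act_bound (g : SL2) (v : V2) : ‖act g v‖ ≤ gn g * ‖v‖ := by
  have key : ∀ i, |act g v i| ≤ (|g.1 i 0| + |g.1 i 1|) * ‖v‖ := by
    intro i
    rw [act_apply]
    have h := abs_add_le (g.1 i 0 * v 0) (g.1 i 1 * v 1)
    rw [abs_mul, abs_mul] at h
    have := mul_le_mul_of_nonneg_left (abs_coord_le v 0) (abs_nonneg (g.1 i 0))
    have := mul_le_mul_of_nonneg_left (abs_coord_le v 1) (abs_nonneg (g.1 i 1))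
    linarith
  have hn := norm_nonneg v
  apply norm_le_of_coord
  · refine (key 0).trans (mul_le_mul_of_nonneg_right ?_ hn)
    have := abs_nonneg (g.1 1 0)
    have := abs_nonneg (g.1 1 1)
    simp only [gn]; linarith
  · refine (key 1).trans (mul_le_mul_of_nonneg_right ?_ hn)
    have := abs_nonneg (g.1 0 0)
    have := abs_nonneg (g.1 0 1)
    simp only [gn]; linarith

lemma inv_entries (g : SL2) : g⁻¹.1 0 0 = g.1 1 1 ∧ g⁻¹.1 0 1 = - g.1 0 1 ∧
    g⁻¹.1 1 0 = - g.1 1 0 ∧ g⁻¹.1 1 1 = g.1 0 0 := by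
  rw [Matrix.SpecialLinearGroup.SL2_inv_expl]
  simp

lemma gn_inv (g : SL2) : gn g⁻¹ = gn g := by
  obtain ⟨h1, h2, h3, h4⟩ := inv_entries g
  simp only [gn, h1, h2, h3, h4, abs_neg]
  ring

/-- A matrix of determinant one does not expand every direction; the factor `2` accounts for
the passage from the Euclidean norm to the sup norm. -/
lemma exists_not_expanded (g : SL2) : ∃ v : V2, v ≠ 0 ∧ ‖act g v‖ ≤ 2 * ‖v‖ := by
  -- the quadratic form `|g v|² - |v|²` has nonpositive discriminant determinant
  have hd := det_expl g
  set a := g.1 0 0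
  set b := g.1 0 1
  set c := g.1 1 0
  set d := g.1 1 1
  obtain ⟨v, hv, hq⟩ : ∃ v : V2, v ≠ 0 ∧ (act g v 0) ^ 2 + (act g v 1) ^ 2 ≤ v 0 ^ 2 + v 1 ^ 2 := by
    by_cases hα : a ^ 2 + c ^ 2 - 1 ≤ 0
    · refine ⟨![1, 0], ?_, ?_⟩
      · intro h
        simpa using congrFun h 0
      · simp only [act_apply]
        simp
        change a ^ 2 + c ^ 2 ≤ 1
        linarith
    · push Not at hα
      refine ⟨![-(a * b + c * d), a ^ 2 + c ^ 2 - 1], ?_, ?_⟩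
      · intro h
        have := congrFun h 1
        simp at this
        linarith
      · simp only [act_apply]
        simp only [Matrix.cons_val_zero, Matrix.cons_val_one]
        change (a * _ + b * _) ^ 2 + (c * _ + d * _) ^ 2 ≤ _
        have hdet : (a ^ 2 + c ^ 2 - 1) * (b ^ 2 + d ^ 2 - 1) - (a * b + c * d) ^ 2 ≤ 0 := by
          have : (a ^ 2 + c ^ 2 - 1) * (b ^ 2 + d ^ 2 - 1) - (a * b + c * d) ^ 2
              = (a * d - b * c) ^ 2 + 1 - (a ^ 2 + b ^ 2 + c ^ 2 + d ^ 2) := by ring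
          rw [this, hd]
          nlinarith [sq_nonneg (a - d), sq_nonneg (b + c)]
        nlinarith [mul_nonpos_of_nonneg_of_nonpos hα.le hdet]
  refine ⟨v, hv, ?_⟩
  have h0 : v 0 ^ 2 ≤ ‖v‖ ^ 2 := by
    rw [← sq_abs]
    exact pow_le_pow_left₀ (abs_nonneg _) (abs_coord_le v 0) 2
  have h1 : v 1 ^ 2 ≤ ‖v‖ ^ 2 := by
    rw [← sq_abs]
    exact pow_le_pow_left₀ (abs_nonneg _) (abs_coord_le v 1) 2
  have hn := norm_nonneg v
  apply norm_le_of_coord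
  · apply abs_le_of_sq_le_sq _ (by positivity)
    nlinarith [sq_nonneg (act g v 1)]
  · apply abs_le_of_sq_le_sq _ (by positivity)
    nlinarith [sq_nonneg (act g v 0)]

/-- The area form is nondegenerate, with a bound for the sup norm. -/
lemma exists_om_ge (s : V2) : ∃ w : V2, w ≠ 0 ∧ ‖s‖ * ‖w‖ ≤ |om s w| := by
  have hw0 : ‖(![1, 0] : V2)‖ ≤ 1 := norm_le_of_coord (by simp) (by simp)
  have hw1 : ‖(![0, 1] : V2)‖ ≤ 1 := norm_le_of_coord (by simp) (by simp)
  rcases le_total |s 0| |s 1| with h | h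
  · refine ⟨![1, 0], fun h => by simpa using congrFun h 0, ?_⟩
    have hs : ‖s‖ ≤ |s 1| := norm_le_of_coord h le_rfl
    calc ‖s‖ * ‖(![1, 0] : V2)‖ ≤ |s 1| * 1 := by gcongr
      _ = |om s ![1, 0]| := by simp [om]
  · refine ⟨![0, 1], fun h => by simpa using congrFun h 1, ?_⟩
    have hs : ‖s‖ ≤ |s 0| := norm_le_of_coord le_rfl h
    calc ‖s‖ * ‖(![0, 1] : V2)‖ ≤ |s 0| * 1 := by gcongr
      _ = |om s ![0, 1]| := by simp [om]

/-! ### Comparison of `opNorm` with the growth of vectors -/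

lemma enorm_eq (v : V2) : ‖(WithLp.toLp 2 v : EuclideanSpace ℝ (Fin 2))‖ = √(v 0 ^ 2 + v 1 ^ 2) := by
  simp [EuclideanSpace.norm_eq, Fin.sum_univ_two]

lemma norm_le_enorm (v : V2) : ‖v‖ ≤ ‖(WithLp.toLp 2 v : EuclideanSpace ℝ (Fin 2))‖ := by
  rw [enorm_eq]
  apply norm_le_of_coord <;> apply Real.abs_le_sqrt <;> nlinarith [sq_nonneg (v 0), sq_nonneg (v 1)]

lemma enorm_le_norm (v : V2) : ‖(WithLp.toLp 2 v : EuclideanSpace ℝ (Fin 2))‖ ≤ 2 * ‖v‖ := by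
  rw [enorm_eq]
  apply Real.sqrt_le_iff.2 ⟨by positivity, ?_⟩
  have h0 : v 0 ^ 2 ≤ ‖v‖ ^ 2 := by
    rw [← sq_abs]
    exact pow_le_pow_left₀ (abs_nonneg _) (abs_coord_le v 0) 2
  have h1 : v 1 ^ 2 ≤ ‖v‖ ^ 2 := by
    rw [← sq_abs]
    exact pow_le_pow_left₀ (abs_nonneg _) (abs_coord_le v 1) 2
  nlinarith [norm_nonneg v]

lemma norm_act_le_opNorm (g : SL2) (v : V2) : ‖act g v‖ ≤ 2 * opNorm g.1 * ‖v‖ := by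
  have h := (Matrix.toEuclideanCLM (𝕜 := ℝ) g.1).le_opNorm (WithLp.toLp 2 v)
  have e : (Matrix.toEuclideanCLM (𝕜 := ℝ) g.1) (WithLp.toLp 2 v) = WithLp.toLp 2 (act g v) := by
    simp [act]
  rw [e] at h
  have h0 : 0 ≤ opNorm g.1 := norm_nonneg _
  calc ‖act g v‖ ≤ _ := norm_le_enorm _
    _ ≤ _ := h
    _ ≤ opNorm g.1 * (2 * ‖v‖) := mul_le_mul_of_nonneg_left (enorm_le_norm v) h0
    _ = _ := by ring

lemma opNorm_le {g : SL2} {M : ℝ} (hM : 0 ≤ M) (h : ∀ v, ‖act g v‖ ≤ M * ‖v‖) :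
    opNorm g.1 ≤ 2 * M := by
  refine ContinuousLinearMap.opNorm_le_bound _ (by positivity) fun x => ?_
  have e : (Matrix.toEuclideanCLM (𝕜 := ℝ) g.1) x = WithLp.toLp 2 (act g x.ofLp) := by
    ext i
    simp [act]
  rw [e]
  calc _ ≤ 2 * ‖act g x.ofLp‖ := enorm_le_norm _
    _ ≤ 2 * (M * ‖x.ofLp‖) := by gcongr; exact h _
    _ ≤ 2 * (M * ‖x‖) := by gcongr; exact norm_le_enorm x.ofLp
    _ = _ := by ring

end BD

namespace BD

/-! ### Sequences that double inside every window -/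

section Seq

variable {f : ℕ → ℝ} {n L : ℕ} {Λ : ℝ}

/-- A bounded sequence that doubles inside every window is exponentially small in the distance to
the ends. -/
lemma seq_decay (h0 : ∀ k, 0 ≤ f k)
    (hE : ∀ a, a + 2 * n ≤ L → f (a + n) ≠ 0 → ∃ k ≤ 2 * n, 2 * f (a + n) < f (a + k))
    {M : ℝ} (hM : ∀ k ≤ L, f k ≤ M) (j k : ℕ) (h1 : j * n ≤ k) (h2 : k + j * n ≤ L) :
    f k * 2 ^ j ≤ M := by
  have hM0 : 0 ≤ M := (h0 0).trans (hM 0 (Nat.zero_le _))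
  induction j generalizing k with
  | zero => simpa using hM k (by omega)
  | succ j ih =>
    rw [Nat.succ_mul] at h1 h2
    by_cases hf : f k = 0
    · rw [hf, zero_mul]; exact hM0
    obtain ⟨a, rfl⟩ : ∃ a, k = a + n := ⟨k - n, by omega⟩
    obtain ⟨i, hi, hlt⟩ := hE a (by omega) hf
    have := ih (a + i) (by omega) (by omega)
    calc f (a + n) * 2 ^ (j + 1) = 2 * f (a + n) * 2 ^ j := by ring
      _ ≤ f (a + i) * 2 ^ j := by gcongr
      _ ≤ M := this

lemma seq_le_pow (hΛ : 1 ≤ Λ) (hup : ∀ k < L, f (k + 1) ≤ Λ * f k)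
    (a m : ℕ) (h : a + m ≤ L) : f (a + m) ≤ Λ ^ m * f a := by
  induction m with
  | zero => simp
  | succ m ih =>
    have h1 := ih (by omega)
    have h2 := hup (a + m) (by omega)
    calc f (a + (m + 1)) ≤ Λ * f (a + m) := h2
      _ ≤ Λ * (Λ ^ m * f a) := by gcongr
      _ = _ := by ring

lemma seq_le_pow' (hΛ : 1 ≤ Λ) (hdn : ∀ k < L, f k ≤ Λ * f (k + 1))
    (a m : ℕ) (h : a + m ≤ L) : f a ≤ Λ ^ m * f (a + m) := by
  induction m with
  | zero => simp
  | succ m ih =>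
    have h1 := ih (by omega)
    have h2 := hdn (a + m) (by omega)
    calc f a ≤ Λ ^ m * f (a + m) := h1
      _ ≤ Λ ^ m * (Λ * f (a + m + 1)) := by gcongr
      _ = _ := by rw [add_assoc]; ring

/-- Inside a window the sequence is controlled by its two end values. -/
lemma seq_le_ends (hΛ : 1 ≤ Λ) (h0 : ∀ k, 0 ≤ f k)
    (hE : ∀ a, a + 2 * n ≤ L → f (a + n) ≠ 0 → ∃ k ≤ 2 * n, 2 * f (a + n) < f (a + k))
    (hup : ∀ k < L, f (k + 1) ≤ Λ * f k) (hdn : ∀ k < L, f k ≤ Λ * f (k + 1))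
    {k : ℕ} (hk : k ≤ L) : f k ≤ Λ ^ n * max (f 0) (f L) := by
  obtain ⟨m, hm, hmax⟩ := Finset.exists_max_image (Finset.range (L + 1)) f ⟨0, by simp⟩
  simp only [Finset.mem_range, Nat.lt_succ_iff] at hm hmax
  refine (hmax k hk).trans ?_
  have hp : (1 : ℝ) ≤ Λ ^ n := one_le_pow₀ hΛ
  have hpos : 0 ≤ max (f 0) (f L) := le_max_of_le_left (h0 0)
  by_cases hmid : n ≤ m ∧ m + n ≤ L
  · have := seq_decay h0 hE hmax 1 m (by omega) (by omega)
    have := h0 m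
    nlinarith
  rw [not_and_or] at hmid
  rcases hmid with h | h
  · have h1 := seq_le_pow hΛ hup 0 m (by omega)
    rw [zero_add] at h1
    calc f m ≤ Λ ^ m * f 0 := h1
      _ ≤ Λ ^ n * max (f 0) (f L) := by
        have := h0 0
        gcongr
        · omega
        · exact le_max_left _ _
  · have h1 := seq_le_pow' hΛ hdn m (L - m) (by omega)
    rw [Nat.add_sub_cancel' hm] at h1
    calc f m ≤ Λ ^ (L - m) * f L := h1
      _ ≤ Λ ^ n * max (f 0) (f L) := by
        have := h0 L
        gcongr
        · omega
        · exact le_max_right _ _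

/-- A bounded infinite sequence of this kind is controlled by its initial value. -/
lemma seq_bdd (hΛ : 1 ≤ Λ) (h0 : ∀ k, 0 ≤ f k)
    (hE : ∀ a, f (a + n) ≠ 0 → ∃ k ≤ 2 * n, 2 * f (a + n) < f (a + k))
    (hup : ∀ k, f (k + 1) ≤ Λ * f k) (hdn : ∀ k, f k ≤ Λ * f (k + 1))
    {R : ℝ} (hR : ∀ k, f k ≤ R) (k : ℕ) : f k ≤ Λ ^ n * f 0 := by
  by_cases hf : f 0 = 0
  · have := seq_le_pow (L := k) hΛ (fun k _ => hup k) 0 k (by omega)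
    rw [hf] at this ⊢
    simpa using this
  have hf0 : 0 < f 0 := lt_of_le_of_ne (h0 0) (Ne.symm hf)
  obtain ⟨j, hj⟩ := pow_unbounded_of_one_lt (R / f 0) (one_lt_two (α := ℝ))
  rw [div_lt_iff₀ hf0] at hj
  set m := max k (j * n) with hm
  have hd := seq_decay (L := m + j * n) h0 (fun a _ => hE a) (fun k _ => hR k) j m
    (le_max_right _ _) le_rfl
  have h1 : f m ≤ f 0 := by
    have hp : (0 : ℝ) < 2 ^ j := by positivity
    by_contra hc
    push Not at hc
    nlinarith
  have := seq_le_ends (L := m) hΛ h0 (fun a _ => hE a) (fun k _ => hup k) (fun k _ => hdn k)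
    (le_max_left k (j * n))
  rwa [max_eq_left h1] at this

end Seq

/-! ### Cocycles over the edges of a finite graph -/

section Cocycle

variable {ι : Type*} {T : ι → ι → Prop} {G : ι → ι → SL2} {p : ℕ → ι} {v : ℕ → V2}

/-- `v` is an orbit of the cocycle `G` (the matrix `G a b` sits on the edge `a → b`) along the
path `p`, for the times `0, …, L`. -/
def Orb (T : ι → ι → Prop) (G : ι → ι → SL2) (p : ℕ → ι) (v : ℕ → V2) (L : ℕ) : Prop :=
  ∀ k < L, T (p k) (p (k + 1)) ∧ v (k + 1) = act (G (p k) (p (k + 1))) (v k)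

/-- Product of the cocycle along the first `n` edges of the path `p`. -/
def Phi (G : ι → ι → SL2) (p : ℕ → ι) : ℕ → SL2
  | 0 => 1
  | n + 1 => G (p n) (p (n + 1)) * Phi G p n

/-- A finite-time form of uniform hyperbolicity: in each window of length `2n`, the norm of an
orbit somewhere exceeds twice its value at the centre. It is symmetric under time reversal. -/
def Exp (T : ι → ι → Prop) (G : ι → ι → SL2) (n : ℕ) : Prop :=
  ∀ p v, Orb T G p v (2 * n) → v n ≠ 0 → ∃ k ≤ 2 * n, 2 * ‖v n‖ < ‖v k‖

/-- The time-reversed cocycle, which lives on the reversed graph. -/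
def dualG (G : ι → ι → SL2) (a b : ι) : SL2 := (G b a)⁻¹

lemma Orb.mono {L L' : ℕ} (h : Orb T G p v L) (hL : L' ≤ L) : Orb T G p v L' :=
  fun k hk => h k (by omega)

lemma Orb.shift {L L' a : ℕ} (h : Orb T G p v L) (hL : a + L' ≤ L) :
    Orb T G (fun k => p (a + k)) (fun k => v (a + k)) L' :=
  fun k hk => h (a + k) (by omega)

lemma Orb.congr {L : ℕ} {p' : ℕ → ι} {v' : ℕ → V2} (h : Orb T G p v L)
    (hp : ∀ k ≤ L, p' k = p k) (hv : ∀ k ≤ L, v' k = v k) : Orb T G p' v' L := by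
  intro k hk
  rw [hp k (by omega), hp (k + 1) (by omega), hv k (by omega), hv (k + 1) (by omega)]
  exact h k hk

lemma Orb.rev {L : ℕ} (h : Orb T G p v L) :
    Orb (flip T) (dualG G) (fun k => p (L - k)) (fun k => v (L - k)) L := by
  intro k hk
  have e : L - k = L - (k + 1) + 1 := by omega
  obtain ⟨h1, h2⟩ := h (L - (k + 1)) (by omega)
  simp only [flip, dualG]
  rw [e]
  exact ⟨h1, by rw [h2, act_inv_act]⟩

lemma dual_dual : dualG (dualG G) = G := by
  funext a b
  simp [dualG]

lemma Orb.phi {L : ℕ} (h : Orb T G p v L) {k : ℕ} (hk : k ≤ L) : v k = act (Phi G p k) (v 0) := by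
  induction k with
  | zero => simp [Phi, act_one]
  | succ k ih => rw [(h k (by omega)).2, ih (by omega), Phi, act_mul]

lemma orb_phi {L : ℕ} (h : ∀ k < L, T (p k) (p (k + 1))) (w : V2) :
    Orb T G p (fun k => act (Phi G p k) w) L :=
  fun k hk => ⟨h k hk, by simp only [Phi, act_mul]⟩

lemma Orb.smul {L : ℕ} (h : Orb T G p v L) (c : ℝ) : Orb T G p (fun k => c • v k) L :=
  fun k hk => ⟨(h k hk).1, by simp only [act_smul, (h k hk).2]⟩

lemma Orb.eq_zero_iff {L : ℕ} (h : Orb T G p v L) {k : ℕ} (hk : k ≤ L) : v k = 0 ↔ v 0 = 0 := by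
  rw [h.phi hk, act_eq_zero]

lemma Orb.om_eq {L : ℕ} {w : ℕ → V2} (h : Orb T G p v L) (h' : Orb T G p w L) {k : ℕ}
    (hk : k ≤ L) : om (v k) (w k) = om (v 0) (w 0) := by
  rw [h.phi hk, h'.phi hk, om_act]

lemma Exp.dual {n : ℕ} (h : Exp T G n) : Exp (flip T) (dualG G) n := by
  intro p v ho hv
  have h1 := ho.rev
  rw [dual_dual] at h1
  have e : 2 * n - n = n := by omega
  obtain ⟨k, hk, hlt⟩ := h _ _ h1 (by simpa only [e] using hv)
  simp only [e] at hlt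
  exact ⟨2 * n - k, by omega, hlt⟩

lemma Exp.pos [Nonempty ι] {n : ℕ} (h : Exp T G n) : 1 ≤ n := by
  by_contra hn
  obtain rfl : n = 0 := by omega
  obtain ⟨a⟩ := ‹Nonempty ι›
  obtain ⟨k, hk, hlt⟩ := h (fun _ => a) (fun _ => ![1, 0]) (fun k hk => by omega)
    (fun h => by simpa using congrFun h 0)
  have := norm_nonneg (![1, 0] : V2)
  linarith

/-- `Λ` bounds all the matrices of the cocycle, and hence their inverses. -/
def NB (G : ι → ι → SL2) (Λ : ℝ) : Prop := 1 ≤ Λ ∧ ∀ a b, gn (G a b) ≤ Λ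

lemma exists_NB [Finite ι] (G : ι → ι → SL2) : ∃ Λ, NB G Λ := by
  obtain ⟨M, hM⟩ := (Set.finite_range fun x : ι × ι => gn (G x.1 x.2)).bddAbove
  exact ⟨max 1 M, le_max_left _ _, fun a b =>
    (hM ⟨(a, b), rfl⟩ : gn (G a b) ≤ M).trans (le_max_right _ _)⟩

lemma NB.dual {Λ : ℝ} (h : NB G Λ) : NB (dualG G) Λ :=
  ⟨h.1, fun a b => by rw [dualG, gn_inv]; exact h.2 b a⟩

lemma NB.act_le {Λ : ℝ} (h : NB G Λ) (a b : ι) (v : V2) : ‖act (G a b) v‖ ≤ Λ * ‖v‖ :=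
  (act_bound _ _).trans (mul_le_mul_of_nonneg_right (h.2 a b) (norm_nonneg _))

lemma NB.le_act {Λ : ℝ} (h : NB G Λ) (a b : ι) (v : V2) : ‖v‖ ≤ Λ * ‖act (G a b) v‖ := by
  have := h.dual.act_le b a (act (G a b) v)
  rwa [dualG, act_inv_act] at this

lemma Orb.up {Λ : ℝ} (hΛ : NB G Λ) {L : ℕ} (h : Orb T G p v L) :
    ∀ k < L, ‖v (k + 1)‖ ≤ Λ * ‖v k‖ := fun k hk => by
  rw [(h k hk).2]; exact hΛ.act_le _ _ _

lemma Orb.dn {Λ : ℝ} (hΛ : NB G Λ) {L : ℕ} (h : Orb T G p v L) :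
    ∀ k < L, ‖v k‖ ≤ Λ * ‖v (k + 1)‖ := fun k hk => by
  rw [(h k hk).2]; exact hΛ.le_act _ _ _

lemma Exp.window {n L : ℕ} (hE : Exp T G n) (h : Orb T G p v L) :
    ∀ a, a + 2 * n ≤ L → ‖v (a + n)‖ ≠ 0 → ∃ k ≤ 2 * n, 2 * ‖v (a + n)‖ < ‖v (a + k)‖ :=
  fun _ ha hv => hE _ _ (h.shift ha) (norm_ne_zero_iff.1 hv)

lemma Exp.decay {n L : ℕ} (hE : Exp T G n) (h : Orb T G p v L) {M : ℝ} (hM : ∀ k ≤ L, ‖v k‖ ≤ M)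
    (j k : ℕ) (h1 : j * n ≤ k) (h2 : k + j * n ≤ L) : ‖v k‖ * 2 ^ j ≤ M :=
  seq_decay (f := fun k => ‖v k‖) (fun _ => norm_nonneg _) (hE.window h) hM j k h1 h2

lemma Exp.le_ends {n L : ℕ} {Λ : ℝ} (hE : Exp T G n) (hΛ : NB G Λ) (h : Orb T G p v L) {k : ℕ}
    (hk : k ≤ L) : ‖v k‖ ≤ Λ ^ n * max ‖v 0‖ ‖v L‖ :=
  seq_le_ends (f := fun k => ‖v k‖) hΛ.1 (fun _ => norm_nonneg _) (hE.window h) (h.up hΛ)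
    (h.dn hΛ) hk

lemma Exp.bdd {n : ℕ} {Λ R : ℝ} (hE : Exp T G n) (hΛ : NB G Λ) (h : ∀ L, Orb T G p v L)
    (hR : ∀ k, ‖v k‖ ≤ R) (k : ℕ) : ‖v k‖ ≤ Λ ^ n * ‖v 0‖ :=
  seq_bdd (f := fun k => ‖v k‖) hΛ.1 (fun _ => norm_nonneg _)
    (fun a => hE.window (h (a + 2 * n)) a le_rfl) (fun k => (h (k + 1)).up hΛ k (by omega))
    (fun k => (h (k + 1)).dn hΛ k (by omega)) hR k

/-- Exponential growth of the cocycle: no product of length `n` has norm below `C c ^ (n / L)`.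
The exponent uses the floor division of natural numbers. -/
def Grow (T : ι → ι → Prop) (G : ι → ι → SL2) : Prop :=
  ∃ C > (0 : ℝ), ∃ c > (1 : ℝ), ∃ L ≥ 1, ∀ (p : ℕ → ι) (n : ℕ), (∀ k < n, T (p k) (p (k + 1))) →
    ∃ w : V2, w ≠ 0 ∧ C * c ^ (n / L) * ‖w‖ ≤ ‖act (Phi G p n) w‖

lemma exists_not_contracted (g : SL2) : ∃ v : V2, v ≠ 0 ∧ ‖v‖ ≤ 2 * ‖act g v‖ := by
  obtain ⟨u, hu, h⟩ := exists_not_expanded g⁻¹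
  exact ⟨act g⁻¹ u, by rwa [Ne, act_eq_zero], by rwa [act_act_inv]⟩

/-- The finite-time form implies exponential growth: a vector that is not contracted over the first
half of a path is, by doubling towards the ends, exponentially longer at the far end. -/
lemma Exp.grow [Finite ι] [Nonempty ι] {n : ℕ} (hE : Exp T G n) : Grow T G := by
  obtain ⟨Λ, hΛ⟩ := exists_NB G
  have hn := hE.pos
  have hΛn : (1 : ℝ) ≤ Λ ^ n := one_le_pow₀ hΛ.1
  refine ⟨1 / (4 * Λ ^ n), by positivity, 2, one_lt_two, 2 * n, by omega, fun p m hp => ?_⟩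
  set j := m / (2 * n) with hj
  have hjm : j * n + j * n ≤ m := by
    have := Nat.div_mul_le_self m (2 * n)
    rw [← hj] at this
    nlinarith
  rcases le_or_gt ((2 : ℝ) ^ j) (2 * Λ ^ n) with hc | hc
  · obtain ⟨w, hw, h⟩ := exists_not_contracted (Phi G p m)
    refine ⟨w, hw, ?_⟩
    have : 1 / (4 * Λ ^ n) * 2 ^ j ≤ 1 / 2 := by
      rw [one_div_mul_eq_div, div_le_div_iff₀ (by positivity) (by positivity)]
      linarith
    have := mul_le_mul_of_nonneg_right this (norm_nonneg w)
    linarith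
  · obtain ⟨w, hw, h⟩ := exists_not_contracted (Phi G p (j * n))
    refine ⟨w, hw, ?_⟩
    have ho := orb_phi (G := G) hp w
    have h1 := hE.decay ho (fun k hk => hE.le_ends hΛ ho hk) j (j * n) le_rfl hjm
    simp only [Phi, act_one] at h1
    have hw0 : 0 < ‖w‖ := norm_pos_iff.2 hw
    rcases le_total ‖act (Phi G p m) w‖ ‖w‖ with h2 | h2
    · rw [max_eq_left h2] at h1
      exfalso
      have : ‖w‖ * (2 * Λ ^ n) < ‖w‖ * 2 ^ j := by gcongr
      nlinarith [mul_le_mul_of_nonneg_right h (by positivity : (0 : ℝ) ≤ 2 ^ j)]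
    · rw [max_eq_right h2] at h1
      have : ‖w‖ * 2 ^ j ≤ 2 * (Λ ^ n * ‖act (Phi G p m) w‖) := by
        nlinarith [mul_le_mul_of_nonneg_right h (by positivity : (0 : ℝ) ≤ 2 ^ j)]
      rw [one_div_mul_eq_div, div_mul_eq_mul_div, div_le_iff₀ (by positivity)]
      have : 0 ≤ Λ ^ n * ‖act (Phi G p m) w‖ := by positivity
      linarith

end Cocycle

end BD

namespace BD

/-! ### The cocycle of a tuple of matrices -/

section Tuple

variable {N : ℕ} {T : Fin N → Fin N → Prop}

/-- The cocycle attached to a tuple: the edge `a → b` carries the matrix of its target. -/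
def GB (B : Fin N → SL2) (_ b : Fin N) : SL2 := B b

/-- The word `p (a+1), …, p (a+n)` read off a path. -/
def seg {ι : Type*} (p : ℕ → ι) (a n : ℕ) : List ι := (List.range n).map fun k => p (a + k + 1)

lemma wordProd_append (B : Fin N → SL2) (u v : List (Fin N)) :
    wordProd B (u ++ v) = wordProd B v * wordProd B u := by
  simp [wordProd]

lemma wordProd_singleton (B : Fin N → SL2) (a : Fin N) : wordProd B [a] = B a := by
  simp [wordProd]

lemma wordProd_nil (B : Fin N → SL2) : wordProd B [] = 1 := by
  simp [wordProd]

lemma wordProd_cons (B : Fin N → SL2) (a : Fin N) (t : List (Fin N)) :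
    wordProd B (a :: t) = wordProd B t * B a := by
  simp [wordProd]

lemma seg_length {ι : Type*} (p : ℕ → ι) (a n : ℕ) : (seg p a n).length = n := by simp [seg]

lemma seg_succ {ι : Type*} (p : ℕ → ι) (a n : ℕ) :
    seg p a (n + 1) = seg p a n ++ [p (a + n + 1)] := by
  simp [seg, List.range_succ]

lemma seg_zero {ι : Type*} (p : ℕ → ι) (a : ℕ) : seg p a 0 = [] := by simp [seg]

lemma seg_add {ι : Type*} (p : ℕ → ι) (a m n : ℕ) :
    seg p a (m + n) = seg p a m ++ seg p (a + m) n := by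
  induction n with
  | zero => simp [seg_zero]
  | succ n ih => rw [← add_assoc, seg_succ, ih, seg_succ, List.append_assoc, add_assoc a m n]

lemma seg_chain {ι : Type*} {T : ι → ι → Prop} (p : ℕ → ι) (a n : ℕ)
    (h : ∀ k, a + 1 ≤ k → k < a + n → T (p k) (p (k + 1))) : (seg p a n).Chain' T := by
  rw [List.Chain', List.isChain_iff_getElem]
  intro i hi
  simp only [seg, List.getElem_map, List.getElem_range]
  have := h (a + i + 1) (by omega) (by rw [seg_length] at hi; omega)
  simpa [add_assoc] using this

lemma Phi_GB (B : Fin N → SL2) (p : ℕ → Fin N) (n : ℕ) :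
    Phi (GB B) p n = wordProd B (seg p 0 n) := by
  induction n with
  | zero => simp [Phi, seg_zero, wordProd_nil]
  | succ n ih => rw [Phi, ih, seg_succ, wordProd_append, wordProd_singleton, GB, zero_add]

lemma orb_seg {B : Fin N → SL2} {p : ℕ → Fin N} {v : ℕ → V2} {L : ℕ} (h : Orb T (GB B) p v L)
    (a n : ℕ) (hL : a + n ≤ L) : v (a + n) = act (wordProd B (seg p a n)) (v a) := by
  induction n with
  | zero => simp [seg_zero, wordProd_nil, act_one]
  | succ n ih =>
    rw [← add_assoc, (h (a + n) (by omega)).2, ih (by omega), seg_succ, wordProd_append,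
      wordProd_singleton, act_mul, GB]

/-- Growth of the products along paths is uniform hyperbolicity. -/
lemma Grow.unifHyp {B : Fin N → SL2} (h : Grow T (GB B)) : UnifHypSub T B := by
  obtain ⟨C, hC, c, hc, L, hL, hg⟩ := h
  obtain ⟨Λ, hΛ⟩ := exists_NB (GB B)
  have hΛ0 : (0 : ℝ) < Λ := by linarith [hΛ.1]
  have hc0 : (0 : ℝ) < c := by linarith
  set lam : ℝ := c ^ ((1 : ℝ) / L) with hlam
  have hLr : (0 : ℝ) < L := by exact_mod_cast hL
  have hlam1 : 1 < lam := Real.one_lt_rpow hc (by positivity)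
  have hlamL : lam ^ L = c := by
    rw [hlam, ← Real.rpow_natCast, ← Real.rpow_mul hc0.le, one_div_mul_cancel hLr.ne',
      Real.rpow_one]
  refine ⟨C / (2 * Λ * c), by positivity, lam, hlam1, fun w hw hch => ?_⟩
  obtain ⟨i, t, rfl⟩ := List.exists_cons_of_ne_nil hw
  set n := t.length with hn
  set p : ℕ → Fin N := fun k => (i :: t).getD k i with hp
  have hseg : seg p 0 n = t := by
    apply List.ext_getElem
    · rw [seg_length]
    · intro k h1 h2
      simp only [seg, List.getElem_map, List.getElem_range, hp, zero_add, List.getD_cons_succ]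
      rw [List.getD_eq_getElem _ _ h2]
  have hpath : ∀ k < n, T (p k) (p (k + 1)) := by
    intro k hk
    rw [List.Chain', List.isChain_iff_getElem] at hch
    have h3 := hch k (by simp; omega)
    simp only [hp]
    rwa [List.getD_eq_getElem _ _ (by simp; omega), List.getD_eq_getElem _ _ (by simp; omega)]
  obtain ⟨w, hw0, hgw⟩ := hg p n hpath
  rw [Phi_GB, hseg] at hgw
  have h1 : act (wordProd B t) w = act (wordProd B (i :: t)) (act (B i)⁻¹ w) := by
    rw [wordProd_cons, act_mul, act_act_inv]
  have h2 : ‖act (B i)⁻¹ w‖ ≤ Λ * ‖w‖ := by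
    have := hΛ.dual.act_le i i w
    simpa [dualG, GB] using this
  have h0 : 0 ≤ opNorm (wordProd B (i :: t) : Matrix (Fin 2) (Fin 2) ℝ) := norm_nonneg _
  have h3 : C * c ^ (n / L) * ‖w‖ ≤ 2 * opNorm (wordProd B (i :: t)).1 * (Λ * ‖w‖) := by
    refine hgw.trans ?_
    rw [h1]
    refine (norm_act_le_opNorm _ _).trans ?_
    gcongr
  have hwp : 0 < ‖w‖ := norm_pos_iff.2 hw0
  have h4 : C * c ^ (n / L) ≤ 2 * opNorm (wordProd B (i :: t)).1 * Λ := by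
    by_contra hcon
    push Not at hcon
    nlinarith
  have h5 : lam ^ (n + 1) ≤ c ^ (n / L) * c := by
    calc lam ^ (n + 1) ≤ lam ^ (L * (n / L + 1)) := by
          apply pow_le_pow_right₀ hlam1.le
          have := Nat.lt_mul_div_succ n hL
          omega
      _ = c ^ (n / L) * c := by rw [pow_mul, hlamL, pow_succ]
  simp only [List.length_cons, ← hn, ge_iff_le]
  rw [div_mul_eq_mul_div, div_le_iff₀ (by positivity)]
  calc C * lam ^ (n + 1) ≤ C * (c ^ (n / L) * c) := by gcongr
    _ = C * c ^ (n / L) * c := by ring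
    _ ≤ 2 * opNorm (wordProd B (i :: t)).1 * Λ * c := by gcongr
    _ = _ := by ring

/-- Exponential lower bound for all `M` dominating a product: a convenient form of the
definition of uniform hyperbolicity. -/
lemma unifHyp_lower {B : Fin N → SL2} (h : UnifHypSub T B) :
    ∃ C > (0 : ℝ), ∃ lam > (1 : ℝ), ∀ (p : ℕ → Fin N) (n : ℕ), 1 ≤ n →
      (∀ k < n, T (p k) (p (k + 1))) → ∀ M : ℝ, 0 ≤ M →
      (∀ w, ‖act (Phi (GB B) p n) w‖ ≤ M * ‖w‖) → C * lam ^ n ≤ M := by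
  obtain ⟨C, hC, lam, hlam, hg⟩ := h
  refine ⟨C / 2, by positivity, lam, hlam, fun p n hn hp M hM hb => ?_⟩
  rw [Phi_GB] at hb
  have h1 := opNorm_le hM hb
  have h2 := hg (seg p 0 n) (by
    intro h0
    have := congrArg List.length h0
    rw [seg_length] at this
    simp at this
    omega) (seg_chain p 0 n fun k _ hk => hp k (by omega))
  rw [seg_length] at h2
  linarith

end Tuple

section Balanced

variable {ι : Type*} {T : ι → ι → Prop} {G : ι → ι → SL2} {p : ℕ → ι} {v : ℕ → V2}

/-- If some orbit keeps a balanced size, then the products along its path grow at most linearly: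
in coordinates adapted to the orbit the matrices are unipotent. -/
lemma balanced_bound {Λ R r : ℝ} (hΛ : NB G Λ) {m : ℕ} (h : Orb T G p v m) (hR : 0 < R)
    (hlow : ∀ k ≤ m, R ≤ r * ‖v k‖) (h0 : ‖v 0‖ ≤ R) (hm : ‖v m‖ ≤ R) (w : V2) :
    ‖act (Phi G p m) w‖ ≤ 4 * Λ * r ^ 2 * (m + 1) * ‖w‖ := by
  have hΛ1 := hΛ.1
  have hr : 1 ≤ r := by
    have := hlow 0 (by omega)
    have h3 : 0 ≤ ‖v 0‖ := norm_nonneg _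
    by_contra hc
    push Not at hc
    rcases h3.eq_or_lt with h4 | h4
    · rw [← h4] at this; linarith
    · nlinarith
  have hpos : ∀ k ≤ m, 0 < ‖v k‖ := fun k hk => by
    have := hlow k hk
    by_contra hc
    push Not at hc
    have : r * ‖v k‖ ≤ 0 := mul_nonpos_of_nonneg_of_nonpos (by linarith) hc
    linarith [hlow k hk]
  set W : ℕ → V2 := fun k => act (Phi G p k) w with hW
  have hWo : Orb T G p W m := orb_phi (fun k hk => (h k hk).1) w
  set d := om (v 0) w with hd
  have hdk : ∀ k ≤ m, om (v k) (W k) = d := fun k hk => by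
    rw [h.om_eq hWo hk]; simp [hW, Phi, act_one, hd]
  have hdb : |d| ≤ 2 * R * ‖w‖ := (om_bound _ _).trans (by gcongr)
  -- Euclidean square, rotation by a right angle, and the coordinate along the orbit
  set q : ℕ → ℝ := fun k => v k 0 ^ 2 + v k 1 ^ 2 with hq
  have hqn : ∀ k ≤ m, ‖v k‖ ^ 2 ≤ q k := by
    intro k hk
    have hv := norm_le_enorm (v k)
    rw [enorm_eq] at hv
    calc ‖v k‖ ^ 2 ≤ (√(q k)) ^ 2 := by gcongr
      _ = q k := Real.sq_sqrt (by simp only [hq]; positivity)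
  have hqp : ∀ k ≤ m, 0 < q k := fun k hk => by
    have := hpos k hk
    exact lt_of_lt_of_le (by positivity) (hqn k hk)
  set J : V2 → V2 := fun x => ![-x 1, x 0] with hJ
  have hJn : ∀ x : V2, ‖J x‖ ≤ ‖x‖ := fun x =>
    norm_le_of_coord (by simpa [hJ] using abs_coord_le x 1) (by simpa [hJ] using abs_coord_le x 0)
  set al : ℕ → ℝ := fun k => (W k 0 * v k 0 + W k 1 * v k 1) / q k with hal
  have hdec : ∀ k ≤ m, W k = al k • v k + (d / q k) • J (v k) := by
    intro k hk
    have := (hqp k hk).ne'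
    rw [← hdk k hk]
    ext i
    fin_cases i
    · simp only [hal, hJ, om, Pi.add_apply, Pi.smul_apply, smul_eq_mul]
      simp
      field_simp
      simp only [hq]
      ring
    · simp only [hal, hJ, om, Pi.add_apply, Pi.smul_apply, smul_eq_mul]
      simp
      field_simp
      simp only [hq]
      ring
  have hdot : ∀ x y : V2, |x 0 * y 0 + x 1 * y 1| ≤ 2 * ‖x‖ * ‖y‖ := by
    intro x y
    have h1 := mul_le_mul (abs_coord_le x 0) (abs_coord_le y 0) (abs_nonneg _) (norm_nonneg _)
    have h2 := mul_le_mul (abs_coord_le x 1) (abs_coord_le y 1) (abs_nonneg _) (norm_nonneg _)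
    have h3 := abs_add_le (x 0 * y 0) (x 1 * y 1)
    rw [abs_mul, abs_mul] at h3
    linarith
  have hstep : ∀ k < m, R ^ 2 * |al (k + 1) - al k| ≤ 2 * Λ * r ^ 2 * |d| := by
    intro k hk
    set g := G (p k) (p (k + 1))
    have e1 : v (k + 1) = act g (v k) := (h k hk).2
    have e2 : W (k + 1) = al k • v (k + 1) + (d / q k) • act g (J (v k)) := by
      rw [(hWo k hk).2, hdec k hk.le, act_add, act_smul, act_smul, e1]
    have hq1 := hqp k hk.le
    have hq2 := hqp (k + 1) hk
    set z := act g (J (v k)) with hz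
    have e3 : al (k + 1) - al k = d * (z 0 * v (k + 1) 0 + z 1 * v (k + 1) 1) /
        (q k * q (k + 1)) := by
      have : al (k + 1) = (W (k + 1) 0 * v (k + 1) 0 + W (k + 1) 1 * v (k + 1) 1) / q (k + 1) := rfl
      rw [this, e2]
      simp only [Pi.add_apply, Pi.smul_apply, smul_eq_mul]
      have hqe : q (k + 1) = v (k + 1) 0 ^ 2 + v (k + 1) 1 ^ 2 := rfl
      rw [div_sub' hq2.ne', div_eq_div_iff hq2.ne' (by positivity)]
      rw [hqe]
      rw [hqe] at hq2
      field_simp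
      ring
    have hzb : ‖z‖ ≤ Λ * ‖v k‖ :=
      (hΛ.act_le _ _ _).trans (mul_le_mul_of_nonneg_left (hJn _) (by linarith))
    have hb : |z 0 * v (k + 1) 0 + z 1 * v (k + 1) 1| ≤ 2 * (Λ * ‖v k‖) * ‖v (k + 1)‖ :=
      (hdot _ _).trans (by gcongr)
    rw [e3, abs_div, abs_mul, abs_of_pos (mul_pos hq1 hq2), ← mul_div_assoc,
      div_le_iff₀ (mul_pos hq1 hq2)]
    have hR2 : R ^ 2 ≤ r ^ 2 * (‖v k‖ * ‖v (k + 1)‖) := by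
      have a1 := hlow k hk.le
      have a2 := hlow (k + 1) hk
      have := mul_le_mul a1 a2 hR.le (by positivity)
      nlinarith
    have hqq : ‖v k‖ ^ 2 * ‖v (k + 1)‖ ^ 2 ≤ q k * q (k + 1) :=
      mul_le_mul (hqn k hk.le) (hqn (k + 1) hk) (by positivity) hq1.le
    calc R ^ 2 * (|d| * |z 0 * v (k + 1) 0 + z 1 * v (k + 1) 1|)
        ≤ (r ^ 2 * (‖v k‖ * ‖v (k + 1)‖)) * (|d| * (2 * (Λ * ‖v k‖) * ‖v (k + 1)‖)) := by gcongr
      _ = 2 * Λ * r ^ 2 * |d| * (‖v k‖ ^ 2 * ‖v (k + 1)‖ ^ 2) := by ring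
      _ ≤ _ := by gcongr
  have hal0 : R * |al 0| ≤ 2 * r * ‖w‖ := by
    have hq1 := hqp 0 (Nat.zero_le _)
    have e : al 0 = (w 0 * v 0 0 + w 1 * v 0 1) / q 0 := by simp [hal, hW, Phi, act_one]
    rw [e, abs_div, abs_of_pos hq1, ← mul_div_assoc, div_le_iff₀ hq1]
    calc R * |w 0 * v 0 0 + w 1 * v 0 1| ≤ (r * ‖v 0‖) * (2 * ‖w‖ * ‖v 0‖) := by
          gcongr
          · exact hlow 0 (Nat.zero_le _)
          · exact hdot _ _
      _ = 2 * r * ‖w‖ * ‖v 0‖ ^ 2 := by ring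
      _ ≤ _ := by gcongr; exact hqn 0 (Nat.zero_le _)
  have halk : ∀ k ≤ m, R * |al k| ≤ 2 * r * ‖w‖ + 4 * Λ * r ^ 2 * k * ‖w‖ := by
    intro k hk
    induction k with
    | zero => simpa using hal0
    | succ k ih =>
      have h1 := ih (by omega)
      have h2 := hstep k (by omega)
      have h3 : R * |al (k + 1) - al k| ≤ 4 * Λ * r ^ 2 * ‖w‖ := by
        have : R * (R * |al (k + 1) - al k|) ≤ R * (4 * Λ * r ^ 2 * ‖w‖) := by
          calc R * (R * |al (k + 1) - al k|) = R ^ 2 * |al (k + 1) - al k| := by ring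
            _ ≤ 2 * Λ * r ^ 2 * |d| := h2
            _ ≤ 2 * Λ * r ^ 2 * (2 * R * ‖w‖) := by gcongr
            _ = _ := by ring
        exact le_of_mul_le_mul_left this hR
      have h4 : |al (k + 1)| ≤ |al k| + |al (k + 1) - al k| := by
        have := abs_add_le (al k) (al (k + 1) - al k)
        simpa using this
      have := mul_le_mul_of_nonneg_left h4 hR.le
      push_cast
      nlinarith
  have hend : W m = al m • v m + (d / q m) • J (v m) := hdec m le_rfl
  have t1 : ‖al m • v m‖ ≤ 2 * r * ‖w‖ + 4 * Λ * r ^ 2 * m * ‖w‖ := by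
    rw [norm_smul, Real.norm_eq_abs]
    calc |al m| * ‖v m‖ ≤ |al m| * R := by gcongr
      _ = R * |al m| := mul_comm _ _
      _ ≤ _ := halk m le_rfl
  have t2 : ‖(d / q m) • J (v m)‖ ≤ 2 * r * ‖w‖ := by
    have hq1 := hqp m le_rfl
    rw [norm_smul, Real.norm_eq_abs, abs_div, abs_of_pos hq1, div_mul_eq_mul_div, div_le_iff₀ hq1]
    have hl := hlow m le_rfl
    calc |d| * ‖J (v m)‖ ≤ (2 * R * ‖w‖) * ‖v m‖ := by gcongr; exact hJn _
      _ ≤ (2 * (r * ‖v m‖) * ‖w‖) * ‖v m‖ := by gcongr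
      _ = 2 * r * ‖w‖ * ‖v m‖ ^ 2 := by ring
      _ ≤ _ := by gcongr; exact hqn m le_rfl
  change ‖W m‖ ≤ _
  rw [hend]
  refine (norm_add_le _ _).trans ((add_le_add t1 t2).trans ?_)
  have hw := norm_nonneg w
  have : r ≤ Λ * r ^ 2 := by nlinarith [mul_le_mul hΛ1 hr zero_le_one (by linarith)]
  nlinarith [mul_le_mul_of_nonneg_right this hw]

end Balanced

end BD

namespace BD

/-! ### Uniform hyperbolicity implies doubling in windows -/

/-- An exponential eventually beats an affine function. -/
lemma poly_lt_exp {C lam : ℝ} (hC : 0 < C) (hlam : 1 < lam) (D : ℝ) :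
    ∃ n0 : ℕ, ∀ m ≥ n0, D * (m + 1) < C * lam ^ m := by
  have h1 := tendsto_pow_const_div_const_pow_of_one_lt 1 hlam
  have h2 := tendsto_pow_const_div_const_pow_of_one_lt 0 hlam
  have h3 := (h1.add h2).const_mul D
  simp only [add_zero, mul_zero] at h3
  obtain ⟨n0, hn0⟩ := Filter.eventually_atTop.1 (h3.eventually_lt_const hC)
  refine ⟨n0, fun m hm => ?_⟩
  have h4 := hn0 m hm
  have hp : 0 < lam ^ m := by positivity
  rw [← add_div, ← mul_div_assoc, div_lt_iff₀ hp] at h4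
  simpa using h4

/-- Uniform hyperbolicity implies its finite-time form. A window on which the norm never exceeds
twice its central value would contain a long stretch along which an orbit keeps a balanced size,
contradicting exponential growth of the products. -/
lemma unifHyp_exists_exp {N : ℕ} {T : Fin N → Fin N → Prop} {B : Fin N → SL2}
    (h : UnifHypSub T B) : ∃ n, Exp T (GB B) n := by
  obtain ⟨C, hC, lam, hlam, hg⟩ := unifHyp_lower h
  obtain ⟨Λ, hΛ⟩ := exists_NB (GB B)
  have hΛ1 := hΛ.1
  have hΛ0 : 0 < Λ := by linarith
  obtain ⟨L0, hL0⟩ := poly_lt_exp hC hlam (4 * Λ * Λ ^ 2)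
  set r : ℝ := 4 * Λ ^ L0 with hr
  obtain ⟨n0, hn0⟩ := poly_lt_exp hC hlam (4 * Λ * r ^ 2)
  set n := max n0 L0 + 1 with hn
  refine ⟨n, ?_⟩
  by_contra hcon
  simp only [Exp] at hcon
  push Not at hcon
  obtain ⟨p, v, ho, hv, hk⟩ := hcon
  have hR0 : 0 < ‖v n‖ := norm_pos_iff.2 hv
  have hwin : ∀ (a m : ℕ) (R r : ℝ), a + m ≤ 2 * n → 1 ≤ m → 0 < R →
      (∀ k ≤ m, R ≤ r * ‖v (a + k)‖) → ‖v a‖ ≤ R → ‖v (a + m)‖ ≤ R →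
      C * lam ^ m ≤ 4 * Λ * r ^ 2 * (m + 1) := by
    intro a m R r ham hm hR hlow h0 hme
    have ho' := ho.shift ham
    exact hg _ m hm (fun k hk => (ho' k hk).1) _ (by positivity)
      (balanced_bound hΛ ho' hR hlow h0 hme)
  have hP : 0 < Λ ^ L0 := by positivity
  set ε := ‖v n‖ / (2 * Λ ^ L0) with hε
  have hε0 : 0 < ε := by positivity
  have hrε : r * ε = 2 * ‖v n‖ := by rw [hr, hε]; field_simp; ring
  have hr0 : 0 < r := by positivity
  have hlong : ¬ (C * lam ^ n ≤ 4 * Λ * r ^ 2 * (n + 1)) := by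
    have := hn0 n (by omega)
    push Not
    exact_mod_cast this
  by_cases c1 : ∀ i ≤ n, ε ≤ ‖v (n + i)‖
  · refine hlong (hwin n n (2 * ‖v n‖) r (by omega) (by omega) (by positivity) ?_ (by linarith)
      (hk _ (by omega)))
    intro k hkn
    rw [← hrε]
    exact mul_le_mul_of_nonneg_left (c1 k hkn) hr0.le
  by_cases c2 : ∀ i ≤ n, ε ≤ ‖v (n - i)‖
  · refine hlong (hwin 0 n (2 * ‖v n‖) r (by omega) (by omega) (by positivity) ?_
      (hk _ (by omega)) (hk _ (by omega)))
    intro k hkn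
    rw [← hrε]
    have := c2 (n - k) (by omega)
    rw [show n - (n - k) = 0 + k by omega] at this
    exact mul_le_mul_of_nonneg_left this hr0.le
  classical
  push Not at c1 c2
  have hb := Nat.find_spec c1
  have hbm := fun {i} (hi : i < Nat.find c1) => Nat.find_min c1 hi
  have ha := Nat.find_spec c2
  have ham := fun {i} (hi : i < Nat.find c2) => Nat.find_min c2 hi
  set b := Nat.find c1
  set a := Nat.find c2
  -- leaving the size `‖v n‖` for the size `ε` takes more than `L0` steps
  have hbL : L0 < b := by
    by_contra hc
    push Not at hc
    have h1 := seq_le_pow' (f := fun k => ‖v k‖) hΛ1 (ho.dn hΛ) n b (by omega)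
    have h2 : ‖v n‖ ≤ Λ ^ L0 * ε := by
      calc ‖v n‖ ≤ Λ ^ b * ‖v (n + b)‖ := h1
        _ ≤ Λ ^ L0 * ε := by
          gcongr
          exact hb.2.le
    have : Λ ^ L0 * ε = ‖v n‖ / 2 := by rw [hε]; field_simp
    linarith
  have hab : 1 ≤ a := by
    by_contra hc
    obtain h0 : a = 0 := by omega
    rw [h0] at ha
    have h2 := ha.2
    simp only [Nat.sub_zero] at h2
    have : ε ≤ ‖v n‖ := by
      rw [hε, div_le_iff₀ (by positivity)]
      have : 1 ≤ Λ ^ L0 := one_le_pow₀ hΛ1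
      nlinarith
    linarith
  have hlow : ∀ k, n - a ≤ k → k ≤ n + b → ε ≤ Λ * ‖v k‖ := by
    intro k h1 h2
    by_cases e1 : k = n - a
    · have h4 : ε ≤ ‖v (n - a + 1)‖ := by
        have := ham (i := a - 1) (by omega)
        push Not at this
        have := this (by omega)
        rwa [show n - (a - 1) = n - a + 1 by omega] at this
      rw [e1]
      exact h4.trans (ho.up hΛ (n - a) (by omega))
    by_cases e2 : k = n + b
    · have h4 : ε ≤ ‖v (n + (b - 1))‖ := by
        have := hbm (i := b - 1) (by omega)
        push Not at this
        exact this (by omega)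
      have h5 := ho.dn hΛ (n + (b - 1)) (by omega)
      rw [e2]
      rw [show n + (b - 1) + 1 = n + b by omega] at h5
      exact h4.trans h5
    have h4 : ε ≤ ‖v k‖ := by
      rcases le_total n k with h3 | h3
      · have := hbm (i := k - n) (by omega)
        push Not at this
        have := this (by omega)
        rwa [show n + (k - n) = k by omega] at this
      · have := ham (i := n - k) (by omega)
        push Not at this
        have := this (by omega)
        rwa [show n - (n - k) = k by omega] at this
    have := norm_nonneg (v k)
    nlinarith
  have e : n - a + (a + b) = n + b := by omega
  have h1 := hwin (n - a) (a + b) ε Λ (by omega) (by omega) hε0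
    (fun k hk => hlow _ (by omega) (by omega)) ha.2.le (by rw [e]; exact hb.2.le)
  have h2 := hL0 (a + b) (by omega)
  push_cast at h1 h2
  linarith

end BD

namespace BD

open Filter Topology

section Bounded

variable {ι : Type*} {T : ι → ι → Prop} {G : ι → ι → SL2}

/-! ### Vectors with a bounded forward orbit -/

/-- The vectors at the symbol `α` having a bounded orbit along some infinite path that starts
at `α`. For a uniformly hyperbolic cocycle this is the union of the stable directions at `α`;
for the time-reversed cocycle it is the union of the unstable directions. -/
def Bd (T : ι → ι → Prop) (G : ι → ι → SL2) (α : ι) : Set V2 :=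
  {x | ∃ (p : ℕ → ι) (v : ℕ → V2), p 0 = α ∧ v 0 = x ∧ (∀ L, Orb T G p v L) ∧
    ∃ R, ∀ k, ‖v k‖ ≤ R}

lemma Bd.smul {α : ι} {x : V2} (h : x ∈ Bd T G α) (c : ℝ) : c • x ∈ Bd T G α := by
  obtain ⟨p, v, rfl, rfl, ho, R, hR⟩ := h
  refine ⟨p, fun k => c • v k, rfl, rfl, fun L => (ho L).smul c, |c| * R, fun k => ?_⟩
  rw [norm_smul, Real.norm_eq_abs]
  exact mul_le_mul_of_nonneg_left (hR k) (abs_nonneg c)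

lemma exists_path (hs : ∀ a, ∃ b, T a b) (α : ι) :
    ∃ p : ℕ → ι, p 0 = α ∧ ∀ k, T (p k) (p (k + 1)) := by
  choose f hf using hs
  exact ⟨fun k => f^[k] α, rfl, fun k => by
    simp only [Function.iterate_succ_apply']
    exact hf _⟩

lemma Bd.zero_mem (hs : ∀ a, ∃ b, T a b) (α : ι) : (0 : V2) ∈ Bd T G α := by
  obtain ⟨p, hp, hT⟩ := exists_path hs α
  exact ⟨p, fun _ => 0, hp, rfl, fun L k _ => ⟨hT k, (act_zero _).symm⟩, 0, fun k => by simp⟩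

lemma Bd.prepend {a b : ι} {s : V2} (hT : T a b) (h : s ∈ Bd T G b) :
    act (G a b)⁻¹ s ∈ Bd T G a := by
  obtain ⟨p, v, rfl, rfl, ho, R, hR⟩ := h
  refine ⟨fun k => Nat.casesOn k a p, fun k => Nat.casesOn k (act (G a (p 0))⁻¹ (v 0)) v,
    rfl, rfl, fun L k hk => ?_, max ‖act (G a (p 0))⁻¹ (v 0)‖ R, fun k => ?_⟩
  · cases k with
    | zero => exact ⟨hT, (act_act_inv _ _).symm⟩
    | succ k => exact ho (k + 1) k (by omega)
  · cases k with
    | zero => exact le_max_left _ _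
    | succ k => exact (hR k).trans (le_max_right _ _)

lemma Bd.tail {a : ι} {s : V2} (h : s ∈ Bd T G a) : ∃ b, T a b ∧ act (G a b) s ∈ Bd T G b := by
  obtain ⟨p, v, rfl, rfl, ho, R, hR⟩ := h
  refine ⟨p 1, (ho 1 0 one_pos).1, fun k => p (k + 1), fun k => v (k + 1), rfl,
    (ho 1 0 one_pos).2, fun L k hk => ho (k + 2) (k + 1) (by omega), R, fun k => hR _⟩

/-- A closed path along which a vector is not expanded yields a bounded orbit. -/
lemma Bd.of_cycle {q : ℕ → ι} {v : ℕ → V2} {c : ℕ} (hc : 1 ≤ c) (ho : Orb T G q v c)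
    (hq : q c = q 0) {κ : ℝ} (hv : v c = κ • v 0) (hκ : |κ| ≤ 1) : v 0 ∈ Bd T G (q 0) := by
  refine ⟨fun i => q (i % c), fun i => κ ^ (i / c) • v (i % c), by simp, by simp,
    fun L k _ => ?_, ∑ i ∈ Finset.range c, ‖v i‖, fun k => ?_⟩
  · have hlt : k % c < c := Nat.mod_lt _ hc
    obtain ⟨h1, h2⟩ := ho (k % c) hlt
    by_cases hk : k % c + 1 = c
    · have e1 : (k + 1) % c = 0 := by
        refine Nat.mod_eq_zero_of_dvd ⟨k / c + 1, ?_⟩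
        have := Nat.div_add_mod k c
        rw [mul_add]
        omega
      have e2 : (k + 1) / c = k / c + 1 := by
        rw [Nat.succ_div_of_mod_eq_zero e1]
      simp only [e1, e2]
      rw [hk, hq] at h1 h2
      rw [hk, hq]  at *
      refine ⟨h1, ?_⟩
      rw [act_smul, ← h2, hv, smul_smul, pow_succ]
    · have e1 : (k + 1) % c = k % c + 1 := by
        conv_lhs => rw [← Nat.mod_add_div k c, add_right_comm, Nat.add_mul_mod_self_left]
        exact Nat.mod_eq_of_lt (by omega)
      have e2 : (k + 1) / c = k / c := by
        rw [Nat.succ_div_of_mod_ne_zero (by omega)]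
      simp only [e1, e2]
      exact ⟨h1, by rw [act_smul, ← h2]⟩
  · have hlt : k % c < c := Nat.mod_lt _ hc
    rw [norm_smul, norm_pow, Real.norm_eq_abs]
    calc |κ| ^ (k / c) * ‖v (k % c)‖ ≤ 1 * ‖v (k % c)‖ := by
          gcongr
          exact pow_le_one₀ (abs_nonneg _) hκ
      _ ≤ _ := by
          rw [one_mul]
          exact Finset.single_le_sum (f := fun i => ‖v i‖) (fun i _ => norm_nonneg _)
            (Finset.mem_range.2 hlt)

/-- Concatenation of a sequence read backwards from time `L` and a sequence read forwards. -/
def splice {X : Type*} (L : ℕ) (f g : ℕ → X) (i : ℕ) : X := if i ≤ L then f (L - i) else g (i - L)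

lemma splice_add {X : Type*} {L : ℕ} {f g : ℕ → X} (h : f 0 = g 0) (i : ℕ) :
    splice L f g (L + i) = g i := by
  unfold splice
  split_ifs with hi
  · obtain rfl : i = 0 := by omega
    simpa using h
  · simp

lemma splice_le {X : Type*} {L : ℕ} {f g : ℕ → X} {i : ℕ} (h : i ≤ L) :
    splice L f g i = f (L - i) := by
  unfold splice
  rw [if_pos h]

lemma orb_splice {pu ps : ℕ → ι} {vu vs : ℕ → V2} {L L' : ℕ}
    (hu : Orb (flip T) (dualG G) pu vu L) (hs : Orb T G ps vs L') (hp : pu 0 = ps 0)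
    (hv : vu 0 = vs 0) : Orb T G (splice L pu ps) (splice L vu vs) (L + L') := by
  intro k hk
  rcases lt_or_ge k L with h | h
  · have := hu.rev
    rw [dual_dual] at this
    have := this k h
    rw [splice_le h.le, splice_le h.le, splice_le (show k + 1 ≤ L from h),
      splice_le (show k + 1 ≤ L from h)]
    exact this
  · obtain ⟨i, rfl⟩ := Nat.exists_eq_add_of_le h
    rw [add_assoc, splice_add hp, splice_add hp, splice_add hv, splice_add hv]
    exact hs i (by omega)

lemma eq_zero_of_two_pow {a M : ℝ} (h0 : 0 ≤ a) (h : ∀ j : ℕ, a * 2 ^ j ≤ M) : a = 0 := by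
  by_contra hne
  have ha : 0 < a := lt_of_le_of_ne h0 (Ne.symm hne)
  obtain ⟨j, hj⟩ := pow_unbounded_of_one_lt (M / a) (one_lt_two (α := ℝ))
  rw [div_lt_iff₀ ha] at hj
  linarith [h j]

/-- A vector bounded both in the future and in the past vanishes. -/
lemma Bd.disjoint {n : ℕ} (hE : Exp T G n) {α : ι} {x : V2} (hs : x ∈ Bd T G α)
    (hu : x ∈ Bd (flip T) (dualG G) α) : x = 0 := by
  obtain ⟨ps, vs, rfl, rfl, hos, R, hR⟩ := hs
  obtain ⟨pu, vu, hp, hv, hou, R', hR'⟩ := hu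
  rw [← norm_eq_zero]
  refine eq_zero_of_two_pow (M := max R' R) (norm_nonneg _) fun j => ?_
  have ho := orb_splice (hou (j * n)) (hos (j * n)) hp hv
  have := hE.decay ho (M := max R' R) (fun k _ => ?_) j (j * n) le_rfl le_rfl
  · rwa [splice_le le_rfl, Nat.sub_self, hv] at this
  · unfold splice
    split_ifs
    · exact (hR' _).trans (le_max_left _ _)
    · exact (hR _).trans (le_max_right _ _)

/-- Two bounded orbits along the same path are proportional. -/
lemma Exp.unique {n : ℕ} (hE : Exp T G n) {p : ℕ → ι} {v w : ℕ → V2}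
    (hv : ∀ L, Orb T G p v L) (hw : ∀ L, Orb T G p w L) {R R' : ℝ} (hR : ∀ k, ‖v k‖ ≤ R)
    (hR' : ∀ k, ‖w k‖ ≤ R') : om (v 0) (w 0) = 0 := by
  rw [← abs_eq_zero]
  refine eq_zero_of_two_pow (M := 2 * R * R') (abs_nonneg _) fun j => ?_
  have h1 := hE.decay (hv (j * n + j * n)) (fun k _ => hR k) j (j * n) le_rfl le_rfl
  have h2 := hR' (j * n)
  have hR0 : 0 ≤ R := (norm_nonneg _).trans (hR 0)
  rw [← (hv (j * n)).om_eq (hw (j * n)) le_rfl]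
  calc |om (v (j * n)) (w (j * n))| * 2 ^ j ≤ (2 * ‖v (j * n)‖ * ‖w (j * n)‖) * 2 ^ j := by
        gcongr
        exact om_bound _ _
    _ = 2 * (‖v (j * n)‖ * 2 ^ j) * ‖w (j * n)‖ := by ring
    _ ≤ _ := by gcongr

/-- Every infinite path carries a nonzero bounded orbit. -/
lemma Exp.exists_orbit [Finite ι] {n : ℕ} (hE : Exp T G n) {p : ℕ → ι}
    (hp : ∀ k, T (p k) (p (k + 1))) :
    ∃ v : ℕ → V2, (∀ L, Orb T G p v L) ∧ ‖v 0‖ = 1 ∧ ∃ R, ∀ k, ‖v k‖ ≤ R := by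
  obtain ⟨Λ, hΛ⟩ := exists_NB G
  have key : ∀ m, ∃ w : V2, ‖w‖ = 1 ∧ ∀ k ≤ m, ‖act (Phi G p k) w‖ ≤ Λ ^ n * 2 := by
    intro m
    obtain ⟨w, hw, h⟩ := exists_not_expanded (Phi G p m)
    have hw0 : 0 < ‖w‖ := norm_pos_iff.2 hw
    have h1 : ‖‖w‖⁻¹ • w‖ = 1 := by
      rw [norm_smul, norm_inv, norm_norm, inv_mul_cancel₀ hw0.ne']
    refine ⟨‖w‖⁻¹ • w, h1, fun k hk => ?_⟩
    have ho := orb_phi (G := G) (L := m) (fun k _ => hp k) (‖w‖⁻¹ • w)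
    refine (hE.le_ends hΛ ho hk).trans ?_
    have hΛn : 0 ≤ Λ ^ n := pow_nonneg (by linarith [hΛ.1]) _
    refine mul_le_mul_of_nonneg_left (max_le ?_ ?_) hΛn
    · simp only [Phi, act_one, h1]; norm_num
    · rw [act_smul, norm_smul, norm_inv, norm_norm, inv_mul_le_iff₀ hw0]
      linarith
  choose w hw1 hw2 using key
  obtain ⟨x, hx, φ, hφ, hlim⟩ := (isCompact_sphere (0 : V2) 1).tendsto_subseq
    (x := w) (fun m => by simpa using hw1 m)
  refine ⟨fun k => act (Phi G p k) x, fun L => orb_phi (fun k _ => hp k) x, ?_, Λ ^ n * 2,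
    fun k => ?_⟩
  · simpa [Phi, act_one] using hx
  · have hc : Continuous fun y => ‖act (Phi G p k) y‖ := by
      unfold act
      exact (Continuous.matrix_mulVec continuous_const continuous_id).norm
    refine le_of_tendsto ((hc.tendsto x).comp hlim) ?_
    filter_upwards [eventually_ge_atTop k] with m hm
    exact hw2 _ _ (hm.trans (hφ.id_le m))

lemma Bd.exists_ne_zero [Finite ι] {n : ℕ} (hE : Exp T G n) (hs : ∀ a, ∃ b, T a b) (α : ι) :
    ∃ x ∈ Bd T G α, x ≠ 0 := by
  obtain ⟨p, hp, hT⟩ := exists_path hs α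
  obtain ⟨v, hv, h1, hR⟩ := hE.exists_orbit hT
  exact ⟨v 0, ⟨p, v, hp, rfl, hv, hR⟩, norm_ne_zero_iff.1 (by rw [h1]; exact one_ne_zero)⟩

/-- Each closed path carries a stable eigenvector of its product. -/
lemma Bd.exists_cycle_eigenvector [Finite ι] {n : ℕ} (hE : Exp T G n) {q : ℕ → ι} {c : ℕ}
    (hc : 1 ≤ c) (hq : q c = q 0) (hT : ∀ k < c, T (q k) (q (k + 1))) :
    ∃ (v : ℕ → V2) (κ : ℝ), Orb T G q v c ∧ ‖v 0‖ = 1 ∧ v 0 ∈ Bd T G (q 0) ∧ v c = κ • v 0 ∧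
      |κ| ≤ 1 := by
  set p : ℕ → ι := fun i => q (i % c) with hp
  have hpq : ∀ k ≤ c, q k = p k := by
    intro k hk
    simp only [hp]
    rcases hk.eq_or_lt with rfl | hk
    · simp [hq]
    · rw [Nat.mod_eq_of_lt hk]
  have hper : ∀ k, p (k + c) = p k := fun k => by simp [hp]
  have hpT : ∀ k, T (p k) (p (k + 1)) := by
    intro k
    induction k using Nat.strong_induction_on with
    | _ k ih =>
      rcases lt_or_ge k c with h | h
      · rw [← hpq k h.le, ← hpq (k + 1) h]
        exact hT k h
      · obtain ⟨i, rfl⟩ := Nat.exists_eq_add_of_le h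
        rw [show c + i + 1 = (i + 1) + c by omega, show c + i = i + c by omega, hper, hper]
        exact ih i (by omega)
  obtain ⟨v, hv, h1, R, hR⟩ := hE.exists_orbit hpT
  have hv0 : v 0 ≠ 0 := norm_ne_zero_iff.1 (by rw [h1]; exact one_ne_zero)
  have hshift : ∀ L, Orb T G p (fun k => v (k + c)) L := by
    intro L k _
    have := hv (k + c + 1) (k + c) (by omega)
    rw [show k + c + 1 = (k + 1) + c by omega, hper, hper] at this
    exact this
  have hom := hE.unique hv hshift hR (fun k => hR (k + c))
  rw [zero_add] at hom
  obtain ⟨κ, hκ⟩ := exists_smul_of_om hv0 hom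
  refine ⟨v, κ, (hv c).congr hpq (fun _ _ => rfl), h1, ⟨p, v, ?_, rfl, hv, R, hR⟩, hκ, ?_⟩
  · rw [hpq 0 (Nat.zero_le _)]
  · by_contra hgt
    push Not at hgt
    have hmul : ∀ k, v (k + c) = κ • v k := by
      intro k
      induction k with
      | zero => rw [zero_add, hκ]
      | succ k ih =>
        have a1 := (hshift (k + 1) k (by omega)).2
        have a2 := (hv (k + 1) k (by omega)).2
        simp only at a1
        rw [a1, ih, act_smul, a2]
    have hpow : ∀ j : ℕ, v (j * c) = κ ^ j • v 0 := by
      intro j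
      induction j with
      | zero => simp
      | succ j ih => rw [Nat.succ_mul, hmul, ih, smul_smul, pow_succ, mul_comm]
    obtain ⟨j, hj⟩ := pow_unbounded_of_one_lt R hgt
    have := hR (j * c)
    rw [hpow, norm_smul, h1, norm_pow, Real.norm_eq_abs, mul_one] at this
    linarith

/-- On a closed path, a stable eigenvector is strictly contracted. -/
lemma Bd.cycle_lt {n : ℕ} (hE : Exp T G n) {q : ℕ → ι} {v : ℕ → V2} {c : ℕ} (hc : 1 ≤ c)
    (ho : Orb T G q v c) (hq : q c = q 0) {κ : ℝ} (hv : v c = κ • v 0) (h0 : v 0 ≠ 0)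
    (hs : v 0 ∈ Bd T G (q 0)) : |κ| < 1 := by
  by_contra hge
  push Not at hge
  have hκ : κ ≠ 0 := by
    rintro rfl
    simp at hge
    linarith
  have := Bd.of_cycle hc ho.rev (by simp [hq]) (κ := κ⁻¹)
    (by simp only [Nat.sub_self, Nat.sub_zero, hv, smul_smul, inv_mul_cancel₀ hκ, one_smul])
    (by rw [abs_inv]; exact inv_le_one_of_one_le₀ hge)
  simp only [Nat.sub_zero, hq, hv] at this
  have h2 := Bd.smul this κ⁻¹
  rw [smul_smul, inv_mul_cancel₀ hκ, one_smul] at h2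
  exact h0 (Bd.disjoint hE hs h2)

/-- On a closed path, an unstable eigenvector is strictly expanded. -/
lemma Bd.lt_cycle {n : ℕ} (hE : Exp T G n) {q : ℕ → ι} {v : ℕ → V2} {c : ℕ} (hc : 1 ≤ c)
    (ho : Orb T G q v c) (hq : q c = q 0) {κ : ℝ} (hv : v c = κ • v 0) (h0 : v 0 ≠ 0)
    (hs : v 0 ∈ Bd (flip T) (dualG G) (q 0)) : 1 < |κ| := by
  by_contra hle
  push Not at hle
  exact h0 (Bd.disjoint hE (Bd.of_cycle hc ho hq hv hle) hs)

end Bounded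

end BD

namespace BD

open Filter Topology

/-! ### Limits along ultrafilters -/

section Ultra

variable {J : Type*} {F : Ultrafilter J}

lemma ultra_const {X : Type*} [Finite X] (f : J → X) : ∃ a, ∀ᶠ j in (F : Filter J), f j = a := by
  by_contra h
  push Not at h
  have h2 := Filter.eventually_all.2 h
  obtain ⟨j, hj⟩ := h2.exists
  exact hj (f j) rfl

lemma ultra_lim {f : J → V2} {R : ℝ} (h : ∀ᶠ j in (F : Filter J), ‖f j‖ ≤ R) :
    ∃ x, Tendsto f F (𝓝 x) := by
  obtain ⟨x, -, hx⟩ := (isCompact_closedBall (0 : V2) R).ultrafilter_le_nhds (F.map f) (by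
    rw [le_principal_iff]
    change ∀ᶠ j in (F : Filter J), f j ∈ Metric.closedBall 0 R
    exact h.mono fun j hj => by simpa using hj)
  exact ⟨x, hx⟩

/-- Entrywise convergence of cocycles. -/
def TG {ι : Type*} (F : Ultrafilter J) (Gs : J → ι → ι → SL2) (G : ι → ι → SL2) : Prop :=
  ∀ a b i k, Tendsto (fun j => (Gs j a b).1 i k) F (𝓝 ((G a b).1 i k))

variable {ι : Type*} {T : ι → ι → Prop} {Gs : J → ι → ι → SL2} {G : ι → ι → SL2}

lemma tendsto_act {g : J → SL2} {h : SL2} (hg : ∀ i k, Tendsto (fun j => (g j).1 i k) F (𝓝 (h.1 i k)))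
    {f : J → V2} {x : V2} (hf : Tendsto f F (𝓝 x)) :
    Tendsto (fun j => act (g j) (f j)) F (𝓝 (act h x)) := by
  rw [tendsto_pi_nhds] at hf ⊢
  intro i
  simp only [act_apply]
  exact ((hg i 0).mul (hf 0)).add ((hg i 1).mul (hf 1))

lemma tendsto_om {f g : J → V2} {x y : V2} (hf : Tendsto f F (𝓝 x)) (hg : Tendsto g F (𝓝 y)) :
    Tendsto (fun j => om (f j) (g j)) F (𝓝 (om x y)) := by
  rw [tendsto_pi_nhds] at hf hg
  exact ((hf 0).mul (hg 1)).sub ((hf 1).mul (hg 0))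

lemma TG.dual (h : TG F Gs G) : TG F (fun j => dualG (Gs j)) (dualG G) := by
  intro a b i k
  have e1 := inv_entries (G b a)
  have e2 := fun j => inv_entries (Gs j b a)
  simp only [dualG]
  fin_cases i <;> fin_cases k
  · simp only [Fin.zero_eta, e1.1, fun j => (e2 j).1]
    exact h b a 1 1
  · simp only [Fin.zero_eta, Fin.mk_one, e1.2.1, fun j => (e2 j).2.1]
    exact (h b a 0 1).neg
  · simp only [Fin.zero_eta, Fin.mk_one, e1.2.2.1, fun j => (e2 j).2.2.1]
    exact (h b a 1 0).neg
  · simp only [Fin.mk_one, e1.2.2.2, fun j => (e2 j).2.2.2]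
    exact h b a 0 0

lemma TG.exists_NB [Finite ι] (h : TG F Gs G) : ∃ Λ, ∀ᶠ j in (F : Filter J), NB (Gs j) Λ := by
  obtain ⟨Λ, hΛ⟩ := BD.exists_NB G
  refine ⟨Λ + 1, ?_⟩
  have h1 : ∀ a b, ∀ᶠ j in (F : Filter J), gn (Gs j a b) ≤ Λ + 1 := by
    intro a b
    have h2 : Tendsto (fun j => gn (Gs j a b)) F (𝓝 (gn (G a b))) :=
      ((((h a b 0 0).abs).add (h a b 0 1).abs).add (h a b 1 0).abs).add (h a b 1 1).abs
    exact h2.eventually_le_const (by linarith [hΛ.2 a b])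
  filter_upwards [Filter.eventually_all.2 fun a => Filter.eventually_all.2 fun b => h1 a b] with j hj
  exact ⟨by linarith [hΛ.1], hj⟩

/-- Orbits pass to the limit. -/
lemma orb_lim (h : TG F Gs G) {ps : J → ℕ → ι} {vs : J → ℕ → V2} {p : ℕ → ι} {v : ℕ → V2} {L : ℕ}
    (ho : ∀ᶠ j in (F : Filter J), Orb T (Gs j) (ps j) (vs j) L)
    (hp : ∀ k ≤ L, ∀ᶠ j in (F : Filter J), ps j k = p k)
    (hv : ∀ k ≤ L, Tendsto (fun j => vs j k) F (𝓝 (v k))) : Orb T G p v L := by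
  intro k hk
  have h1 := hp k hk.le
  have h2 := hp (k + 1) hk
  constructor
  · obtain ⟨j, hj, hj1, hj2⟩ := (ho.and (h1.and h2)).exists
    have := (hj k hk).1
    rwa [hj1, hj2] at this
  · refine tendsto_nhds_unique (hv (k + 1) hk) ?_
    refine (tendsto_act (h (p k) (p (k + 1))) (hv k hk.le)).congr' ?_
    filter_upwards [ho, h1, h2] with j hj hj1 hj2
    rw [← hj1, ← hj2]
    exact (hj k hk).2.symm

/-- The finite-time form of hyperbolicity is stable under perturbation. -/
lemma TG.exp [Finite ι] (h : TG F Gs G) {n : ℕ} (hE : Exp T G n) :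
    ∀ᶠ j in (F : Filter J), Exp T (Gs j) n := by
  rcases isEmpty_or_nonempty ι with hι | ⟨⟨a⟩⟩
  · exact Eventually.of_forall fun j p => isEmptyElim (p 0)
  by_contra hcon
  rw [← Ultrafilter.eventually_not] at hcon
  have key : ∀ j, ∃ p v, ¬ Exp T (Gs j) n → Orb T (Gs j) p v (2 * n) ∧ ‖v n‖ = 1 ∧
      ∀ k ≤ 2 * n, ‖v k‖ ≤ 2 := by
    intro j
    by_cases hj : Exp T (Gs j) n
    · exact ⟨fun _ => a, fun _ => 0, fun h => absurd hj h⟩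
    · have hj' := hj
      simp only [Exp] at hj'
      push Not at hj'
      obtain ⟨p, v, ho, hv, hk⟩ := hj'
      have h0 : 0 < ‖v n‖ := norm_pos_iff.2 hv
      refine ⟨p, fun k => ‖v n‖⁻¹ • v k, fun _ => ⟨ho.smul _, ?_, fun k hkn => ?_⟩⟩
      · rw [norm_smul, norm_inv, norm_norm, inv_mul_cancel₀ h0.ne']
      · rw [norm_smul, norm_inv, norm_norm, inv_mul_le_iff₀ h0, mul_comm]
        exact hk k hkn
  choose ps vs hpv using key
  have hpv' : ∀ᶠ j in (F : Filter J), Orb T (Gs j) (ps j) (vs j) (2 * n) ∧ ‖vs j n‖ = 1 ∧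
      ∀ k ≤ 2 * n, ‖vs j k‖ ≤ 2 := hcon.mono fun j hj => hpv j hj
  choose p hp using fun k => ultra_const (F := F) (fun j => ps j k)
  have hlim : ∀ k, ∃ x, k ≤ 2 * n → Tendsto (fun j => vs j k) F (𝓝 x) := by
    intro k
    by_cases hk : k ≤ 2 * n
    · obtain ⟨x, hx⟩ := ultra_lim (F := F) (f := fun j => vs j k) (R := 2)
        (hpv'.mono fun j hj => hj.2.2 k hk)
      exact ⟨x, fun _ => hx⟩
    · exact ⟨0, fun h => absurd h hk⟩
  choose v hv using hlim
  have ho : Orb T G p v (2 * n) := orb_lim h (hpv'.mono fun j hj => hj.1) (fun k _ => hp k) hv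
  have h1 : ‖v n‖ = 1 := by
    refine tendsto_nhds_unique ((hv n (by omega)).norm) ?_
    exact tendsto_const_nhds.congr' (hpv'.mono fun j hj => hj.2.1.symm)
  obtain ⟨k, hk, hlt⟩ := hE p v ho (norm_ne_zero_iff.1 (by rw [h1]; exact one_ne_zero))
  have h2 : ‖v k‖ ≤ 2 := le_of_tendsto (hv k hk).norm (hpv'.mono fun j hj => hj.2.2 k hk)
  linarith

/-- Limits of stable directions are stable directions of a hyperbolic limit cocycle. -/
lemma TG.bd_lim [Finite ι] (h : TG F Gs G) {n : ℕ} (hE : Exp T G n) {α : ι} {f : J → V2} {x : V2}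
    (hf : ∀ᶠ j in (F : Filter J), f j ∈ Bd T (Gs j) α) (hx : Tendsto f F (𝓝 x)) :
    x ∈ Bd T G α := by
  obtain ⟨Λ, hΛ⟩ := h.exists_NB
  have hE' := h.exp hE
  have key : ∀ j, ∃ p v, f j ∈ Bd T (Gs j) α → p 0 = α ∧ v 0 = f j ∧ (∀ L, Orb T (Gs j) p v L) ∧
      ∃ R, ∀ k, ‖v k‖ ≤ R := by
    intro j
    by_cases hj : f j ∈ Bd T (Gs j) α
    · obtain ⟨p, v, hpv⟩ := hj
      exact ⟨p, v, fun _ => hpv⟩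
    · exact ⟨fun _ => α, fun _ => 0, fun h => absurd h hj⟩
  choose ps vs hpv using key
  have hb : ∀ᶠ j in (F : Filter J), ‖f j‖ ≤ ‖x‖ + 1 :=
    hx.norm.eventually_le_const (by linarith)
  set M := |Λ| ^ n * (‖x‖ + 1)
  have hall : ∀ᶠ j in (F : Filter J), ∀ k, ‖vs j k‖ ≤ M := by
    filter_upwards [hf, hΛ, hE', hb] with j hj hΛj hEj hbj k
    obtain ⟨_, h2, h3, R, hR⟩ := hpv j hj
    refine (hEj.bdd hΛj h3 hR k).trans ?_
    rw [h2]
    exact mul_le_mul (pow_le_pow_left₀ (by linarith [hΛj.1]) (le_abs_self _) _) hbj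
      (norm_nonneg _) (by positivity)
  choose p hp using fun k => ultra_const (F := F) (fun j => ps j k)
  choose v hv using fun k => ultra_lim (F := F) (f := fun j => vs j k) (hall.mono fun j hj => hj k)
  refine ⟨p, v, ?_, ?_, fun L => ?_, M, fun k => ?_⟩
  · obtain ⟨j, hj, hj'⟩ := ((hp 0).and hf).exists
    rw [← hj, (hpv j hj').1]
  · exact tendsto_nhds_unique (hv 0) (hx.congr' (hf.mono fun j hj => (hpv j hj).2.1.symm))
  · exact orb_lim h (hf.mono fun j hj => (hpv j hj).2.2.1 L) (fun k _ => hp k) (fun k _ => hv k)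
  · exact le_of_tendsto (hv k).norm (hall.mono fun j hj => hj k)

/-- Each stable direction of a hyperbolic limit cocycle is a limit of stable directions. -/
lemma TG.bd_approx [Finite ι] (h : TG F Gs G) {n : ℕ} (hE : Exp T G n) {α : ι} {x : V2}
    (hx : x ∈ Bd T G α) :
    ∃ f : J → V2, (∀ᶠ j in (F : Filter J), f j ∈ Bd T (Gs j) α) ∧ Tendsto f F (𝓝 x) := by
  obtain ⟨p, v, hp, rfl, ho, R, hR⟩ := hx
  obtain ⟨Λ, hΛ⟩ := h.exists_NB
  have hE' := h.exp hE
  have hT : ∀ k, T (p k) (p (k + 1)) := fun k => (ho (k + 1) k (by omega)).1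
  have key : ∀ j, ∃ w : ℕ → V2, Exp T (Gs j) n → (∀ L, Orb T (Gs j) p w L) ∧ ‖w 0‖ = 1 ∧
      ∃ R, ∀ k, ‖w k‖ ≤ R := by
    intro j
    by_cases hj : Exp T (Gs j) n
    · obtain ⟨w, hw⟩ := hj.exists_orbit hT
      exact ⟨w, fun _ => hw⟩
    · exact ⟨fun _ => 0, fun h => absurd h hj⟩
  choose ws hws using key
  have hall : ∀ᶠ j in (F : Filter J), ∀ k, ‖ws j k‖ ≤ |Λ| ^ n := by
    filter_upwards [hE', hΛ] with j hj hΛj k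
    obtain ⟨h1, h2, R, hR⟩ := hws j hj
    refine (hj.bdd hΛj h1 hR k).trans ?_
    rw [h2, mul_one]
    exact pow_le_pow_left₀ (by linarith [hΛj.1]) (le_abs_self _) _
  choose w hw using fun k => ultra_lim (F := F) (f := fun j => ws j k) (hall.mono fun j hj => hj k)
  have how : ∀ L, Orb T G p w L := fun L =>
    orb_lim h (hE'.mono fun j hj => (hws j hj).1 L) (fun k _ => Eventually.of_forall fun _ => rfl)
      (fun k _ => hw k)
  have h1 : ‖w 0‖ = 1 := tendsto_nhds_unique (hw 0).norm
    (tendsto_const_nhds.congr' (hE'.mono fun j hj => (hws j hj).2.1.symm))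
  have hom := hE.unique how ho (fun k => le_of_tendsto (hw k).norm (hall.mono fun j hj => hj k)) hR
  obtain ⟨c, hc⟩ := exists_smul_of_om (norm_ne_zero_iff.1 (by rw [h1]; exact one_ne_zero)) hom
  refine ⟨fun j => c • ws j 0, hE'.mono fun j hj => ?_, ?_⟩
  · obtain ⟨h1, -, h3⟩ := hws j hj
    exact Bd.smul ⟨p, ws j, hp, rfl, h1, h3⟩ c
  · rw [hc]
    exact (hw 0).const_smul c

lemma Bd.isClosed [Finite ι] {n : ℕ} (hE : Exp T G n) (α : ι) : IsClosed (Bd T G α) := by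
  rw [← closure_subset_iff_isClosed]
  intro x hx
  obtain ⟨F, hF, hFx⟩ := mem_closure_iff_ultrafilter.1 hx
  exact TG.bd_lim (F := F) (Gs := fun _ => G) (f := id) (fun _ _ _ _ => tendsto_const_nhds) hE hF hFx

/-- The set of limits of eventual selections of a family of sets along an ultrafilter. -/
def ulim (F : Ultrafilter J) (E : J → Set V2) : Set V2 :=
  {x | ∃ f : J → V2, (∀ᶠ j in (F : Filter J), f j ∈ E j) ∧ Tendsto f F (𝓝 x)}

lemma TG.ulim_bd [Finite ι] (h : TG F Gs G) {n : ℕ} (hE : Exp T G n) (α : ι) :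
    ulim F (fun j => Bd T (Gs j) α) = Bd T G α := by
  ext x
  constructor
  · rintro ⟨f, hf, hx⟩
    exact h.bd_lim hE hf hx
  · exact fun hx => h.bd_approx hE hx

lemma isClosed_ulim (E : J → Set V2) (hc : ∀ᶠ j in (F : Filter J), IsClosed (E j))
    (hn : ∀ᶠ j in (F : Filter J), (E j).Nonempty) : IsClosed (ulim F E) := by
  rw [← closure_subset_iff_isClosed]
  intro x hx
  have key : ∀ j, ∃ y, IsClosed (E j) ∧ (E j).Nonempty → y ∈ E j ∧ Metric.infDist x (E j) = dist x y := by
    intro j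
    by_cases hj : IsClosed (E j) ∧ (E j).Nonempty
    · obtain ⟨y, hy⟩ := hj.1.exists_infDist_eq_dist hj.2 x
      exact ⟨y, fun _ => hy⟩
    · exact ⟨0, fun h => absurd h hj⟩
  choose f hf using key
  refine ⟨f, (hc.and hn).mono fun j hj => (hf j hj).1, ?_⟩
  rw [Metric.tendsto_nhds]
  intro ε hε
  obtain ⟨y, ⟨g, hg, hgy⟩, hy⟩ := Metric.mem_closure_iff.1 hx (ε / 2) (by positivity)
  filter_upwards [hc, hn, hg, Metric.tendsto_nhds.1 hgy (ε / 2) (by positivity)] with j h1 h2 h3 h4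
  obtain ⟨-, h6⟩ := hf j ⟨h1, h2⟩
  rw [dist_comm, ← h6]
  calc Metric.infDist x (E j) ≤ dist x (g j) := Metric.infDist_le_dist_of_mem h3
    _ ≤ dist x y + dist y (g j) := dist_triangle _ _ _
    _ < ε := by rw [dist_comm y]; linarith

end Ultra

end BD

namespace BD

open Filter Topology

section System

variable {ι : Type*} {T : ι → ι → Prop} {G : ι → ι → SL2} {U S : ι → Set V2}

/-! ### Invariant families of unstable and stable directions -/

/-- Two families of closed cones (unions of lines), `U` for the unstable and `S` for the stable
directions, which are invariant under the cocycle and uniformly transverse. -/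
structure Sys (T : ι → ι → Prop) (G : ι → ι → SL2) (U S : ι → Set V2) : Prop where
  closedU : ∀ α, IsClosed (U α)
  closedS : ∀ α, IsClosed (S α)
  smulU : ∀ α, ∀ x ∈ U α, ∀ c : ℝ, c • x ∈ U α
  smulS : ∀ α, ∀ x ∈ S α, ∀ c : ℝ, c • x ∈ S α
  neU : ∀ α, ∃ x ∈ U α, x ≠ 0
  neS : ∀ α, ∃ x ∈ S α, x ≠ 0
  fwdU : ∀ a b, T a b → ∀ u ∈ U a, act (G a b) u ∈ U b
  bwdU : ∀ b, ∀ u ∈ U b, ∃ a, T a b ∧ act (G a b)⁻¹ u ∈ U a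
  bwdS : ∀ a b, T a b → ∀ s ∈ S b, act (G a b)⁻¹ s ∈ S a
  fwdS : ∀ a, ∀ s ∈ S a, ∃ b, T a b ∧ act (G a b) s ∈ S b
  angle : ∀ α, ∃ δ > 0, ∀ u ∈ U α, ∀ s ∈ S α, δ * ‖u‖ * ‖s‖ ≤ |om u s|

/-- Time reversal exchanges the unstable and the stable directions. -/
lemma Sys.dual (h : Sys T G U S) : Sys (flip T) (dualG G) S U where
  closedU := h.closedS
  closedS := h.closedU
  smulU := h.smulS
  smulS := h.smulU
  neU := h.neS
  neS := h.neU
  fwdU a b hT u hu := h.bwdS b a hT u hu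
  bwdU b u hu := by
    obtain ⟨a, ha, h1⟩ := h.fwdS b u hu
    exact ⟨a, ha, by rwa [dualG, inv_inv]⟩
  bwdS a b hT s hs := by
    rw [dualG, inv_inv]
    exact h.fwdU b a hT s hs
  fwdS a s hs := h.bwdU a s hs
  angle α := by
    obtain ⟨δ, hδ, hd⟩ := h.angle α
    refine ⟨δ, hδ, fun u hu s hs => ?_⟩
    rw [om_swap, abs_neg]
    linarith [hd s hs u hu]

lemma Sys.tr (h : Sys T G U S) {α : ι} {u s : V2} (hu : u ∈ U α) (hs : s ∈ S α) (hu0 : u ≠ 0)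
    (hs0 : s ≠ 0) : om u s ≠ 0 := by
  obtain ⟨δ, hδ, hd⟩ := h.angle α
  have h1 := norm_pos_iff.2 hu0
  have h2 := norm_pos_iff.2 hs0
  have h3 : 0 < |om u s| := lt_of_lt_of_le (by positivity) (hd u hu s hs)
  exact abs_pos.1 h3

lemma exists_unit {E : Set V2} (hs : ∀ x ∈ E, ∀ c : ℝ, c • x ∈ E) {x : V2} (hx : x ∈ E)
    (h0 : x ≠ 0) : ‖x‖⁻¹ • x ∈ E ∧ ‖‖x‖⁻¹ • x‖ = 1 := by
  have h1 := norm_pos_iff.2 h0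
  exact ⟨hs x hx _, by rw [norm_smul, norm_inv, norm_norm, inv_mul_cancel₀ h1.ne']⟩

lemma continuous_om : Continuous fun z : V2 × V2 => om z.1 z.2 := by
  unfold om
  fun_prop

/-- Disjoint closed cones make a positive angle. -/
lemma exists_angle {E F : Set V2} (hE : IsClosed E) (hF : IsClosed F)
    (sE : ∀ x ∈ E, ∀ c : ℝ, c • x ∈ E) (sF : ∀ x ∈ F, ∀ c : ℝ, c • x ∈ F)
    (hd : ∀ x, x ∈ E → x ∈ F → x = 0) :
    ∃ δ > 0, ∀ u ∈ E, ∀ s ∈ F, δ * ‖u‖ * ‖s‖ ≤ |om u s| := by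
  have hc : IsCompact ((E ∩ Metric.sphere 0 1) ×ˢ (F ∩ Metric.sphere 0 1)) :=
    ((isCompact_sphere (0 : V2) 1).inter_left hE).prod ((isCompact_sphere (0 : V2) 1).inter_left hF)
  rcases ((E ∩ Metric.sphere 0 1) ×ˢ (F ∩ Metric.sphere 0 1)).eq_empty_or_nonempty with he | hne
  · refine ⟨1, one_pos, fun u hu s hs => ?_⟩
    by_cases hu0 : u = 0
    · simp [hu0]
    by_cases hs0 : s = 0
    · simp [hs0]
    exfalso
    obtain ⟨a1, a2⟩ := exists_unit sE hu hu0
    obtain ⟨b1, b2⟩ := exists_unit sF hs hs0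
    have : (‖u‖⁻¹ • u, ‖s‖⁻¹ • s) ∈ (E ∩ Metric.sphere 0 1) ×ˢ (F ∩ Metric.sphere 0 1) :=
      ⟨⟨a1, by simpa using a2⟩, ⟨b1, by simpa using b2⟩⟩
    rw [he] at this
    exact this
  · obtain ⟨z, ⟨⟨hz1, hz2⟩, ⟨hz3, hz4⟩⟩, hmin⟩ := hc.exists_isMinOn hne
      (f := fun z : V2 × V2 => |om z.1 z.2|) continuous_om.abs.continuousOn
    simp only [mem_sphere_iff_norm, sub_zero] at hz2 hz4
    have hz0 : z.1 ≠ 0 := norm_ne_zero_iff.1 (by rw [hz2]; exact one_ne_zero)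
    refine ⟨|om z.1 z.2|, abs_pos.2 fun h0 => ?_, fun u hu s hs => ?_⟩
    · obtain ⟨c, hc⟩ := exists_smul_of_om hz0 h0
      have := hd z.2 (by rw [hc]; exact sE _ hz1 c) hz3
      rw [this] at hz4
      simp at hz4
    · by_cases hu0 : u = 0
      · simp [hu0]
      by_cases hs0 : s = 0
      · simp [hs0]
      obtain ⟨a1, a2⟩ := exists_unit sE hu hu0
      obtain ⟨b1, b2⟩ := exists_unit sF hs hs0
      have := hmin (a := (‖u‖⁻¹ • u, ‖s‖⁻¹ • s)) ⟨⟨a1, by simpa using a2⟩, ⟨b1, by simpa using b2⟩⟩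
      simp only [Set.mem_ofPred_eq, om_smul_left, om_smul_right, abs_mul, abs_inv, abs_norm] at this
      have h1 := norm_pos_iff.2 hu0
      have h2 := norm_pos_iff.2 hs0
      calc |om z.1 z.2| * ‖u‖ * ‖s‖ ≤ (‖s‖⁻¹ * (‖u‖⁻¹ * |om u s|)) * ‖u‖ * ‖s‖ := by gcongr
        _ = |om u s| := by field_simp

/-- A hyperbolic cocycle has an invariant transverse family of unstable and stable directions. -/
lemma Exp.sys [Finite ι] {n : ℕ} (hE : Exp T G n) (hs : ∀ a, ∃ b, T a b) (hp : ∀ b, ∃ a, T a b) :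
    Sys T G (Bd (flip T) (dualG G)) (Bd T G) where
  closedU := Bd.isClosed hE.dual
  closedS := Bd.isClosed hE
  smulU _ _ hx c := Bd.smul hx c
  smulS _ _ hx c := Bd.smul hx c
  neU := Bd.exists_ne_zero hE.dual hp
  neS := Bd.exists_ne_zero hE hs
  fwdU a b hT u hu := by
    have := Bd.prepend (G := dualG G) (show flip T b a from hT) hu
    rwa [dualG, inv_inv] at this
  bwdU b u hu := Bd.tail hu
  bwdS a b hT s hs := Bd.prepend hT hs
  fwdS a s hs := Bd.tail hs
  angle α := exists_angle (Bd.isClosed hE.dual α) (Bd.isClosed hE α) (fun _ hx c => Bd.smul hx c)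
    (fun _ hx c => Bd.smul hx c) fun _ hu hs => Bd.disjoint hE hs hu

/-! ### Classes of directions -/

/-- `u` and `u'` are separated by `F`: two lines of `F` lie in different components of the
complement of the lines of `u` and `u'` in the projective line. -/
def sep (F : Set V2) (u u' : V2) : Prop :=
  ∃ s ∈ F, ∃ s' ∈ F, om u s * om u' s * (om u s' * om u' s') < 0

/-- `E` contains `m` nonzero vectors that are pairwise separated by `F`. -/
def Cnt (E F : Set V2) (m : ℕ) : Prop :=
  ∃ u : Fin m → V2, (∀ i, u i ∈ E ∧ u i ≠ 0) ∧ ∀ i j, i ≠ j → sep F (u i) (u j)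

lemma not_sep {F : Set V2} {u u' : V2} (h : ¬ sep F u u') {s s' : V2} (hs : s ∈ F) (hs' : s' ∈ F) :
    0 ≤ om u s * om u' s * (om u s' * om u' s') := by
  by_contra hlt
  exact h ⟨s, hs, s', hs', not_le.1 hlt⟩

lemma sep_smul {F : Set V2} {u u' : V2} {c c' : ℝ} (h : sep F (c • u) (c' • u')) : sep F u u' := by
  obtain ⟨s, hs, s', hs', hlt⟩ := h
  refine ⟨s, hs, s', hs', ?_⟩
  simp only [om_smul_left] at hlt
  have e : c * om u s * (c' * om u' s) * (c * om u s' * (c' * om u' s')) =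
      (c * c') ^ 2 * (om u s * om u' s * (om u s' * om u' s')) := by ring
  rw [e] at hlt
  by_contra hge
  push Not at hge
  have : 0 ≤ (c * c') ^ 2 := sq_nonneg _
  nlinarith [mul_nonneg this hge]

lemma sep_of_smul {F : Set V2} {u u' : V2} {c c' : ℝ} (hc : c ≠ 0) (hc' : c' ≠ 0)
    (h : sep F u u') : sep F (c • u) (c' • u') :=
  sep_smul (c := c⁻¹) (c' := c'⁻¹) (by
    rwa [smul_smul, smul_smul, inv_mul_cancel₀ hc, inv_mul_cancel₀ hc', one_smul, one_smul])

lemma Cnt.unit {E F : Set V2} {m : ℕ} (sE : ∀ x ∈ E, ∀ c : ℝ, c • x ∈ E) (h : Cnt E F m) :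
    ∃ u : Fin m → V2, (∀ i, u i ∈ E ∧ ‖u i‖ = 1) ∧ ∀ i j, i ≠ j → sep F (u i) (u j) := by
  obtain ⟨u, hu, hs⟩ := h
  refine ⟨fun i => ‖u i‖⁻¹ • u i, fun i => exists_unit sE (hu i).1 (hu i).2, fun i j hij => ?_⟩
  exact sep_of_smul (inv_ne_zero (norm_ne_zero_iff.2 (hu i).2))
    (inv_ne_zero (norm_ne_zero_iff.2 (hu j).2)) (hs i j hij)

/-- A positive angle bounds the number of classes. -/
lemma exists_not_cnt {E F : Set V2} (sE : ∀ x ∈ E, ∀ c : ℝ, c • x ∈ E)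
    (h : ∃ δ > 0, ∀ u ∈ E, ∀ s ∈ F, δ * ‖u‖ * ‖s‖ ≤ |om u s|) : ∃ M, ∀ m, Cnt E F m → m ≤ M := by
  obtain ⟨δ, hδ, hd⟩ := h
  obtain ⟨t, -, ht, hcov⟩ := (isCompact_sphere (0 : V2) 1).finite_cover_balls
    (show 0 < δ / 4 by positivity)
  refine ⟨ht.toFinset.card, fun m hm => ?_⟩
  obtain ⟨u, hu, hs⟩ := hm.unit sE
  have hx : ∀ i, ∃ x ∈ t, dist (u i) x < δ / 4 := by
    intro i
    have := hcov (show u i ∈ Metric.sphere (0 : V2) 1 by simpa using (hu i).2)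
    simpa using this
  choose f hft hfd using hx
  have hinj : Set.InjOn f (Finset.univ : Finset (Fin m)) := by
    intro i _ j _ hij
    by_contra hne
    obtain ⟨s, hsF, s', hsF', hlt⟩ := hs i j hne
    have hclose : ‖u i - u j‖ < δ / 2 := by
      rw [← dist_eq_norm]
      have h1 := hfd i
      have h2 := hfd j
      rw [← hij] at h2
      linarith [dist_triangle_right (u i) (u j) (f i)]
    have hpos : ∀ s ∈ F, 0 ≤ om (u i) s * om (u j) s := by
      intro s hs
      have h1 := hd _ (hu i).1 s hs
      rw [(hu i).2, mul_one] at h1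
      have h2 := om_bound (u i - u j) s
      have h3 : 2 * ‖u i - u j‖ * ‖s‖ ≤ δ * ‖s‖ := by
        have := norm_nonneg s
        nlinarith
      have h4 : |om (u i) s - om (u j) s| ≤ |om (u i) s| := by
        rw [← om_sub_left]
        linarith
      by_contra hneg
      push Not at hneg
      have h5 := sq_le_sq.2 h4
      nlinarith [sq_nonneg (om (u j) s), sq_pos_of_ne_zero (show om (u j) s ≠ 0 by
        rintro h0
        rw [h0] at hneg
        simp at hneg)]
    nlinarith [mul_nonneg (hpos s hsF) (hpos s' hsF')]
  have := Finset.card_le_card_of_injOn f (s := Finset.univ) (t := ht.toFinset)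
    (fun i _ => by simpa using hft i) hinj
  simpa using this

/-- Among sufficiently many directions, two sit at the same symbol and in the same class. -/
lemma pigeonhole {N : ℕ} {U S : Fin N → Set V2} {m : ℕ} (hc : ∀ α, ¬ Cnt (U α) (S α) (m + 1))
    (p : ℕ → Fin N) (u : ℕ → V2) (hu : ∀ k ≤ N * m, u k ∈ U (p k) ∧ u k ≠ 0) :
    ∃ k l, k < l ∧ l ≤ N * m ∧ p k = p l ∧ ¬ sep (S (p k)) (u k) (u l) := by
  obtain ⟨α, -, hα⟩ := Finset.exists_lt_card_fiber_of_mul_lt_card_of_maps_to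
    (s := Finset.range (N * m + 1)) (t := (Finset.univ : Finset (Fin N))) (f := p) (n := m)
    (fun _ _ => Finset.mem_univ _) (by simp)
  obtain ⟨t, ht, htc⟩ := Finset.exists_subset_card_eq hα
  by_contra hcon
  push Not at hcon
  refine hc α ⟨fun i => u (t.orderEmbOfFin htc i), fun i => ?_, fun i j hij => ?_⟩
  · have := ht (t.orderEmbOfFin_mem htc i)
    rw [Finset.mem_filter, Finset.mem_range] at this
    have h2 := hu _ (by omega : t.orderEmbOfFin htc i ≤ N * m)
    rwa [this.2] at h2
  · have h1 := ht (t.orderEmbOfFin_mem htc i)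
    have h2 := ht (t.orderEmbOfFin_mem htc j)
    rw [Finset.mem_filter, Finset.mem_range] at h1 h2
    rcases lt_or_gt_of_ne hij with h | h
    · have := hcon _ _ ((t.orderEmbOfFin htc).strictMono h) (by omega) (by rw [h1.2, h2.2])
      rwa [h1.2] at this
    · have := hcon _ _ ((t.orderEmbOfFin htc).strictMono h) (by omega) (by rw [h1.2, h2.2])
      rw [h2.2] at this
      obtain ⟨s, hs, s', hs', hlt⟩ := this
      exact ⟨s, hs, s', hs', by linarith⟩

/-! ### Extremal directions -/

/-- `x` is extremal in its class, on the side prescribed by the sign of `ε`: after orienting the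
members `u'` of the class coherently with `x`, they all lie on one side of `x`. -/
def Ext (ε : ℝ) (E F : Set V2) (x : V2) : Prop :=
  ∀ u' ∈ E, ¬ sep F x u' → ∀ s ∈ F, ε * om x u' * (om x s * om u' s) ≤ 0

/-- A direction of `E` at minimal angle from `F` is extremal in its class. -/
lemma ext_of_min {E F : Set V2} {x y : V2} (hy : y ∈ F)
    (hxn : x 0 ^ 2 + x 1 ^ 2 = 1) (hyn : y 0 ^ 2 + y 1 ^ 2 = 1) (hxy : 0 ≤ x 0 * y 0 + x 1 * y 1)
    (htr : ∀ u ∈ E, u ≠ 0 → om u y ≠ 0) (h0 : om x y ≠ 0)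
    (hmin : ∀ u ∈ E, om x y ^ 2 * (u 0 ^ 2 + u 1 ^ 2) ≤ om u y ^ 2) : Ext (om x y) E F x := by
  intro u hu hns s hs
  by_cases hu0 : u = 0
  · simp [hu0, om_zero_right]
  have hP := not_sep hns hs hy
  by_contra hpos
  push Not at hpos
  have huy := htr u hu hu0
  have h1 : 0 < om x u * om u y := by
    have h2 : 0 ≤ om x y * om x u * (om x s * om u s) * (om x s * om u s * (om x y * om u y)) :=
      mul_nonneg hpos.le hP
    have h3 : om x s * om u s ≠ 0 := by
      intro h
      rw [h, mul_zero] at hpos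
      exact lt_irrefl _ hpos
    have h4 : om x u ≠ 0 := by
      intro h
      rw [h] at hpos
      simp at hpos
    have e : om x y * om x u * (om x s * om u s) * (om x s * om u s * (om x y * om u y)) =
        (om x y * (om x s * om u s)) ^ 2 * (om x u * om u y) := by ring
    rw [e] at h2
    have h5 : 0 < (om x y * (om x s * om u s)) ^ 2 := by positivity
    have h6 : 0 ≤ om x u * om u y := by
      by_contra hc
      push Not at hc
      nlinarith
    exact lt_of_le_of_ne h6 (Ne.symm (mul_ne_zero h4 huy))
  -- `om x y • u = a • x + b • y` with `a b > 0` lies strictly between the two lines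
  have hm := hmin u hu
  set a := om u y with ha
  set b := om x u with hb
  have e0 : om x y * u 0 = a * x 0 + b * y 0 := by simp only [ha, hb, om]; ring
  have e1 : om x y * u 1 = a * x 1 + b * y 1 := by simp only [ha, hb, om]; ring
  have e : om x y ^ 2 * (u 0 ^ 2 + u 1 ^ 2) = a ^ 2 + b ^ 2 + 2 * (b * a) * (x 0 * y 0 + x 1 * y 1) := by
    have : om x y ^ 2 * (u 0 ^ 2 + u 1 ^ 2) = (om x y * u 0) ^ 2 + (om x y * u 1) ^ 2 := by ring
    rw [this, e0, e1]
    linear_combination a ^ 2 * hxn + b ^ 2 * hyn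
  have hb2 : 0 < b ^ 2 := by
    have : b ≠ 0 := by
      intro h
      rw [h] at h1
      simp at h1
    positivity
  have := mul_nonneg h1.le hxy
  nlinarith

/-- Preimages of extremal directions are extremal. -/
lemma Sys.ext_bwd (h : Sys T G U S) {ε : ℝ} {a b : ι} (hT : T a b) {u : V2}
    (hu0 : u ≠ 0) (he : Ext ε (U b) (S b) u) (hua : act (G a b)⁻¹ u ∈ U a) :
    Ext ε (U a) (S a) (act (G a b)⁻¹ u) := by
  intro u' hu' hns s hs
  by_cases h0 : u' = 0
  · simp [h0, om_zero_right]
  obtain ⟨s1, hs1, hs10⟩ := h.neS b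
  have hns' : ¬ sep (S b) u (act (G a b) u') := by
    rintro ⟨t, ht, t', ht', hlt⟩
    refine hns ⟨_, h.bwdS a b hT t ht, _, h.bwdS a b hT t' ht', ?_⟩
    simpa only [om_act, om_act_inv, act_act_inv, ← om_act (G a b) u'] using hlt
  have h1 := he _ (h.fwdU a b hT u' hu') hns' s1 hs1
  have h2 := not_sep hns hs (h.bwdS a b hT s1 hs1)
  have e1 : om u (act (G a b) u') = om (act (G a b)⁻¹ u) u' := (om_act_inv _ _ _).symm
  have e2 : om u s1 = om (act (G a b)⁻¹ u) (act (G a b)⁻¹ s1) := (om_act _ _ _).symm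
  have e3 : om (act (G a b) u') s1 = om u' (act (G a b)⁻¹ s1) := by
    rw [← om_act (G a b) u', act_act_inv]
  rw [e1, e2, e3] at h1
  have hne : om (act (G a b)⁻¹ u) (act (G a b)⁻¹ s1) * om u' (act (G a b)⁻¹ s1) ≠ 0 :=
    mul_ne_zero (h.tr hua (h.bwdS a b hT s1 hs1) (by rwa [Ne, act_eq_zero])
      (by rwa [Ne, act_eq_zero])) (h.tr hu' (h.bwdS a b hT s1 hs1) h0 (by rwa [Ne, act_eq_zero]))
  generalize om (act (G a b)⁻¹ u) (act (G a b)⁻¹ s1) * om u' (act (G a b)⁻¹ s1) = Q at *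
  generalize om (act (G a b)⁻¹ u) s * om u' s = P at *
  generalize ε * om (act (G a b)⁻¹ u) u' = X at *
  have hQ : 0 < Q ^ 2 := by positivity
  by_contra hc
  push Not at hc
  have : X * P * Q ^ 2 = X * Q * (P * Q) := by ring
  nlinarith [mul_nonneg_of_nonpos_of_nonpos h1 (neg_nonpos.2 h2), mul_pos hc hQ]

end System

/-- The backward orbit of an extremal direction is eventually periodic in projective space. -/
lemma Sys.extremal_cycle {N : ℕ} {T : Fin N → Fin N → Prop} {G : Fin N → Fin N → SL2}
    {U S : Fin N → Set V2} (h : Sys T G U S) {m : ℕ} (hc : ∀ α, ¬ Cnt (U α) (S α) (m + 1))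
    {α : Fin N} {x : V2} (hx : x ∈ U α) (hx0 : x ≠ 0) {ε : ℝ} (hε : ε ≠ 0)
    (he : Ext ε (U α) (S α) x) :
    ∃ (p : ℕ → Fin N) (u : ℕ → V2), p 0 = α ∧ u 0 = x ∧ (∀ L, Orb (flip T) (dualG G) p u L) ∧
      (∀ k, u k ∈ U (p k)) ∧
      ∃ k l, k < l ∧ l ≤ N * m ∧ p k = p l ∧ om (u k) (u l) = 0 := by
  choose f hf using h.bwdU
  let nxt : (Σ a : Fin N, U a) → Σ a : Fin N, U a := fun z =>
    ⟨f z.1 z.2.1 z.2.2, ⟨_, (hf z.1 z.2.1 z.2.2).2⟩⟩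
  let z : ℕ → Σ a : Fin N, U a := fun k => nxt^[k] ⟨α, ⟨x, hx⟩⟩
  have hz : ∀ k, z (k + 1) = nxt (z k) := fun k => Function.iterate_succ_apply' _ _ _
  have hor : ∀ L, Orb (flip T) (dualG G) (fun k => (z k).1) (fun k => (z k).2.1) L := by
    intro L k _
    have key : ∀ y z' : Σ a : Fin N, U a, z' = nxt y → flip T y.1 z'.1 ∧
        z'.2.1 = act (dualG G y.1 z'.1) y.2.1 := by
      rintro y z' rfl
      exact ⟨(hf _ _ y.2.2).1, rfl⟩
    exact key _ _ (hz k)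
  have hne : ∀ k, (z k).2.1 ≠ 0 := fun k => by
    rw [Ne, (hor k).eq_zero_iff le_rfl]
    exact hx0
  have hext : ∀ k, Ext ε (U (z k).1) (S (z k).1) (z k).2.1 := by
    intro k
    induction k with
    | zero => exact he
    | succ k ih =>
      rw [hz]
      exact h.ext_bwd (hf _ _ (z k).2.2).1 (hne k) ih (hf _ _ (z k).2.2).2
  obtain ⟨k, l, hkl, hl, hp, hns⟩ := pigeonhole hc (fun k => (z k).1) (fun k => (z k).2.1)
    (fun k _ => ⟨(z k).2.2, hne k⟩)
  refine ⟨_, _, rfl, rfl, hor, fun k => (z k).2.2, k, l, hkl, hl, hp, ?_⟩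
  have hlk : (z l).2.1 ∈ U (z k).1 := by
    have e : (z k).1 = (z l).1 := hp
    rw [e]
    exact (z l).2.2
  have hel : Ext ε (U (z k).1) (S (z k).1) (z l).2.1 := by
    have e : (z k).1 = (z l).1 := hp
    rw [e]
    exact hext l
  have hns' : ¬ sep (S (z k).1) (z l).2.1 (z k).2.1 := by
    rintro ⟨s, hs, s', hs', hlt⟩
    exact hns ⟨s, hs, s', hs', by linarith⟩
  obtain ⟨s, hs, hs0⟩ := h.neS (z k).1
  have h1 := hext k _ hlk hns s hs
  have h2 := hel _ (z k).2.2 hns' s hs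
  rw [om_swap] at h2
  have h3 := h.tr (z k).2.2 hs (hne k) hs0
  have h4 := h.tr hlk hs (hne l) hs0
  have h5 : ε * om (z k).2.1 (z l).2.1 * (om (z k).2.1 s * om (z l).2.1 s) = 0 := by
    apply le_antisymm h1
    linarith
  have h6 := (mul_eq_zero.1 h5).resolve_right (mul_ne_zero h3 h4)
  exact (mul_eq_zero.1 h6).resolve_left hε

end BD

namespace BD

open Filter Topology

/-! ### Limits of class counts -/

section Counting

variable {J : Type*} {F : Ultrafilter J} {E E' : J → Set V2}

/-- Separation is an open condition, so classes of the limit are seen along the ultrafilter. -/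
lemma cnt_of_ulim {m : ℕ} (h : Cnt (ulim F E) (ulim F E') m) :
    ∀ᶠ j in (F : Filter J), Cnt (E j) (E' j) m := by
  obtain ⟨u, hu, hs⟩ := h
  have h1 : ∀ i, ∃ f : J → V2, (∀ᶠ j in (F : Filter J), f j ∈ E j) ∧ Tendsto f F (𝓝 (u i)) :=
    fun i => (hu i).1
  choose f hf hlim using h1
  have h2 : ∀ i, ∀ᶠ j in (F : Filter J), f i j ≠ 0 := fun i => (hlim i).eventually_ne (hu i).2
  have h3 : ∀ i k, i ≠ k → ∀ᶠ j in (F : Filter J), sep (E' j) (f i j) (f k j) := by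
    intro i k hik
    obtain ⟨s, ⟨g, hg, hgs⟩, s', ⟨g', hg', hgs'⟩, hlt⟩ := hs i k hik
    have ht := ((tendsto_om (hlim i) hgs).mul (tendsto_om (hlim k) hgs)).mul
      ((tendsto_om (hlim i) hgs').mul (tendsto_om (hlim k) hgs'))
    filter_upwards [hg, hg', ht.eventually_lt_const hlt] with j h1 h2 h3
    exact ⟨_, h1, _, h2, h3⟩
  have h4 : ∀ᶠ j in (F : Filter J), ∀ i k, i ≠ k → sep (E' j) (f i j) (f k j) := by
    rw [Filter.eventually_all]
    intro i
    rw [Filter.eventually_all]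
    intro k
    by_cases hik : i = k
    · exact Eventually.of_forall fun j hj => absurd hik hj
    · filter_upwards [h3 i k hik] with j hj _ using hj
  filter_upwards [Filter.eventually_all.2 hf, Filter.eventually_all.2 h2, h4] with j h1 h2 h3
  exact ⟨fun i => f i j, fun i => ⟨h1 i, h2 i⟩, h3⟩

/-- If the limits are transverse then separation survives in the limit. -/
lemma cnt_ulim {m : ℕ} (sE : ∀ j, ∀ x ∈ E j, ∀ c : ℝ, c • x ∈ E j)
    (sE' : ∀ j, ∀ x ∈ E' j, ∀ c : ℝ, c • x ∈ E' j)
    (htr : ∀ u ∈ ulim F E, ∀ s ∈ ulim F E', u ≠ 0 → s ≠ 0 → om u s ≠ 0)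
    (h : ∀ᶠ j in (F : Filter J), Cnt (E j) (E' j) m) : Cnt (ulim F E) (ulim F E') m := by
  have key : ∀ j, ∃ (u : Fin m → V2) (s s' : Fin m → Fin m → V2), Cnt (E j) (E' j) m →
      (∀ i, u i ∈ E j ∧ ‖u i‖ = 1) ∧ ∀ i k, i ≠ k → (s i k ∈ E' j ∧ ‖s i k‖ = 1) ∧
        (s' i k ∈ E' j ∧ ‖s' i k‖ = 1) ∧
        om (u i) (s i k) * om (u k) (s i k) * (om (u i) (s' i k) * om (u k) (s' i k)) < 0 := by
    intro j
    by_cases hc : Cnt (E j) (E' j) m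
    · obtain ⟨u, hu, hs⟩ := hc.unit (sE j)
      have h2 : ∀ i k, ∃ s s', i ≠ k → (s ∈ E' j ∧ ‖s‖ = 1) ∧ (s' ∈ E' j ∧ ‖s'‖ = 1) ∧
          om (u i) s * om (u k) s * (om (u i) s' * om (u k) s') < 0 := by
        intro i k
        by_cases hik : i = k
        · exact ⟨0, 0, fun h => absurd hik h⟩
        obtain ⟨s, hs, s', hs', hlt⟩ := hs i k hik
        have hs0 : s ≠ 0 := by
          rintro rfl
          simp [om_zero_right] at hlt
        have hs0' : s' ≠ 0 := by
          rintro rfl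
          simp [om_zero_right] at hlt
        refine ⟨‖s‖⁻¹ • s, ‖s'‖⁻¹ • s', fun _ => ⟨exists_unit (sE' j) hs hs0,
          exists_unit (sE' j) hs' hs0', ?_⟩⟩
        have p1 := norm_pos_iff.2 hs0
        have p2 := norm_pos_iff.2 hs0'
        simp only [om_smul_right]
        have e : ‖s‖⁻¹ * om (u i) s * (‖s‖⁻¹ * om (u k) s) *
            (‖s'‖⁻¹ * om (u i) s' * (‖s'‖⁻¹ * om (u k) s')) =
            (‖s‖⁻¹ * ‖s'‖⁻¹) ^ 2 * (om (u i) s * om (u k) s * (om (u i) s' * om (u k) s')) := by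
          ring
        rw [e]
        exact mul_neg_of_pos_of_neg (by positivity) hlt
      choose s s' hss using h2
      exact ⟨u, s, s', fun _ => ⟨hu, hss⟩⟩
    · exact ⟨fun _ => 0, fun _ _ => 0, fun _ _ => 0, fun h => absurd h hc⟩
  choose u s s' hk using key
  have hk' : ∀ᶠ j in (F : Filter J), (∀ i, u j i ∈ E j ∧ ‖u j i‖ = 1) ∧ ∀ i k, i ≠ k →
      (s j i k ∈ E' j ∧ ‖s j i k‖ = 1) ∧ (s' j i k ∈ E' j ∧ ‖s' j i k‖ = 1) ∧
      om (u j i) (s j i k) * om (u j k) (s j i k) *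
        (om (u j i) (s' j i k) * om (u j k) (s' j i k)) < 0 := by
    filter_upwards [h] with j hj using hk j hj
  have hU : ∀ i, ∃ x, Tendsto (fun j => u j i) F (𝓝 x) ∧ ‖x‖ = 1 := by
    intro i
    obtain ⟨x, hx⟩ := ultra_lim (F := F) (f := fun j => u j i) (R := 1)
      (by filter_upwards [hk'] with j hj using (hj.1 i).2.le)
    refine ⟨x, hx, tendsto_nhds_unique hx.norm (tendsto_const_nhds.congr' ?_)⟩
    filter_upwards [hk'] with j hj using (hj.1 i).2.symm
  choose x hx hx1 using hU
  have hxm : ∀ i, x i ∈ ulim F E := fun i =>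
    ⟨_, by filter_upwards [hk'] with j hj using (hj.1 i).1, hx i⟩
  have nz : ∀ {z : V2}, ‖z‖ = 1 → z ≠ 0 := by
    rintro z hz rfl
    simp at hz
  refine ⟨x, fun i => ⟨hxm i, nz (hx1 i)⟩, fun i k hik => ?_⟩
  have hS : ∀ g : J → V2, (∀ᶠ j in (F : Filter J), g j ∈ E' j ∧ ‖g j‖ = 1) →
      ∃ y ∈ ulim F E', Tendsto g F (𝓝 y) ∧ ‖y‖ = 1 := by
    intro g hg
    obtain ⟨y, hy⟩ := ultra_lim (F := F) (f := g) (R := 1)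
      (by filter_upwards [hg] with j hj using hj.2.le)
    refine ⟨y, ⟨g, by filter_upwards [hg] with j hj using hj.1, hy⟩, hy,
      tendsto_nhds_unique hy.norm (tendsto_const_nhds.congr' ?_)⟩
    filter_upwards [hg] with j hj using hj.2.symm
  obtain ⟨y, hy, hyl, hy1⟩ := hS (fun j => s j i k)
    (by filter_upwards [hk'] with j hj using (hj.2 i k hik).1)
  obtain ⟨y', hy', hyl', hy1'⟩ := hS (fun j => s' j i k)
    (by filter_upwards [hk'] with j hj using (hj.2 i k hik).2.1)
  refine ⟨y, hy, y', hy', lt_of_le_of_ne ?_ ?_⟩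
  · refine le_of_tendsto (((tendsto_om (hx i) hyl).mul (tendsto_om (hx k) hyl)).mul
      ((tendsto_om (hx i) hyl').mul (tendsto_om (hx k) hyl'))) ?_
    filter_upwards [hk'] with j hj using (hj.2 i k hik).2.2.le
  · have a := htr _ (hxm i) _ hy (nz (hx1 i)) (nz hy1)
    have b := htr _ (hxm k) _ hy (nz (hx1 k)) (nz hy1)
    have c := htr _ (hxm i) _ hy' (nz (hx1 i)) (nz hy1')
    have d := htr _ (hxm k) _ hy' (nz (hx1 k)) (nz hy1')
    exact mul_ne_zero (mul_ne_zero a b) (mul_ne_zero c d)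

end Counting

/-! ### The hyperbolicity locus and its components -/

section Locus

variable {N : ℕ} {T : Fin N → Fin N → Prop}

lemma continuous_entry (i k : Fin 2) : Continuous fun g : SL2 => g.1 i k :=
  Continuous.matrix_elem (A := fun g : SL2 => g.1) continuous_induced_dom i k

lemma tg_of_nhds {F : Ultrafilter (Fin N → SL2)} {A : Fin N → SL2} (hF : ↑F ≤ 𝓝 A) :
    TG F (fun B => GB B) (GB A) := by
  intro a b i k
  have hc : Continuous fun B : Fin N → SL2 => (B b).1 i k :=
    (continuous_entry i k).comp (continuous_apply b)
  exact (hc.tendsto A).mono_left hF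

lemma unifHyp_of_exp [NeZero N] {A : Fin N → SL2} {n : ℕ} (h : Exp T (GB A) n) : UnifHypSub T A :=
  Grow.unifHyp h.grow

/-- The hyperbolicity locus is open, since the finite-time form is an open condition. -/
lemma isOpen_unifHyp [NeZero N] : IsOpen {B : Fin N → SL2 | UnifHypSub T B} := by
  rw [isOpen_iff_ultrafilter]
  intro A hA F hF
  obtain ⟨n, hn⟩ := unifHyp_exists_exp hA
  filter_upwards [(tg_of_nhds hF).exp hn] with B hB using unifHyp_of_exp hB

lemma exists_succ (hN : 2 ≤ N) (hT : TransitiveSubshift T) (a : Fin N) : ∃ b, T a b := by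
  have : Nontrivial (Fin N) := Fin.nontrivial_iff_two_le.2 hN
  obtain ⟨β, hβ⟩ := exists_ne a
  obtain ⟨w, -, hw, h1, h2⟩ := hT a β
  match w, hw, h1, h2 with
  | [c], _, h1, h2 =>
    simp only [List.head?_cons, Option.some.injEq, List.getLast?_singleton] at h1 h2
    exact absurd (h2.symm.trans h1) hβ
  | c :: d :: l, hw, h1, _ =>
    simp only [List.head?_cons, Option.some.injEq] at h1
    rw [List.Chain', List.isChain_cons_cons] at hw
    exact ⟨d, h1 ▸ hw.1⟩

lemma transitive_flip (hT : TransitiveSubshift T) : TransitiveSubshift (flip T) := by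
  intro α β
  obtain ⟨w, h0, hw, h1, h2⟩ := hT β α
  exact ⟨w.reverse, by simpa using h0, List.isChain_reverse.2 hw, by simpa using h2,
    by simpa using h1⟩

/-- At each symbol the unstable and the stable directions form at most `m` classes. -/
def Ncl (T : Fin N → Fin N → Prop) (m : ℕ) (B : Fin N → SL2) : Prop :=
  ∀ α, ¬ Cnt (Bd (flip T) (dualG (GB B)) α) (Bd T (GB B) α) (m + 1) ∧
    ¬ Cnt (Bd T (GB B) α) (Bd (flip T) (dualG (GB B)) α) (m + 1)

lemma exists_ncl {B : Fin N → SL2} {n : ℕ} (hE : Exp T (GB B) n) (hs : ∀ a, ∃ b, T a b)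
    (hp : ∀ b, ∃ a, T a b) : ∃ m, Ncl T m B := by
  have hS := hE.sys hs hp
  have h1 := fun α => exists_not_cnt (hS.smulU α) (hS.angle α)
  have h2 := fun α => exists_not_cnt (hS.smulS α) (hS.dual.angle α)
  choose M1 hM1 using h1
  choose M2 hM2 using h2
  refine ⟨Finset.univ.sup M1 + Finset.univ.sup M2, fun α => ⟨fun hc => ?_, fun hc => ?_⟩⟩
  · have := hM1 α _ hc
    have := Finset.le_sup (f := M1) (Finset.mem_univ α)
    omega
  · have := hM2 α _ hc
    have := Finset.le_sup (f := M2) (Finset.mem_univ α)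
    omega

lemma tr_swap {U S : Set V2} (h : ∀ u ∈ U, ∀ s ∈ S, u ≠ 0 → s ≠ 0 → om u s ≠ 0) :
    ∀ s ∈ S, ∀ u ∈ U, s ≠ 0 → u ≠ 0 → om s u ≠ 0 := fun s hs u hu hs0 hu0 => by
  rw [om_swap, neg_ne_zero]
  exact h u hu s hs hu0 hs0

/-- The number of classes is locally constant on the hyperbolicity locus, hence bounded on each
component. -/
lemma ncl_component [NeZero N] (hs : ∀ a, ∃ b, T a b) (hp : ∀ b, ∃ a, T a b) {ξ : Fin N → SL2}
    (hξ : UnifHypSub T ξ) {m : ℕ} (hm : Ncl T m ξ) :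
    connectedComponentIn {B : Fin N → SL2 | UnifHypSub T B} ξ ⊆
      {B | UnifHypSub T B ∧ Ncl T m B} := by
  refine isPreconnected_connectedComponentIn.subset_of_closure_inter_subset ?_
    ⟨ξ, mem_connectedComponentIn hξ, hξ, hm⟩ ?_
  · rw [isOpen_iff_ultrafilter]
    rintro A ⟨hA, hAm⟩ F hF
    obtain ⟨n, hn⟩ := unifHyp_exists_exp hA
    have hTG := tg_of_nhds hF
    have hU : ∀ᶠ B in (F : Filter (Fin N → SL2)), UnifHypSub T B := hF (isOpen_unifHyp.mem_nhds hA)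
    have hNcl : ∀ᶠ B in (F : Filter (Fin N → SL2)), Ncl T m B := by
      by_contra hcon
      rw [← Ultrafilter.eventually_not] at hcon
      have hSys := hn.sys hs hp
      have hch : ∀ B : Fin N → SL2, ∃ α, ¬ Ncl T m B →
          Cnt (Bd (flip T) (dualG (GB B)) α) (Bd T (GB B) α) (m + 1) ∨
          Cnt (Bd T (GB B) α) (Bd (flip T) (dualG (GB B)) α) (m + 1) := by
        intro B
        by_cases hB : Ncl T m B
        · exact ⟨0, fun h => absurd hB h⟩
        · unfold Ncl at hB
          push Not at hB
          obtain ⟨α, hα⟩ := hB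
          exact ⟨α, fun _ => or_iff_not_imp_left.2 hα⟩
      choose f hf using hch
      obtain ⟨α, hα⟩ := ultra_const (F := F) f
      have hor : ∀ᶠ B in (F : Filter (Fin N → SL2)),
          Cnt (Bd (flip T) (dualG (GB B)) α) (Bd T (GB B) α) (m + 1) ∨
          Cnt (Bd T (GB B) α) (Bd (flip T) (dualG (GB B)) α) (m + 1) := by
        filter_upwards [hcon, hα] with B h1 h2
        rw [← h2]
        exact hf B h1
      have e1 := hTG.ulim_bd hn α
      have e2 := hTG.dual.ulim_bd hn.dual α
      have htr : ∀ u ∈ Bd (flip T) (dualG (GB A)) α, ∀ s ∈ Bd T (GB A) α, u ≠ 0 → s ≠ 0 →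
          om u s ≠ 0 := fun u hu s hs h1 h2 => hSys.tr hu hs h1 h2
      rcases Ultrafilter.eventually_or.1 hor with h | h
      · refine (hAm α).1 ?_
        rw [← e1, ← e2] at htr ⊢
        exact cnt_ulim (fun _ x hx c => Bd.smul hx c) (fun _ x hx c => Bd.smul hx c) htr h
      · refine (hAm α).2 ?_
        rw [← e1, ← e2] at htr ⊢
        exact cnt_ulim (fun _ x hx c => Bd.smul hx c) (fun _ x hx c => Bd.smul hx c) (tr_swap htr) h
    filter_upwards [hU, hNcl] with B h1 h2 using ⟨h1, h2⟩
  · rintro A ⟨hA, hAc⟩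
    have hA' : UnifHypSub T A := connectedComponentIn_subset {B : Fin N → SL2 | UnifHypSub T B} ξ hAc
    refine ⟨hA', fun α => ?_⟩
    obtain ⟨n, hn⟩ := unifHyp_exists_exp hA'
    obtain ⟨F, hF1, hF⟩ := mem_closure_iff_ultrafilter.1 hA
    have hTG := tg_of_nhds hF
    have hF1' : ∀ᶠ B in (F : Filter (Fin N → SL2)), UnifHypSub T B ∧ Ncl T m B := hF1
    have e1 := hTG.ulim_bd hn α
    have e2 := hTG.dual.ulim_bd hn.dual α
    rw [← e1, ← e2]
    constructor
    · intro hc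
      obtain ⟨B, h1, h2⟩ := ((cnt_of_ulim hc).and hF1').exists
      exact (h2.2 α).1 h1
    · intro hc
      obtain ⟨B, h1, h2⟩ := ((cnt_of_ulim hc).and hF1').exists
      exact (h2.2 α).2 h1

end Locus

/-! ### The locus is locally connected -/

section LocConn

variable {N : ℕ}

/-- Entry coordinates of tuples of matrices. -/
abbrev Coord (N : ℕ) := Fin N → Fin 2 → Fin 2 → ℝ

/-- The determinants of the matrices of a tuple. -/
noncomputable def cdet (M : Coord N) (i : Fin N) : ℝ := M i 0 0 * M i 1 1 - M i 0 1 * M i 1 0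

/-- Tuples of matrices of positive determinant. -/
def PosDet (N : ℕ) : Set (Coord N) := {M | ∀ i, 0 < cdet M i}

/-- Retraction of tuples of positive determinant onto tuples in `SL(2,ℝ)`. -/
noncomputable def retr (M : PosDet N) (i : Fin N) : SL2 :=
  ⟨Matrix.of fun a b => (√(cdet M.1 i))⁻¹ * M.1 i a b, by
    have h := M.2 i
    have h2 := Real.sq_sqrt h.le
    have h3 := Real.sqrt_pos.2 h
    rw [Matrix.det_fin_two]
    simp only [Matrix.of_apply]
    have : (√(cdet M.1 i))⁻¹ * M.1 i 0 0 * ((√(cdet M.1 i))⁻¹ * M.1 i 1 1) -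
        (√(cdet M.1 i))⁻¹ * M.1 i 0 1 * ((√(cdet M.1 i))⁻¹ * M.1 i 1 0) =
        (√(cdet M.1 i))⁻¹ ^ 2 * cdet M.1 i := by
      unfold cdet
      ring
    rw [this]
    nth_rw 2 [← h2]
    field_simp⟩

lemma continuous_cdet (i : Fin N) : Continuous fun M : Coord N => cdet M i := by
  unfold cdet
  fun_prop

lemma continuous_retr : Continuous (retr : PosDet N → Fin N → SL2) := by
  refine continuous_pi fun i => Continuous.subtype_mk ?_ _
  refine continuous_pi fun a => continuous_pi fun b => ?_
  have h1 : Continuous fun M : PosDet N => cdet M.1 i :=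
    (continuous_cdet i).comp continuous_subtype_val
  refine Continuous.mul (Continuous.inv₀ (Real.continuous_sqrt.comp h1) fun M => ?_) ?_
  · exact (Real.sqrt_pos.2 (M.2 i)).ne'
  · exact (continuous_apply b).comp ((continuous_apply a).comp
      ((continuous_apply i).comp continuous_subtype_val))

/-- The entries of a tuple in `SL(2,ℝ)`. -/
noncomputable def coord (B : Fin N → SL2) : Coord N := fun i a b => (B i).1 a b

lemma cdet_coord (B : Fin N → SL2) (i : Fin N) : cdet (coord B) i = 1 := by
  have := (B i).2
  rw [Matrix.det_fin_two] at this
  exact this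

lemma coord_mem (B : Fin N → SL2) : coord B ∈ PosDet N := fun i => by
  rw [cdet_coord]
  exact one_pos

lemma retr_coord (B : Fin N → SL2) : retr ⟨coord B, coord_mem B⟩ = B := by
  funext i
  refine Subtype.ext ?_
  ext a b
  change (√(cdet (coord B) i))⁻¹ * coord B i a b = _
  rw [cdet_coord, Real.sqrt_one, inv_one, one_mul]
  rfl

lemma continuous_coord : Continuous (coord : (Fin N → SL2) → Coord N) :=
  continuous_pi fun i => continuous_pi fun a => continuous_pi fun b =>
    (continuous_entry a b).comp (continuous_apply i)

/-- Frontier points of a component of an open set of tuples lie outside that set. -/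
lemma not_mem_of_frontier {O : Set (Fin N → SL2)} (hO : IsOpen O) {ξ A : Fin N → SL2}
    (hA : A ∈ frontier (connectedComponentIn O ξ)) : A ∉ O := by
  intro hAO
  have hDopen : IsOpen (PosDet N) := by
    have : PosDet N = ⋂ i, {M : Coord N | 0 < cdet M i} := by
      ext M
      simp [PosDet]
    rw [this]
    exact isOpen_iInter_of_finite fun i => isOpen_lt continuous_const (continuous_cdet i)
  obtain ⟨W, hW, hWe⟩ := isOpen_induced_iff.1 (hO.preimage continuous_retr)
  have hAW : coord A ∈ W ∩ PosDet N := by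
    refine ⟨?_, coord_mem A⟩
    have : (⟨coord A, coord_mem A⟩ : PosDet N) ∈ Subtype.val ⁻¹' W := by
      rw [hWe]
      change retr _ ∈ O
      rwa [retr_coord]
    exact this
  obtain ⟨r, hr, hball⟩ := Metric.isOpen_iff.1 (hW.inter hDopen) _ hAW
  set Q : Set (PosDet N) := Subtype.val ⁻¹' Metric.ball (coord A) r with hQ
  have hQc : IsPreconnected Q := by
    rw [← Topology.IsInducing.subtypeVal.isPreconnected_image, hQ,
      Subtype.image_preimage_coe, Set.inter_eq_right.2 fun x hx => (hball hx).2]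
    exact (convex_ball _ _).isPreconnected
  have hC : IsPreconnected (retr '' Q) := hQc.image _ continuous_retr.continuousOn
  have hCO : retr '' Q ⊆ O := by
    rintro _ ⟨M, hM, rfl⟩
    have : M ∈ retr ⁻¹' O := by
      rw [← hWe]
      exact (hball hM).1
    exact this
  have hnb : coord ⁻¹' Metric.ball (coord A) r ⊆ retr '' Q := fun B hB =>
    ⟨⟨coord B, coord_mem B⟩, hB, retr_coord B⟩
  have hnO : IsOpen (coord ⁻¹' Metric.ball (coord A) r) := Metric.isOpen_ball.preimage continuous_coord
  have hAn : A ∈ coord ⁻¹' Metric.ball (coord A) r := Metric.mem_ball_self hr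
  obtain ⟨B, hB1, hB2⟩ := mem_closure_iff.1 hA.1 _ hnO hAn
  have hsub : retr '' Q ⊆ connectedComponentIn O ξ := by
    rw [connectedComponentIn_eq hB2]
    exact hC.subset_connectedComponentIn (hnb hB1) hCO
  exact hA.2 (mem_interior.2 ⟨_, hnb.trans hsub, hnO, hAn⟩)

end LocConn

end BD

namespace BD

open Filter Topology

/-! ### Traces and the three alternatives -/

section Alternatives

variable {N : ℕ} {T : Fin N → Fin N → Prop} {A : Fin N → SL2}

lemma trace_eigen {M : SL2} {z : V2} {κ : ℝ} (h : act M z = κ • z) (hz : z ≠ 0) :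
    κ ≠ 0 ∧ trace2 M * κ = κ ^ 2 + 1 := by
  have hκ : κ ≠ 0 := by
    rintro rfl
    rw [zero_smul, act_eq_zero] at h
    exact hz h
  refine ⟨hκ, ?_⟩
  have hd := det_expl M
  have h0 := congrFun h 0
  have h1 := congrFun h 1
  simp only [act_apply, Pi.smul_apply, smul_eq_mul] at h0 h1
  rw [trace2, Matrix.trace_fin_two]
  have key : ∀ i, (M.1 0 0 + M.1 1 1) * κ * z i = (κ ^ 2 + 1) * z i := by
    intro i
    fin_cases i
    · simp only [Fin.zero_eta]
      linear_combination κ * h0 - M.1 1 1 * h0 + M.1 0 1 * h1 + z 0 * hd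
    · simp only [Fin.mk_one]
      linear_combination κ * h1 - M.1 0 0 * h1 + M.1 1 0 * h0 + z 1 * hd
  by_contra hne
  apply hz
  ext i
  have := key i
  by_contra hi
  exact hne (mul_right_cancel₀ hi this)

lemma abs_trace_eq {M : SL2} {z : V2} {κ : ℝ} (h : act M z = κ • z) (hz : z ≠ 0) (h1 : |κ| = 1) :
    |trace2 M| = 2 := by
  obtain ⟨-, ht⟩ := trace_eigen h hz
  have h2 : κ ^ 2 = 1 := by rw [← sq_abs, h1, one_pow]
  have h3 := congrArg abs ht
  rw [abs_mul, h1, h2] at h3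
  norm_num at h3
  exact h3

lemma two_lt_abs_trace {M : SL2} {z : V2} {κ : ℝ} (h : act M z = κ • z) (hz : z ≠ 0)
    (h1 : |κ| ≠ 1) : 2 < |trace2 M| := by
  obtain ⟨hκ, ht⟩ := trace_eigen h hz
  have h0 : 0 < |κ| := abs_pos.2 hκ
  have h3 := congrArg abs ht
  rw [abs_mul, abs_of_pos (show 0 < κ ^ 2 + 1 by positivity), ← sq_abs κ] at h3
  have h4 : 0 < (|κ| - 1) ^ 2 := by
    have : |κ| - 1 ≠ 0 := sub_ne_zero.2 h1
    positivity
  by_contra hle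
  push Not at hle
  nlinarith [mul_le_mul_of_nonneg_right hle h0.le]

/-- The three alternatives for a tuple `A`, with word lengths bounded by `K`. -/
def Concl (T : Fin N → Fin N → Prop) (A : Fin N → SL2) (K : ℕ) : Prop :=
  (∃ w : List (Fin N), w ≠ [] ∧ w.length ≤ K ∧ List.Chain' T (w ++ w) ∧
    ((wordProd A w : Matrix (Fin 2) (Fin 2) ℝ) = 1 ∨
      (wordProd A w : Matrix (Fin 2) (Fin 2) ℝ) = -1)) ∨
  (∃ w : List (Fin N), w ≠ [] ∧ w.length ≤ K ∧ List.Chain' T (w ++ w) ∧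
    |trace2 (wordProd A w)| = 2 ∧
    (wordProd A w : Matrix (Fin 2) (Fin 2) ℝ) ≠ 1 ∧
    (wordProd A w : Matrix (Fin 2) (Fin 2) ℝ) ≠ -1) ∨
  (∃ u w v : List (Fin N), u ≠ [] ∧ w ≠ [] ∧
    u.length ≤ K ∧ w.length ≤ K ∧ v.length ≤ K ∧
    List.Chain' T (u ++ u) ∧ List.Chain' T (w ++ w) ∧
    List.Chain' T (u ++ v ++ w) ∧
    2 < |trace2 (wordProd A u)| ∧ 2 < |trace2 (wordProd A w)| ∧
    ∃ x : Fin 2 → ℝ, x ≠ 0 ∧ ∃ lam mu : ℝ,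
      (wordProd A u : Matrix (Fin 2) (Fin 2) ℝ).mulVec x = lam • x ∧
      1 < |lam| ∧
      (wordProd A w : Matrix (Fin 2) (Fin 2) ℝ).mulVec
          ((wordProd A v : Matrix (Fin 2) (Fin 2) ℝ).mulVec x) =
        mu • (wordProd A v : Matrix (Fin 2) (Fin 2) ℝ).mulVec x ∧
      |mu| < 1)

lemma seg_ne_nil {p : ℕ → Fin N} {a n : ℕ} (hn : 1 ≤ n) : seg p a n ≠ [] := by
  intro h
  have := seg_length p a n
  rw [h] at this
  simp at this
  omega

lemma seg_cycle_chain {p : ℕ → Fin N} {a c : ℕ} (hc : 1 ≤ c) (hp : p (a + c) = p a)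
    (hT : ∀ k, a ≤ k → k < a + c → T (p k) (p (k + 1))) :
    List.Chain' T (seg p a c ++ seg p a c) := by
  set q : ℕ → Fin N := fun i => if i ≤ c then p (a + i) else p (a + (i - c)) with hq
  have e1 : seg p a c = seg q 0 c := by
    unfold seg
    refine List.map_congr_left fun k hk => ?_
    rw [List.mem_range] at hk
    simp only [hq]
    rw [if_pos (by omega)]
    congr 1
    omega
  have e2 : seg p a c = seg q c c := by
    unfold seg
    refine List.map_congr_left fun k hk => ?_
    rw [List.mem_range] at hk
    simp only [hq]
    rw [if_neg (by omega)]
    congr 1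
    omega
  have e3 : seg p a c ++ seg p a c = seg q 0 (c + c) := by
    rw [seg_add, zero_add, ← e1, ← e2]
  rw [e3]
  refine seg_chain q 0 (c + c) fun k hk1 hk2 => ?_
  simp only [hq]
  rcases lt_trichotomy k c with h | h | h
  · rw [if_pos (by omega), if_pos (by omega)]
    exact hT (a + k) (by omega) (by omega)
  · subst h
    rw [if_pos le_rfl, if_neg (by omega), hp, show a + (k + 1 - k) = a + 1 by omega]
    exact hT a le_rfl (by omega)
  · rw [if_neg (by omega), if_neg (by omega), show a + (k + 1 - c) = a + (k - c) + 1 by omega]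
    exact hT _ (by omega) (by omega)

lemma concl_of_trace {K : ℕ} {w : List (Fin N)} (h0 : w ≠ []) (hK : w.length ≤ K)
    (hc : List.Chain' T (w ++ w)) (ht : |trace2 (wordProd A w)| = 2) : Concl T A K := by
  by_cases h1 : (wordProd A w : Matrix (Fin 2) (Fin 2) ℝ) = 1
  · exact Or.inl ⟨w, h0, hK, hc, Or.inl h1⟩
  by_cases h2 : (wordProd A w : Matrix (Fin 2) (Fin 2) ℝ) = -1
  · exact Or.inl ⟨w, h0, hK, hc, Or.inr h2⟩
  exact Or.inr (Or.inl ⟨w, h0, hK, hc, ht, h1, h2⟩)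

/-- A closed path with an eigenvalue of modulus one gives the first or the second alternative. -/
lemma concl_of_cycle {K : ℕ} {P : ℕ → Fin N} {z : ℕ → V2} {a c : ℕ}
    (ho : Orb T (GB A) P z (a + c)) (hc : 1 ≤ c) (hcK : c ≤ K) (hP : P (a + c) = P a)
    (hz0 : z a ≠ 0) {κ : ℝ} (hκ : z (a + c) = κ • z a) (h1 : |κ| = 1) : Concl T A K := by
  refine concl_of_trace (seg_ne_nil (p := P) (a := a) hc) (by rwa [seg_length])
    (seg_cycle_chain hc hP fun k _ hk => (ho k hk).1) (abs_trace_eq (z := z a) (κ := κ) ?_ hz0 h1)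
  rw [← orb_seg ho a c le_rfl, hκ]

/-- An orbit segment which starts with a non-contracting closed piece and ends with a
non-expanding closed piece yields one of the alternatives. -/
lemma concl_of_heteroclinic {K : ℕ} {P : ℕ → Fin N} {z : ℕ → V2} {a b c : ℕ}
    (ho : Orb T (GB A) P z (a + b + c)) (ha : 1 ≤ a) (hc : 1 ≤ c) (haK : a ≤ K) (hbK : b ≤ K)
    (hcK : c ≤ K) (hPa : P a = P 0) (hPc : P (a + b + c) = P (a + b)) (hz0 : z 0 ≠ 0)
    {κ μ : ℝ} (hκ : z a = κ • z 0) (h1 : 1 ≤ |κ|) (hμ : z (a + b + c) = μ • z (a + b))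
    (h2 : |μ| ≤ 1) : Concl T A K := by
  have hza : z a ≠ 0 := by rwa [Ne, ho.eq_zero_iff (by omega)]
  have hzb : z (a + b) ≠ 0 := by rwa [Ne, ho.eq_zero_iff (by omega)]
  rcases h1.eq_or_lt with h1 | h1
  · refine concl_of_cycle (P := P) (z := z) (a := 0) (c := a) (ho.mono (by omega)) ha haK ?_ hz0
      (κ := κ) ?_ h1.symm
    · rwa [zero_add]
    · rwa [zero_add]
  rcases h2.eq_or_lt with h2 | h2
  · exact concl_of_cycle ho hc hcK hPc hzb hμ h2
  have hu := orb_seg ho 0 a (by omega)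
  have hv := orb_seg ho a b (by omega)
  have hw := orb_seg ho (a + b) c le_rfl
  rw [zero_add] at hu
  have hu' : act (wordProd A (seg P 0 a)) (z a) = κ • z a := by
    rw [hκ, act_smul, ← hu, hκ]
  have hw' : act (wordProd A (seg P (a + b) c)) (z (a + b)) = μ • z (a + b) := by
    rw [← hw, hμ]
  refine Or.inr (Or.inr ⟨seg P 0 a, seg P (a + b) c, seg P a b, seg_ne_nil ha, seg_ne_nil hc,
    by rwa [seg_length], by rwa [seg_length], by rwa [seg_length],
    seg_cycle_chain ha (by rwa [zero_add]) fun k _ hk => (ho k (by omega)).1,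
    seg_cycle_chain hc hPc fun k _ hk => (ho k hk).1, ?_, two_lt_abs_trace hu' hza h1.ne',
    two_lt_abs_trace hw' hzb h2.ne, z a, hza, κ, μ, hu', h1, ?_, h2⟩)
  · have e : seg P 0 a ++ seg P a b ++ seg P (a + b) c = seg P 0 (a + b + c) := by
      rw [seg_add, seg_add, zero_add, zero_add]
    rw [e]
    exact seg_chain P 0 _ fun k _ hk => (ho k (by omega)).1
  · change act (wordProd A (seg P (a + b) c)) (act (wordProd A (seg P a b)) (z a)) =
      μ • act (wordProd A (seg P a b)) (z a)
    rw [← hv, hw']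

/-- A preperiodic backward orbit and a preperiodic forward orbit of the same line. -/
lemma concl_of_two_sided {M : ℕ} {p q : ℕ → Fin N} {u s : ℕ → V2} {k l k' l' : ℕ}
    (hu : Orb (flip T) (dualG (GB A)) p u l) (hs : Orb T (GB A) q s l') (hpq : p 0 = q 0)
    (hkl : k < l) (hl : l ≤ M) (hp : p k = p l) (hkl' : k' < l') (hl' : l' ≤ M) (hq : q k' = q l')
    (hu0 : u 0 ≠ 0) (hs0 : s 0 ≠ 0) (hpar : om (u 0) (s 0) = 0) (hou : om (u k) (u l) = 0)
    (hos : om (s k') (s l') = 0) (hnu : ‖u l‖ ≤ ‖u k‖) (hns : ‖s l'‖ ≤ ‖s k'‖) :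
    Concl T A (2 * M) := by
  obtain ⟨c, hc⟩ := exists_smul_of_om hu0 hpar
  have hc0 : c ≠ 0 := by
    rintro rfl
    rw [zero_smul] at hc
    exact hs0 hc
  have hx := hu.smul c
  have hul : u l ≠ 0 := by rwa [Ne, hu.eq_zero_iff le_rfl]
  have hsk : s k' ≠ 0 := by rwa [Ne, hs.eq_zero_iff hkl'.le]
  have hv0 : c • u 0 = s 0 := hc.symm
  have hz := orb_splice hx hs hpq hv0
  set P := splice l p q with hP
  set z := splice l (fun k => c • u k) s with hzd
  obtain ⟨κ, hκ⟩ := exists_smul_of_om hul (show om (u l) (u k) = 0 by rw [om_swap, hou, neg_zero])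
  obtain ⟨μ, hμ⟩ := exists_smul_of_om hsk hos
  have z0 : z 0 = c • u l := splice_le (by omega)
  have za : z (l - k) = c • u k := by
    rw [hzd, splice_le (by omega), show l - (l - k) = k by omega]
  have zi : ∀ i, z (l + i) = s i := fun i => splice_add hv0 i
  have Pi : ∀ i, P (l + i) = q i := fun i => splice_add hpq i
  have e1 : l - k + (k + k') = l + k' := by omega
  have e2 : l - k + (k + k') + (l' - k') = l + l' := by omega
  refine concl_of_heteroclinic (P := P) (z := z) (a := l - k) (b := k + k') (c := l' - k') ?_
    (by omega) (by omega) (by omega) (by omega) (by omega) ?_ ?_ ?_ (κ := κ) (μ := μ) ?_ ?_ ?_ ?_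
  · rwa [e2]
  · rw [hP, splice_le (by omega), splice_le (by omega), show l - (l - k) = k by omega, hp,
      Nat.sub_zero]
  · rw [e2, e1, Pi, Pi, hq]
  · rw [z0]
    exact smul_ne_zero hc0 hul
  · rw [za, z0, hκ, smul_comm]
  · rw [hκ, norm_smul, Real.norm_eq_abs] at hnu
    have := norm_pos_iff.2 hul
    by_contra hlt
    push Not at hlt
    nlinarith
  · rw [e2, e1, zi, zi, hμ]
  · rw [hμ, norm_smul, Real.norm_eq_abs] at hns
    have := norm_pos_iff.2 hsk
    by_contra hlt
    push Not at hlt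
    nlinarith

end Alternatives

end BD

namespace BD

open Filter Topology

/-! ### Vanishing angle forces a heteroclinic connection -/

section SmallAngle

/-- Square of the Euclidean norm. -/
def nsq (v : V2) : ℝ := v 0 ^ 2 + v 1 ^ 2

lemma nsq_smul (c : ℝ) (v : V2) : nsq (c • v) = c ^ 2 * nsq v := by
  simp [nsq]
  ring

lemma nsq_pos {v : V2} (h : v ≠ 0) : 0 < nsq v := by
  unfold nsq
  by_contra hle
  push Not at hle
  apply h
  have h0 : v 0 ^ 2 = 0 := by nlinarith [sq_nonneg (v 0), sq_nonneg (v 1)]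
  have h1 : v 1 ^ 2 = 0 := by nlinarith [sq_nonneg (v 0), sq_nonneg (v 1)]
  ext i
  fin_cases i
  · exact pow_eq_zero_iff two_ne_zero |>.1 h0
  · exact pow_eq_zero_iff two_ne_zero |>.1 h1

lemma norm_sq_le_nsq (v : V2) : ‖v‖ ^ 2 ≤ nsq v := by
  unfold nsq
  have h : ‖v‖ ≤ √(v 0 ^ 2 + v 1 ^ 2) := by
    refine norm_le_of_coord ?_ ?_
    · exact Real.abs_le_sqrt (by nlinarith [sq_nonneg (v 1)])
    · exact Real.abs_le_sqrt (by nlinarith [sq_nonneg (v 0)])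
  calc ‖v‖ ^ 2 ≤ √(v 0 ^ 2 + v 1 ^ 2) ^ 2 := by gcongr
    _ = _ := Real.sq_sqrt (by positivity)

lemma continuous_nsq : Continuous nsq := by
  unfold nsq
  fun_prop

lemma isCompact_nsq : IsCompact {v : V2 | nsq v = 1} := by
  refine (isCompact_closedBall (0 : V2) 1).of_isClosed_subset
    (isClosed_eq continuous_nsq continuous_const) fun v hv => ?_
  have := norm_sq_le_nsq v
  rw [show nsq v = 1 from hv] at this
  rw [mem_closedBall_zero_iff]
  exact (sq_le_one_iff₀ (norm_nonneg v)).1 this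

lemma exists_nsq_unit {E : Set V2} (hs : ∀ x ∈ E, ∀ c : ℝ, c • x ∈ E) {x : V2} (hx : x ∈ E)
    (h0 : x ≠ 0) : (√(nsq x))⁻¹ • x ∈ E ∧ nsq ((√(nsq x))⁻¹ • x) = 1 := by
  have h1 := nsq_pos h0
  refine ⟨hs x hx _, ?_⟩
  rw [nsq_smul, inv_pow, Real.sq_sqrt h1.le, inv_mul_cancel₀ h1.ne']

/-- A pair of directions at minimal angle, with the acute representatives chosen. -/
lemma exists_min_pair {E F : Set V2} (hE : IsClosed E) (hF : IsClosed F)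
    (sE : ∀ x ∈ E, ∀ c : ℝ, c • x ∈ E) (sF : ∀ x ∈ F, ∀ c : ℝ, c • x ∈ F)
    (nE : ∃ x ∈ E, x ≠ 0) (nF : ∃ x ∈ F, x ≠ 0) :
    ∃ x ∈ E, ∃ y ∈ F, nsq x = 1 ∧ nsq y = 1 ∧ 0 ≤ x 0 * y 0 + x 1 * y 1 ∧
      ∀ u ∈ E, ∀ s ∈ F, om x y ^ 2 * nsq u * nsq s ≤ om u s ^ 2 := by
  have hc : IsCompact (({v : V2 | nsq v = 1} ∩ E) ×ˢ ({v : V2 | nsq v = 1} ∩ F)) :=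
    (isCompact_nsq.inter_right hE).prod (isCompact_nsq.inter_right hF)
  obtain ⟨x0, hx0, hx00⟩ := nE
  obtain ⟨y0, hy0, hy00⟩ := nF
  obtain ⟨⟨x, y⟩, ⟨⟨hx1, hxE⟩, ⟨hy1, hyF⟩⟩, hmin⟩ := hc.exists_isMinOn
    ⟨(_, _), ⟨(exists_nsq_unit sE hx0 hx00).2, (exists_nsq_unit sE hx0 hx00).1⟩,
      ⟨(exists_nsq_unit sF hy0 hy00).2, (exists_nsq_unit sF hy0 hy00).1⟩⟩
    (f := fun z : V2 × V2 => om z.1 z.2 ^ 2) (continuous_om.pow 2).continuousOn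
  have key : ∀ u ∈ E, ∀ s ∈ F, om x y ^ 2 * nsq u * nsq s ≤ om u s ^ 2 := by
    intro u hu s hs
    by_cases hu0 : u = 0
    · simp [hu0, nsq, om_zero_left]
    by_cases hs0 : s = 0
    · simp [hs0, nsq, om_zero_right]
    obtain ⟨a1, a2⟩ := exists_nsq_unit sE hu hu0
    obtain ⟨b1, b2⟩ := exists_nsq_unit sF hs hs0
    have h := hmin (a := ((√(nsq u))⁻¹ • u, (√(nsq s))⁻¹ • s)) ⟨⟨a2, a1⟩, ⟨b2, b1⟩⟩
    have pu := nsq_pos hu0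
    have ps := nsq_pos hs0
    simp only [Set.mem_ofPred_eq, om_smul_left, om_smul_right, mul_pow, inv_pow,
      Real.sq_sqrt pu.le, Real.sq_sqrt ps.le] at h
    calc om x y ^ 2 * nsq u * nsq s ≤ ((nsq s)⁻¹ * ((nsq u)⁻¹ * om u s ^ 2)) * nsq u * nsq s := by
          gcongr
      _ = om u s ^ 2 := by field_simp
  rcases le_total 0 (x 0 * y 0 + x 1 * y 1) with h | h
  · exact ⟨x, hxE, y, hyF, hx1, hy1, h, key⟩
  · refine ⟨x, hxE, (-1 : ℝ) • y, sF y hyF _, hx1, ?_, ?_, ?_⟩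
    · rw [nsq_smul, show nsq y = 1 from hy1]
      norm_num
    · simp only [Pi.smul_apply, smul_eq_mul]
      linarith
    · simpa only [om_smul_right, mul_pow, show (-1 : ℝ) ^ 2 = 1 by norm_num, one_mul] using key

/-- An orbit of length `M` starting from `x` at the symbol `α`, which returns to the same line
at the times `k < l` without expansion. -/
def Pre {ι : Type*} (T : ι → ι → Prop) (G : ι → ι → SL2) (α : ι) (x : V2) (M : ℕ) (p : ℕ → ι)
    (u : ℕ → V2) (k l : ℕ) : Prop :=
  p 0 = α ∧ u 0 = x ∧ Orb T G p u M ∧ k < l ∧ l ≤ M ∧ p k = p l ∧ om (u k) (u l) = 0 ∧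
    ‖u l‖ ≤ ‖u k‖

/-- An extremal stable direction of a hyperbolic cocycle returns to its own line within `N * m` steps,
and it is contracted on the way. -/
lemma pre_of_ext {N : ℕ} {T : Fin N → Fin N → Prop} {G : Fin N → Fin N → SL2}
    {U : Fin N → Set V2} {n m : ℕ} (hE : Exp T G n) (h : Sys T G U (Bd T G))
    (hc : ∀ α, ¬ Cnt (Bd T G α) (U α) (m + 1)) {α : Fin N} {y : V2} (hy : y ∈ Bd T G α)
    (hy0 : y ≠ 0) {ε : ℝ} (hε : ε ≠ 0) (he : Ext ε (Bd T G α) (U α) y) :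
    ∃ p u k l, Pre T G α y (N * m) p u k l := by
  obtain ⟨p, u, hp, hu, ho, hm, k, l, hkl, hl, hpk, hom⟩ :=
    h.dual.extremal_cycle hc hy hy0 hε he
  rw [dual_dual] at ho
  have ho' : ∀ L, Orb T G p u L := ho
  refine ⟨p, u, k, l, hp, hu, ho' _, hkl, hl, hpk, hom, ?_⟩
  have hk0 : u k ≠ 0 := by rw [Ne, (ho' k).eq_zero_iff le_rfl, hu]; exact hy0
  obtain ⟨κ, hκ⟩ := exists_smul_of_om hk0 hom
  have := Bd.cycle_lt hE (q := fun i => p (k + i)) (v := fun i => u (k + i)) (c := l - k)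
    (by omega) ((ho' l).shift (by omega)) (by simp only [add_zero]; rw [hpk]; congr 1; omega)
    (κ := κ) (by simp only [add_zero]; rw [← hκ]; congr 1; omega) hk0 (hm k)
  rw [hκ, norm_smul, Real.norm_eq_abs]
  nlinarith [norm_nonneg (u k)]

/-- The stable and unstable directions at minimal angle are both extremal, hence preperiodic. -/
lemma exists_two_pre {N : ℕ} {T : Fin N → Fin N → Prop} {G : Fin N → Fin N → SL2} {n m : ℕ}
    (hE : Exp T G n) (hs : ∀ a, ∃ b, T a b) (hp : ∀ b, ∃ a, T a b)
    (hc : ∀ α, ¬ Cnt (Bd (flip T) (dualG G) α) (Bd T G α) (m + 1) ∧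
      ¬ Cnt (Bd T G α) (Bd (flip T) (dualG G) α) (m + 1)) (α : Fin N) :
    ∃ x y, nsq x = 1 ∧ nsq y = 1 ∧
      (∀ u ∈ Bd (flip T) (dualG G) α, ∀ s ∈ Bd T G α, om x y ^ 2 * nsq u * nsq s ≤ om u s ^ 2) ∧
      (∃ p u k l, Pre (flip T) (dualG G) α x (N * m) p u k l) ∧
      ∃ q s k' l', Pre T G α y (N * m) q s k' l' := by
  have hS := hE.sys hs hp
  obtain ⟨x, hx, y, hy, hx1, hy1, hd, hmin⟩ := exists_min_pair (hS.closedU α) (hS.closedS α)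
    (hS.smulU α) (hS.smulS α) (hS.neU α) (hS.neS α)
  have nz : ∀ {v : V2}, nsq v = 1 → v ≠ 0 := by
    rintro v hv rfl
    simp [nsq] at hv
  have h0 : om x y ≠ 0 := hS.tr hx hy (nz hx1) (nz hy1)
  have h0' : om y x ≠ 0 := by rwa [om_swap, neg_ne_zero]
  refine ⟨x, y, hx1, hy1, hmin, ?_, ?_⟩
  · refine pre_of_ext hE.dual hS.dual (fun α => (hc α).1) hx (nz hx1) h0
      (ext_of_min hy hx1 hy1 hd (fun u hu hu0 => hS.tr hu hy hu0 (nz hy1)) h0 fun u hu => ?_)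
    have := hmin u hu y hy
    rwa [hy1, mul_one] at this
  · refine pre_of_ext hE hS (fun α => (hc α).2) hy (nz hy1) h0'
      (ext_of_min hx hy1 hx1 (by linarith) (fun s hs hs0 => ?_) h0' fun s hs => ?_)
    · rw [om_swap, neg_ne_zero]
      exact hS.tr hx hs (nz hx1) hs0
    · have := hmin x hx s hs
      rw [hx1, mul_one] at this
      rw [om_swap, om_swap x s, neg_sq, neg_sq]
      exact this

variable {J : Type*} {F : Ultrafilter J}

/-- Preperiodicity within a bounded time passes to limits. -/
lemma pre_lim {ι : Type*} [Finite ι] {T : ι → ι → Prop} {Gs : J → ι → ι → SL2} {G : ι → ι → SL2}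
    (h : TG F Gs G) {α : ι} {xs : J → V2} {x : V2} (hx : Tendsto xs F (𝓝 x)) {M : ℕ}
    (hpre : ∀ᶠ j in (F : Filter J), ∃ p u k l, Pre T (Gs j) α (xs j) M p u k l) :
    ∃ p u k l, Pre T G α x M p u k l := by
  have key : ∀ j, ∃ (p : ℕ → ι) (u : ℕ → V2) (k l : ℕ),
      (∃ p u k l, Pre T (Gs j) α (xs j) M p u k l) → Pre T (Gs j) α (xs j) M p u k l := by
    intro j
    by_cases hj : ∃ p u k l, Pre T (Gs j) α (xs j) M p u k l
    · obtain ⟨p, u, k, l, hj⟩ := hj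
      exact ⟨p, u, k, l, fun _ => hj⟩
    · exact ⟨fun _ => α, fun _ => 0, 0, 0, fun h => absurd h hj⟩
  choose ps us ks ls hj using key
  have hP : ∀ᶠ j in (F : Filter J), Pre T (Gs j) α (xs j) M (ps j) (us j) (ks j) (ls j) := by
    filter_upwards [hpre] with j h using hj j h
  have hfin : ∀ f : J → ℕ, (∀ᶠ j in (F : Filter J), f j ≤ M) →
      ∃ a, ∀ᶠ j in (F : Filter J), f j = a := by
    intro f hf
    obtain ⟨a, ha⟩ := ultra_const (F := F) (fun j => (⟨min (f j) M, by omega⟩ : Fin (M + 1)))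
    refine ⟨a.1, ?_⟩
    filter_upwards [hf, ha] with j h1 h2
    rw [← h2]
    simp [h1]
  obtain ⟨k, hk⟩ := hfin ks (by filter_upwards [hP] with j h; exact h.2.2.2.1.le.trans h.2.2.2.2.1)
  obtain ⟨l, hl⟩ := hfin ls (by filter_upwards [hP] with j h; exact h.2.2.2.2.1)
  have hp := fun i => ultra_const (F := F) (fun j => ps j i)
  choose p hp using hp
  obtain ⟨Λ, hΛ⟩ := h.exists_NB
  have hb : ∀ᶠ j in (F : Filter J), ‖xs j‖ ≤ ‖x‖ + 1 :=
    (hx.norm.eventually_lt_const (lt_add_one _)).mono fun _ h => h.le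
  have hu : ∀ i, ∃ v, i ≤ M → Tendsto (fun j => us j i) F (𝓝 v) := by
    intro i
    by_cases hi : i ≤ M
    · obtain ⟨v, hv⟩ := ultra_lim (F := F) (f := fun j => us j i) (R := Λ ^ i * (‖x‖ + 1)) (by
        filter_upwards [hP, hΛ, hb] with j h1 h2 h3
        have h0 : (0 : ℝ) ≤ Λ := zero_le_one.trans h2.1
        have h4 : ∀ i ≤ M, ‖us j i‖ ≤ Λ ^ i * ‖us j 0‖ := by
          intro i
          induction i with
          | zero => simp
          | succ i ih =>
            intro hi
            calc ‖us j (i + 1)‖ ≤ Λ * ‖us j i‖ := h1.2.2.1.up h2 i hi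
              _ ≤ Λ * (Λ ^ i * ‖us j 0‖) := mul_le_mul_of_nonneg_left (ih (by omega)) h0
              _ = _ := by ring
        refine (h4 i hi).trans ?_
        rw [h1.2.1]
        exact mul_le_mul_of_nonneg_left h3 (pow_nonneg h0 _))
      exact ⟨v, fun _ => hv⟩
    · exact ⟨0, fun h => absurd h hi⟩
  choose u hu using hu
  obtain ⟨j0, ⟨hj0, hk0⟩, hl0⟩ := ((hP.and hk).and hl).exists
  have hkl : k < l := hk0 ▸ hl0 ▸ hj0.2.2.2.1
  have hlM : l ≤ M := hl0 ▸ hj0.2.2.2.2.1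
  refine ⟨p, u, k, l, ?_, ?_, ?_, hkl, hlM, ?_, ?_, ?_⟩
  · obtain ⟨j, h1, h2⟩ := (hP.and (hp 0)).exists
    rw [← h2, h1.1]
  · refine tendsto_nhds_unique (hu 0 (by omega)) (hx.congr' ?_)
    filter_upwards [hP] with j h using h.2.1.symm
  · exact orb_lim h (by filter_upwards [hP] with j h using h.2.2.1) (fun i _ => hp i) hu
  · obtain ⟨j, ⟨⟨⟨h1, h2⟩, h3⟩, h4⟩, h5⟩ := ((((hP.and (hp k)).and (hp l)).and hk).and hl).exists
    rw [← h2, ← h3]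
    have := h1.2.2.2.2.2.1
    rwa [h4, h5] at this
  · refine tendsto_nhds_unique (tendsto_om (hu k (by omega)) (hu l hlM))
      (tendsto_const_nhds.congr' ?_)
    filter_upwards [hP, hk, hl] with j h1 h2 h3
    have := h1.2.2.2.2.2.2.1
    rw [h2, h3] at this
    exact this.symm
  · refine le_of_tendsto_of_tendsto (hu l hlM).norm (hu k (by omega)).norm ?_
    filter_upwards [hP, hk, hl] with j h1 h2 h3
    have := h1.2.2.2.2.2.2.2
    rwa [h2, h3] at this

/-- If the angle is not bounded below, the minimal pairs converge to a single line which is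
preperiodic both in the past and in the future. -/
lemma concl_of_small_angle {N : ℕ} {T : Fin N → Fin N → Prop} {A : Fin N → SL2} {m : ℕ}
    (hs : ∀ a, ∃ b, T a b) (hp : ∀ b, ∃ a, T a b) {F : Ultrafilter (Fin N → SL2)}
    (hF : ↑F ≤ 𝓝 A) (hFm : ∀ᶠ B in (F : Filter (Fin N → SL2)), UnifHypSub T B ∧ Ncl T m B)
    {α : Fin N} (hα : ¬ ∃ δ > 0, ∀ᶠ B in (F : Filter (Fin N → SL2)),
      ∀ u ∈ Bd (flip T) (dualG (GB B)) α, ∀ s ∈ Bd T (GB B) α, δ * ‖u‖ * ‖s‖ ≤ |om u s|) :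
    Concl T A (2 * (N * m)) := by
  have hTG := tg_of_nhds hF
  have key : ∀ B : Fin N → SL2, ∃ x y, UnifHypSub T B ∧ Ncl T m B → nsq x = 1 ∧ nsq y = 1 ∧
      (∀ u ∈ Bd (flip T) (dualG (GB B)) α, ∀ s ∈ Bd T (GB B) α,
        om x y ^ 2 * nsq u * nsq s ≤ om u s ^ 2) ∧
      (∃ p u k l, Pre (flip T) (dualG (GB B)) α x (N * m) p u k l) ∧
      ∃ q s k' l', Pre T (GB B) α y (N * m) q s k' l' := by
    intro B
    by_cases hB : UnifHypSub T B ∧ Ncl T m B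
    · obtain ⟨n, hn⟩ := unifHyp_exists_exp hB.1
      obtain ⟨x, y, h⟩ := exists_two_pre hn hs hp hB.2 α
      exact ⟨x, y, fun _ => h⟩
    · exact ⟨0, 0, fun h => absurd h hB⟩
  choose x y hxy using key
  have hev := hFm.mono fun B hB => hxy B hB
  have unit_le : ∀ {v : V2}, nsq v = 1 → ‖v‖ ≤ 1 := fun {v} hv => by
    have := norm_sq_le_nsq v
    rw [hv] at this
    exact (sq_le_one_iff₀ (norm_nonneg v)).1 this
  obtain ⟨x0, hx0⟩ := ultra_lim (F := F) (f := x) (R := 1) (hev.mono fun B h => unit_le h.1)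
  obtain ⟨y0, hy0⟩ := ultra_lim (F := F) (f := y) (R := 1) (hev.mono fun B h => unit_le h.2.1)
  have hx1 : nsq x0 = 1 := tendsto_nhds_unique ((continuous_nsq.tendsto x0).comp hx0)
    (tendsto_const_nhds.congr' (hev.mono fun B h => h.1.symm))
  have hy1 : nsq y0 = 1 := tendsto_nhds_unique ((continuous_nsq.tendsto y0).comp hy0)
    (tendsto_const_nhds.congr' (hev.mono fun B h => h.2.1.symm))
  have nz : ∀ {v : V2}, nsq v = 1 → v ≠ 0 := by
    rintro v hv rfl
    simp [nsq] at hv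
  have hom : om x0 y0 = 0 := by
    by_contra hne
    set δ : ℝ := |om x0 y0| / 2 with hδ
    have hpos : 0 < |om x0 y0| := abs_pos.2 hne
    refine hα ⟨δ, by positivity, ?_⟩
    have h1 : ∀ᶠ B in (F : Filter (Fin N → SL2)), δ < |om (x B) (y B)| :=
      (tendsto_om hx0 hy0).abs.eventually_const_lt (by rw [hδ]; linarith)
    filter_upwards [h1, hev] with B h1 h2 u hu s hs
    have h3 := h2.2.2.1 u hu s hs
    have h4 := norm_sq_le_nsq u
    have h5 := norm_sq_le_nsq s
    refine abs_le_of_sq_le_sq' ?_ (abs_nonneg _) |>.2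
    rw [sq_abs]
    have h6 : δ ^ 2 ≤ om (x B) (y B) ^ 2 := by
      rw [← sq_abs (om (x B) (y B))]
      have : 0 ≤ δ := by positivity
      gcongr
    have h7 : 0 ≤ nsq u := (sq_nonneg _).trans h4
    calc (δ * ‖u‖ * ‖s‖) ^ 2 = δ ^ 2 * ‖u‖ ^ 2 * ‖s‖ ^ 2 := by ring
      _ ≤ om (x B) (y B) ^ 2 * nsq u * nsq s := by gcongr
      _ ≤ _ := h3
  obtain ⟨p, u, k, l, hpre⟩ := pre_lim hTG.dual hx0 (hev.mono fun B h => h.2.2.2.1)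
  obtain ⟨q, s, k', l', hpre'⟩ := pre_lim hTG hy0 (hev.mono fun B h => h.2.2.2.2)
  obtain ⟨a1, a2, a3, a4, a5, a6, a7, a8⟩ := hpre
  obtain ⟨b1, b2, b3, b4, b5, b6, b7, b8⟩ := hpre'
  exact concl_of_two_sided (a3.mono a5) (b3.mono b5) (a1.trans b1.symm) a4 a5 a6 b4 b5 b6
    (a2 ▸ nz hx1) (b2 ▸ nz hy1) (by rw [a2, b2]; exact hom) a7 b7 a8 b8

end SmallAngle

end BD

namespace BD

open Filter Topology

/-! ### The limit family of directions -/

section LimitSystem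

variable {J : Type*} {F : Ultrafilter J} {ι : Type*} [Finite ι] {T : ι → ι → Prop}
  {Gs : J → ι → ι → SL2} {G : ι → ι → SL2}

/-- Limits of the stable directions of the cocycles `Gs j`. -/
def limS (F : Ultrafilter J) (T : ι → ι → Prop) (Gs : J → ι → ι → SL2) (α : ι) : Set V2 :=
  ulim F fun j => Bd T (Gs j) α

lemma limS_smul (α : ι) : ∀ x ∈ limS F T Gs α, ∀ c : ℝ, c • x ∈ limS F T Gs α := by
  rintro x ⟨f, hf, hx⟩ c
  exact ⟨fun j => c • f j, hf.mono fun j h => Bd.smul h c, hx.const_smul c⟩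

lemma limS_closed (hE : ∀ᶠ j in (F : Filter J), ∃ n, Exp T (Gs j) n) (α : ι)
    (hne : ∀ a, ∃ b, T a b) : IsClosed (limS F T Gs α) := by
  refine isClosed_ulim _ (hE.mono fun j ⟨n, hn⟩ => Bd.isClosed hn α) (hE.mono fun j ⟨n, hn⟩ => ?_)
  obtain ⟨x, hx, -⟩ := Bd.exists_ne_zero hn hne α
  exact ⟨x, hx⟩

lemma limS_ne (hE : ∀ᶠ j in (F : Filter J), ∃ n, Exp T (Gs j) n) (α : ι)
    (hne : ∀ a, ∃ b, T a b) : ∃ x ∈ limS F T Gs α, x ≠ 0 := by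
  have key : ∀ j, ∃ x, (∃ n, Exp T (Gs j) n) → x ∈ Bd T (Gs j) α ∧ ‖x‖ = 1 := by
    intro j
    by_cases hj : ∃ n, Exp T (Gs j) n
    · obtain ⟨n, hn⟩ := hj
      obtain ⟨x, hx, h0⟩ := Bd.exists_ne_zero hn hne α
      exact ⟨_, fun _ => exists_unit (fun x hx c => Bd.smul hx c) hx h0⟩
    · exact ⟨0, fun h => absurd h hj⟩
  choose f hf using key
  have hf' := hE.mono fun j h => hf j h
  obtain ⟨x, hx⟩ := ultra_lim (F := F) (f := f) (R := 1) (hf'.mono fun j h => h.2.le)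
  refine ⟨x, ⟨f, hf'.mono fun j h => h.1, hx⟩, ?_⟩
  have : ‖x‖ = 1 := tendsto_nhds_unique hx.norm
    (tendsto_const_nhds.congr' (hf'.mono fun j h => h.2.symm))
  rw [← norm_ne_zero_iff, this]
  exact one_ne_zero

lemma limS_bwd (h : TG F Gs G) {a b : ι} (hT : T a b) {s : V2} (hs : s ∈ limS F T Gs b) :
    act (G a b)⁻¹ s ∈ limS F T Gs a := by
  obtain ⟨f, hf, hx⟩ := hs
  refine ⟨fun j => act (Gs j a b)⁻¹ (f j), hf.mono fun j h => Bd.prepend hT h, ?_⟩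
  exact tendsto_act (g := fun j => (Gs j a b)⁻¹) (fun i k => h.dual b a i k) hx

lemma limS_fwd (h : TG F Gs G) {a : ι} {s : V2} (hs : s ∈ limS F T Gs a) :
    ∃ b, T a b ∧ act (G a b) s ∈ limS F T Gs b := by
  obtain ⟨f, hf, hx⟩ := hs
  have key : ∀ j, ∃ b, f j ∈ Bd T (Gs j) a → T a b ∧ act (Gs j a b) (f j) ∈ Bd T (Gs j) b := by
    intro j
    by_cases hj : f j ∈ Bd T (Gs j) a
    · obtain ⟨b, hb⟩ := Bd.tail hj
      exact ⟨b, fun _ => hb⟩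
    · exact ⟨a, fun h => absurd h hj⟩
  choose bs hbs using key
  obtain ⟨b, hb⟩ := ultra_const (F := F) bs
  have hev : ∀ᶠ j in (F : Filter J), T a b ∧ act (Gs j a b) (f j) ∈ Bd T (Gs j) b := by
    filter_upwards [hf, hb] with j h1 h2
    rw [← h2]
    exact hbs j h1
  obtain ⟨j, hj⟩ := hev.exists
  exact ⟨b, hj.1, _, hev.mono fun j h => h.2, tendsto_act (fun i k => h a b i k) hx⟩

/-- If the angles stay bounded below, the limit directions form an invariant transverse family. -/
lemma sys_lim (h : TG F Gs G) (hE : ∀ᶠ j in (F : Filter J), ∃ n, Exp T (Gs j) n)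
    (hs : ∀ a, ∃ b, T a b) (hp : ∀ b, ∃ a, T a b)
    (hang : ∀ α, ∃ δ > 0, ∀ᶠ j in (F : Filter J), ∀ u ∈ Bd (flip T) (dualG (Gs j)) α,
      ∀ s ∈ Bd T (Gs j) α, δ * ‖u‖ * ‖s‖ ≤ |om u s|) :
    Sys T G (limS F (flip T) fun j => dualG (Gs j)) (limS F T Gs) := by
  have hE' : ∀ᶠ j in (F : Filter J), ∃ n, Exp (flip T) (dualG (Gs j)) n :=
    hE.mono fun j ⟨n, hn⟩ => ⟨n, hn.dual⟩
  exact
  { closedU := fun α => limS_closed hE' α hp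
    closedS := fun α => limS_closed hE α hs
    smulU := fun α => limS_smul α
    smulS := fun α => limS_smul α
    neU := fun α => limS_ne hE' α hp
    neS := fun α => limS_ne hE α hs
    fwdU := fun a b hT u hu => by
      have := limS_bwd (T := flip T) h.dual (a := b) (b := a) hT hu
      rwa [dualG, inv_inv] at this
    bwdU := fun b u hu => limS_fwd (T := flip T) h.dual hu
    bwdS := fun a b hT s hs => limS_bwd h hT hs
    fwdS := fun a s hs => limS_fwd h hs
    angle := fun α => by
      obtain ⟨δ, hδ, hd⟩ := hang α
      refine ⟨δ, hδ, ?_⟩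
      rintro u ⟨f, hf, hfu⟩ s ⟨g, hg, hgs⟩
      refine le_of_tendsto_of_tendsto ((hfu.norm.const_mul δ).mul hgs.norm)
        (tendsto_om hfu hgs).abs ?_
      filter_upwards [hd, hf, hg] with j h1 h2 h3 using h1 _ h2 _ h3 }

lemma tendsto_phi (h : TG F Gs G) (q : ℕ → ι) {f : J → V2} {x : V2} (hf : Tendsto f F (𝓝 x))
    (k : ℕ) : Tendsto (fun j => act (Phi (Gs j) q k) (f j)) F (𝓝 (act (Phi G q k) x)) := by
  induction k with
  | zero => simpa only [Phi, act_one] using hf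
  | succ k ih =>
    simp only [Phi, act_mul]
    exact tendsto_act (fun i l => h _ _ i l) ih

/-- Along each closed path some limit of stable directions is invariant and not expanded. -/
lemma limS_cycle (h : TG F Gs G) (hE : ∀ᶠ j in (F : Filter J), ∃ n, Exp T (Gs j) n) {q : ℕ → ι}
    {c : ℕ} (hc : 1 ≤ c) (hq : q c = q 0) (hT : ∀ k < c, T (q k) (q (k + 1))) :
    ∃ s ∈ limS F T Gs (q 0), s ≠ 0 ∧ om s (act (Phi G q c) s) = 0 ∧
      ‖act (Phi G q c) s‖ ≤ ‖s‖ := by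
  have key : ∀ j, ∃ x, (∃ n, Exp T (Gs j) n) → x ∈ Bd T (Gs j) (q 0) ∧ ‖x‖ = 1 ∧
      om x (act (Phi (Gs j) q c) x) = 0 ∧ ‖act (Phi (Gs j) q c) x‖ ≤ ‖x‖ := by
    intro j
    by_cases hj : ∃ n, Exp T (Gs j) n
    · obtain ⟨n, hn⟩ := hj
      obtain ⟨v, κ, ho, h1, hm, hv, hκ⟩ := Bd.exists_cycle_eigenvector hn hc hq hT
      refine ⟨v 0, fun _ => ⟨hm, h1, ?_, ?_⟩⟩
      · rw [← ho.phi le_rfl, hv, om_smul_right, om_self, mul_zero]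
      · rw [← ho.phi le_rfl, hv, norm_smul, h1, mul_one]
        exact hκ
    · exact ⟨0, fun h => absurd h hj⟩
  choose f hf using key
  have hf' := hE.mono fun j h => hf j h
  obtain ⟨x, hx⟩ := ultra_lim (F := F) (f := f) (R := 1) (hf'.mono fun j h => h.2.1.le)
  have hx' := tendsto_phi h q hx c
  have hx1 : ‖x‖ = 1 := tendsto_nhds_unique hx.norm
    (tendsto_const_nhds.congr' (hf'.mono fun j h => h.2.1.symm))
  refine ⟨x, ⟨f, hf'.mono fun j h => h.1, hx⟩, ?_, ?_, ?_⟩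
  · rw [← norm_ne_zero_iff, hx1]
    exact one_ne_zero
  · exact tendsto_nhds_unique (tendsto_om hx hx')
      (tendsto_const_nhds.congr' (hf'.mono fun j h => h.2.2.1.symm))
  · exact le_of_tendsto_of_tendsto hx'.norm hx.norm (hf'.mono fun j h => h.2.2.2)

end LimitSystem

end BD

namespace BD

open Filter Topology

/-! ### Growth when the stable directions are not unique -/

section NonDegenerate

variable {ι : Type*} {T : ι → ι → Prop} {G : ι → ι → SL2} {U S : ι → Set V2}

lemma Sys.phi_mem (h : Sys T G U S) {p : ℕ → ι} {n : ℕ} (hT : ∀ k < n, T (p k) (p (k + 1)))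
    {u : V2} (hu : u ∈ U (p 0)) : ∀ k ≤ n, act (Phi G p k) u ∈ U (p k) := by
  intro k
  induction k with
  | zero => intro _; rwa [Phi, act_one]
  | succ k ih =>
    intro hk
    rw [Phi, act_mul]
    exact h.fwdU _ _ (hT k hk) _ (ih (by omega))

lemma Sys.phi_inv_mem (h : Sys T G U S) {p : ℕ → ι} (k : ℕ) {s : V2}
    (hT : ∀ i < k, T (p i) (p (i + 1))) (hs : s ∈ S (p k)) :
    ∀ i ≤ k, act (Phi G p i) (act (Phi G p k)⁻¹ s) ∈ S (p i) := by
  induction k generalizing s with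
  | zero =>
    intro i hi
    obtain rfl : i = 0 := by omega
    rwa [act_act_inv]
  | succ k ih =>
    intro i hi
    rcases hi.lt_or_eq with h1 | rfl
    · rw [Phi, _root_.mul_inv_rev, act_mul]
      exact ih (fun i hi => hT i (by omega)) (h.bwdS _ _ (hT k (by omega)) s hs) i (by omega)
    · rwa [act_act_inv]

lemma phi_add (p : ℕ → ι) (a b : ℕ) :
    Phi G p (a + b) = Phi G (fun i => p (a + i)) b * Phi G p a := by
  induction b with
  | zero => simp [Phi]
  | succ b ih => rw [← add_assoc, Phi, ih, Phi, mul_assoc]; rfl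

lemma phi_congr {p p' : ℕ → ι} {n : ℕ} (h : ∀ k ≤ n, p k = p' k) : Phi G p n = Phi G p' n := by
  induction n with
  | zero => rfl
  | succ n ih => rw [Phi, Phi, ih fun k hk => h k (by omega), h n (by omega), h (n + 1) le_rfl]

lemma pluecker (u a b t : V2) : om u a * om b t - om u b * om a t + om u t * om a b = 0 := by
  unfold om
  ring

/-- `a` and `b` are the two extreme directions of `E` seen from `u`: among the vectors `t` of `E`
normalised by `om u t = 1`, they maximise the area form. -/
def MaxPair (E : Set V2) (u a b : V2) : Prop :=
  a ∈ E ∧ b ∈ E ∧ om u a = 1 ∧ om u b = 1 ∧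
    ∀ t ∈ E, ∀ t' ∈ E, om u t = 1 → om u t' = 1 → om t t' ≤ om a b

lemma MaxPair.left {E : Set V2} (sE : ∀ x ∈ E, ∀ c : ℝ, c • x ∈ E) {u a b : V2}
    (h : MaxPair E u a b) {t : V2} (ht : t ∈ E) : 0 ≤ om a t * om u t := by
  obtain ⟨ha, hb, hua, hub, hmax⟩ := h
  by_cases h0 : om u t = 0
  · simp [h0]
  have h1 := hmax ((om u t)⁻¹ • t) (sE t ht _) b hb
    (by rw [om_smul_right, inv_mul_cancel₀ h0]) hub
  rw [om_smul_left] at h1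
  have h2 := pluecker u a b t
  rw [hua, hub, om_swap t b] at h2
  have h3 : om a t * om u t = (om u t) ^ 2 * (om a b - (om u t)⁻¹ * om t b) := by
    field_simp
    linear_combination -h2
  rw [h3]
  exact mul_nonneg (sq_nonneg _) (by linarith)

lemma MaxPair.right {E : Set V2} (sE : ∀ x ∈ E, ∀ c : ℝ, c • x ∈ E) {u a b : V2}
    (h : MaxPair E u a b) {t : V2} (ht : t ∈ E) : 0 ≤ om t b * om u t := by
  obtain ⟨ha, hb, hua, hub, hmax⟩ := h
  by_cases h0 : om u t = 0
  · simp [h0]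
  have h1 := hmax a ha ((om u t)⁻¹ • t) (sE t ht _) hua
    (by rw [om_smul_right, inv_mul_cancel₀ h0])
  rw [om_smul_right] at h1
  have h2 := pluecker u a b t
  rw [hua, hub, om_swap t b] at h2
  have h3 : om t b * om u t = (om u t) ^ 2 * (om a b - (om u t)⁻¹ * om a t) := by
    field_simp
    linear_combination -h2
  rw [h3]
  exact mul_nonneg (sq_nonneg _) (by linarith)

lemma eq_zero_of_signs {X c d : ℝ} (hcd : 0 ≤ c * d) (hc : c ≠ 0) (hd : d ≠ 0) (h1 : 0 ≤ X * c)
    (h2 : X * d ≤ 0) : X = 0 := by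
  have h3 : 0 < c * d := lt_of_le_of_ne hcd (Ne.symm (mul_ne_zero hc hd))
  have h4 : X * c * (X * d) ≤ 0 := mul_nonpos_of_nonneg_of_nonpos h1 h2
  have h5 : X ^ 2 * (c * d) ≤ 0 := by linarith
  have h6 : X ^ 2 ≤ 0 := by
    by_contra hX
    push Not at hX
    nlinarith [mul_pos hX h3]
  nlinarith [sq_nonneg X, pow_eq_zero_iff (two_ne_zero) |>.1 (le_antisymm h6 (sq_nonneg X))]

/-- The extreme directions depend only on the class of `u`. -/
lemma MaxPair.parallel {E : Set V2} (sE : ∀ x ∈ E, ∀ c : ℝ, c • x ∈ E) {u a b u' a' b' : V2}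
    (h : MaxPair E u a b) (h' : MaxPair E u' a' b') (hns : ¬ sep E u u')
    (htr : ∀ s ∈ E, s ≠ 0 → om u s ≠ 0) (htr' : ∀ s ∈ E, s ≠ 0 → om u' s ≠ 0) :
    om a a' = 0 ∧ om b b' = 0 := by
  have nz : ∀ {u s : V2}, om u s = 1 → s ≠ 0 := by
    rintro u s hs rfl
    rw [om_zero_right] at hs
    exact zero_ne_one hs
  constructor
  · have h1 := h.left sE h'.1
    have h2 := h'.left sE h.1
    have h3 := not_sep hns h'.1 h.1
    rw [h.2.2.1, h'.2.2.1, mul_one, one_mul] at h3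
    rw [om_swap] at h2
    exact eq_zero_of_signs h3 (htr _ h'.1 (nz h'.2.2.1)) (htr' _ h.1 (nz h.2.2.1)) h1 (by linarith)
  · have h1 := h.right sE h'.2.1
    have h2 := h'.right sE h.2.1
    have h3 := not_sep hns h.2.1 h'.2.1
    rw [h.2.2.2.1, h'.2.2.2.1, mul_one, one_mul] at h3
    rw [om_swap] at h1
    exact eq_zero_of_signs h3 (htr' _ h.2.1 (nz h.2.2.2.1)) (htr _ h'.2.1 (nz h'.2.2.2.1)) h2
      (by linarith)

/-- A return map cannot be hyperbolic with two stable directions: it would move the unstable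
directions arbitrarily close to a stable one. -/
lemma not_expanding {E : Set V2} {δ : ℝ} (hδ : 0 < δ) {W : SL2} {u a b : V2} {κ κ' : ℝ}
    (hU : ∀ w ∈ E, act W w ∈ E) (hang : ∀ w ∈ E, δ * ‖w‖ * ‖a‖ ≤ |om w a|) (hu : u ∈ E)
    (hua : om u a = 1) (hub : om u b = 1) (ha : act W a = κ • a) (hb : act W b = κ' • b)
    (hκ : κ * κ' = 1) : ¬ 1 < |κ| := by
  intro hlt
  have hit : ∀ n : ℕ, ∃ w ∈ E, om w a * κ ^ n = 1 ∧ om w b * κ' ^ n = 1 := by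
    intro n
    induction n with
    | zero => exact ⟨u, hu, by simpa using hua, by simpa using hub⟩
    | succ n ih =>
      obtain ⟨w, hw, h1, h2⟩ := ih
      refine ⟨_, hU w hw, ?_, ?_⟩
      · have := om_act W w a
        rw [ha, om_smul_right] at this
        rw [pow_succ]
        linear_combination κ ^ n * this + h1
      · have := om_act W w b
        rw [hb, om_smul_right] at this
        rw [pow_succ]
        linear_combination κ' ^ n * this + h2
  have ha0 : a ≠ 0 := by
    rintro rfl
    rw [om_zero_right] at hua
    exact zero_ne_one hua
  have hna := norm_pos_iff.2 ha0
  obtain ⟨n, hn⟩ := pow_unbounded_of_one_lt (2 * ‖b‖ / (δ * ‖a‖)) hlt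
  obtain ⟨w, hw, h1, h2⟩ := hit n
  have h3 := hang w hw
  have h4 := om_bound w b
  have e1 : |om w a| * |κ| ^ n = 1 := by rw [← abs_pow, ← abs_mul, h1, abs_one]
  have e2 : |om w b| = |κ| ^ n := by
    have : om w b = κ ^ n := by
      have h5 : κ ^ n * κ' ^ n = 1 := by rw [← mul_pow, hκ, one_pow]
      linear_combination κ ^ n * h2 - om w b * h5
    rw [this, abs_pow]
  have h6 : 1 ≤ |κ| ^ n := one_le_pow₀ hlt.le
  rw [div_lt_iff₀ (by positivity)] at hn
  have h7 : |om w a| ≤ 1 := by nlinarith [abs_nonneg (om w a)]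
  have h8 : ‖w‖ * (δ * ‖a‖) ≤ 1 := by linarith
  rw [e2] at h4
  have h9 : |κ| ^ n * (δ * ‖a‖) ≤ 2 * ‖b‖ * (‖w‖ * (δ * ‖a‖)) := by
    have := mul_le_mul_of_nonneg_right h4 (show 0 ≤ δ * ‖a‖ by positivity)
    linarith
  nlinarith [mul_le_mul_of_nonneg_left h8 (show 0 ≤ 2 * ‖b‖ by positivity)]

end NonDegenerate

/-- If a normalised pair of stable vectors stays extreme for long, a return map has an eigenvalue
of modulus one. -/
lemma Sys.unit_cycle {N : ℕ} {T : Fin N → Fin N → Prop} {G : Fin N → Fin N → SL2}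
    {U S : Fin N → Set V2} (h : Sys T G U S) {m : ℕ} (hc : ∀ α, ¬ Cnt (U α) (S α) (m + 1))
    {p : ℕ → Fin N} (hT : ∀ k < N * m, T (p k) (p (k + 1))) {u a b : V2} (hu : u ∈ U (p 0))
    (ha : ∀ k ≤ N * m, act (Phi G p k) a ∈ S (p k)) (hb : ∀ k ≤ N * m, act (Phi G p k) b ∈ S (p k))
    (hua : om u a = 1) (hub : om u b = 1) (hab : 0 < om a b)
    (hmax : ∀ t ∈ S (p 0), ∀ t' ∈ S (p 0), om u t = 1 → om u t' = 1 → om t t' ≤ om a b) :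
    ∃ (q : ℕ → Fin N) (v : ℕ → V2) (c : ℕ) (κ : ℝ), 1 ≤ c ∧ c ≤ N * m ∧ Orb T G q v c ∧
      q c = q 0 ∧ v 0 ≠ 0 ∧ v c = κ • v 0 ∧ |κ| = 1 := by
  have nz : ∀ {u s : V2}, om u s = 1 → s ≠ 0 := by
    rintro u s hs rfl
    rw [om_zero_right] at hs
    exact zero_ne_one hs
  have hu0 : u ≠ 0 := by
    rintro rfl
    rw [om_zero_left] at hua
    exact zero_ne_one hua
  have hmp : ∀ k ≤ N * m, MaxPair (S (p k)) (act (Phi G p k) u) (act (Phi G p k) a)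
      (act (Phi G p k) b) := by
    intro k hk
    refine ⟨ha k hk, hb k hk, by rwa [om_act], by rwa [om_act], fun t ht t' ht' h1 h2 => ?_⟩
    have hTk : ∀ i < k, T (p i) (p (i + 1)) := fun i hi => hT i (by omega)
    have m1 := h.phi_inv_mem k hTk ht 0 (Nat.zero_le _)
    have m2 := h.phi_inv_mem k hTk ht' 0 (Nat.zero_le _)
    rw [Phi, act_one] at m1 m2
    have := hmax _ m1 _ m2 (by rw [om_swap, om_act_inv, ← om_swap, h1])
      (by rw [om_swap, om_act_inv, ← om_swap, h2])
    rwa [om_act, ← om_act (Phi G p k) a] at this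
  obtain ⟨k, l, hkl, hl, hp, hns⟩ := pigeonhole hc p (fun k => act (Phi G p k) u)
    (fun k hk => ⟨h.phi_mem hT hu k hk, by rwa [Ne, act_eq_zero]⟩)
  have hmk := hmp k (by omega)
  have hml := hmp l hl
  rw [← hp] at hml
  have huk := h.phi_mem hT hu k (by omega)
  have hul := h.phi_mem hT hu l hl
  rw [← hp] at hul
  obtain ⟨ea, eb⟩ := hmk.parallel (h.smulS _) hml hns
    (fun s hs hs0 => h.tr huk hs (by rwa [Ne, act_eq_zero]) hs0)
    (fun s hs hs0 => h.tr hul hs (by rwa [Ne, act_eq_zero]) hs0)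
  obtain ⟨κ, hκ⟩ := exists_smul_of_om (nz hmk.2.2.1) ea
  obtain ⟨κ', hκ'⟩ := exists_smul_of_om (nz hmk.2.2.2.1) eb
  have hkk : κ * κ' = 1 := by
    have h1 := om_act (Phi G p l) a b
    rw [hκ, hκ', om_smul_left, om_smul_right, om_act] at h1
    have : (κ * κ' - 1) * om a b = 0 := by linear_combination h1
    have := (mul_eq_zero.1 this).resolve_right hab.ne'
    linarith
  obtain ⟨c, rfl⟩ := Nat.exists_eq_add_of_lt hkl
  set q : ℕ → Fin N := fun i => p (k + i) with hq
  have hTq : ∀ i < c + 1, T (q i) (q (i + 1)) := fun i hi => hT (k + i) (by omega)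
  have hWadd : ∀ x, act (Phi G p (k + c + 1)) x = act (Phi G q (c + 1)) (act (Phi G p k) x) := by
    intro x
    rw [add_assoc, phi_add, act_mul]
  have hqc : q (c + 1) = q 0 := hp.symm
  have hE : ∀ w ∈ U (p k), act (Phi G q (c + 1)) w ∈ U (p k) := by
    intro w hw
    have := h.phi_mem hTq (u := w) hw (c + 1) le_rfl
    rwa [hqc] at this
  rw [hWadd] at hκ hκ'
  obtain ⟨δ, hδ, hang⟩ := h.angle (p k)
  have n1 := not_expanding hδ hE (fun w hw => hang w hw _ hmk.1) huk hmk.2.2.1 hmk.2.2.2.1 hκ hκ' hkk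
  have n2 := not_expanding hδ hE (fun w hw => hang w hw _ hmk.2.1) huk hmk.2.2.2.1 hmk.2.2.1 hκ' hκ
    (by rw [mul_comm, hkk])
  refine ⟨q, fun i => act (Phi G q i) (act (Phi G p k) a), c + 1, κ, by omega, by omega,
    orb_phi hTq _, hqc, ?_, ?_, ?_⟩
  · simpa only [Phi, act_one] using nz hmk.2.2.1
  · simpa only [Phi, act_one] using hκ
  · have habs : |κ| * |κ'| = 1 := by rw [← abs_mul, hkk, abs_one]
    push Not at n1 n2
    nlinarith [abs_nonneg κ, abs_nonneg κ']

end BD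

namespace BD

open Filter Topology

section Contraction

lemma exists_pos_forall {ι : Type*} [Finite ι] {P : ι → ℝ → Prop} (hm : ∀ α x y, x ≤ y → P α y → P α x)
    (h : ∀ α, ∃ δ > 0, P α δ) : ∃ δ > 0, ∀ α, P α δ := by
  have h1 : ∀ᶠ δ in 𝓝[>] (0 : ℝ), 0 < δ ∧ ∀ α, P α δ := by
    refine eventually_mem_nhdsWithin.and (eventually_all.2 fun α => ?_)
    obtain ⟨δ, hδ, hP⟩ := h α
    filter_upwards [Ioc_mem_nhdsGT hδ] with x hx
    exact hm α _ _ hx.2 hP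
  obtain ⟨δ, h2, h3⟩ := h1.exists
  exact ⟨δ, h2, h3⟩

variable {N : ℕ} {T : Fin N → Fin N → Prop} {G : Fin N → Fin N → SL2} {U S : Fin N → Set V2}

lemma ne_zero_of_om_eq_one {u s : V2} (h : om u s = 1) : u ≠ 0 ∧ s ≠ 0 := by
  constructor
  · rintro rfl
    rw [om_zero_left] at h
    exact zero_ne_one h
  · rintro rfl
    rw [om_zero_right] at h
    exact zero_ne_one h

/-- There is a path with an invariant direction along which the return map is an isometry. -/
def UnitCycle (T : Fin N → Fin N → Prop) (G : Fin N → Fin N → SL2) (K : ℕ) : Prop :=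
  ∃ (q : ℕ → Fin N) (v : ℕ → V2) (c : ℕ) (κ : ℝ), 1 ≤ c ∧ c ≤ K ∧ Orb T G q v c ∧
    q c = q 0 ∧ v 0 ≠ 0 ∧ v c = κ • v 0 ∧ |κ| = 1

/-- In the absence of a unit cycle, seen from a unit unstable vector `u`, the pairs of stable
vectors that come from stable vectors in the future of a long path are not extreme. -/
lemma Sys.contract_unit (h : Sys T G U S) {m : ℕ} (hc : ∀ α, ¬ Cnt (U α) (S α) (m + 1))
    (hno : ¬ UnitCycle T G (N * m)) (hsp : ∀ α, ∃ s ∈ S α, ∃ s' ∈ S α, om s s' ≠ 0) :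
    ∃ η : ℝ, 0 < η ∧ η < 1 ∧ ∀ (p : ℕ → Fin N) (u a b : V2),
      (∀ k < N * m, T (p k) (p (k + 1))) → u ∈ U (p 0) → ‖u‖ = 1 →
      (∀ k ≤ N * m, act (Phi G p k) a ∈ S (p k)) → (∀ k ≤ N * m, act (Phi G p k) b ∈ S (p k)) →
      om u a = 1 → om u b = 1 →
      ∃ t ∈ S (p 0), ∃ t' ∈ S (p 0), om u t = 1 ∧ om u t' = 1 ∧ om a b ≤ η * om t t' := by
  by_contra hcon
  push Not at hcon
  have hη : ∀ j : ℕ, 0 < 1 - 1 / ((j : ℝ) + 2) ∧ 1 - 1 / ((j : ℝ) + 2) < 1 := by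
    intro j
    have h1 : 0 < 1 / ((j : ℝ) + 2) := by positivity
    have h2 : 1 / ((j : ℝ) + 2) < 1 := by
      rw [div_lt_one (by positivity)]
      linarith [(Nat.cast_nonneg j : (0 : ℝ) ≤ j)]
    constructor <;> linarith
  have hηlim : Tendsto (fun j : ℕ => 1 - 1 / ((j : ℝ) + 2)) (hyperfilter ℕ) (𝓝 1) := by
    have h1 : Tendsto (fun j : ℕ => (j : ℝ) + 2) atTop atTop :=
      tendsto_atTop_add_const_right _ _ tendsto_natCast_atTop_atTop
    have h2 : Tendsto (fun j : ℕ => 1 - 1 / ((j : ℝ) + 2)) atTop (𝓝 (1 - 0)) := by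
      simp only [one_div]
      exact tendsto_const_nhds.sub h1.inv_tendsto_atTop
    rw [sub_zero] at h2
    exact h2.mono_left (Nat.hyperfilter_le_atTop)
  choose p u a b hT hu hu1 ha hb hua hub hlt using fun j : ℕ => hcon _ (hη j).1 (hη j).2
  set F : Ultrafilter ℕ := hyperfilter ℕ
  -- the initial segments of the paths take finitely many values
  obtain ⟨g, hg⟩ := ultra_const (F := F) fun j => fun i : Fin (N * m + 1) => p j i
  obtain ⟨j0, hj0⟩ := hg.exists
  have hp : ∀ᶠ j in (F : Filter ℕ), ∀ k ≤ N * m, p j k = p j0 k := by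
    filter_upwards [hg] with j hj k hk
    have := congrFun (hj.trans hj0.symm) ⟨k, by omega⟩
    simpa using this
  obtain ⟨δ, hδ, hang⟩ := h.angle (p j0 0)
  have hbd : ∀ f : ℕ → V2, (∀ j, om (u j) (f j) = 1) → (∀ j, f j ∈ S (p j 0)) →
      ∃ x, Tendsto f F (𝓝 x) := by
    intro f h1 h2
    refine ultra_lim (F := F) (R := 1 / δ) ?_
    filter_upwards [hp] with j hj
    have h3 := hang (u j) (hj 0 (Nat.zero_le _) ▸ hu j) (f j) (hj 0 (Nat.zero_le _) ▸ h2 j)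
    rw [h1, hu1, mul_one, abs_one] at h3
    rw [le_div_iff₀ hδ]
    linarith
  have ha0 : ∀ j, a j ∈ S (p j 0) := fun j => by
    have := ha j 0 (Nat.zero_le _)
    rwa [Phi, act_one] at this
  have hb0 : ∀ j, b j ∈ S (p j 0) := fun j => by
    have := hb j 0 (Nat.zero_le _)
    rwa [Phi, act_one] at this
  obtain ⟨u', hu'⟩ := ultra_lim (F := F) (f := u) (R := 1) (Eventually.of_forall fun j => (hu1 j).le)
  obtain ⟨a', ha'⟩ := hbd a hua ha0
  obtain ⟨b', hb'⟩ := hbd b hub hb0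
  have hTG : TG F (fun _ : ℕ => G) G := fun _ _ _ _ => tendsto_const_nhds
  have lim_mem : ∀ {f : ℕ → V2} {x : V2}, Tendsto f F (𝓝 x) →
      (∀ j, ∀ k ≤ N * m, act (Phi G (p j) k) (f j) ∈ S (p j k)) →
      ∀ k ≤ N * m, act (Phi G (p j0) k) x ∈ S (p j0 k) := by
    intro f x hf hm k hk
    refine (h.closedS _).mem_of_tendsto (tendsto_phi hTG (p j0) hf k) ?_
    filter_upwards [hp] with j hj
    rw [← phi_congr (G := G) (fun i hi => hj i (by omega) : ∀ i ≤ k, p j i = p j0 i), ← hj k hk]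
    exact hm j k hk
  have hu'U : u' ∈ U (p j0 0) := by
    refine (h.closedU _).mem_of_tendsto hu' ?_
    filter_upwards [hp] with j hj
    rw [← hj 0 (Nat.zero_le _)]
    exact hu j
  have e1 : om u' a' = 1 :=
    tendsto_nhds_unique (tendsto_om hu' ha') (by simp only [hua]; exact tendsto_const_nhds)
  have e2 : om u' b' = 1 :=
    tendsto_nhds_unique (tendsto_om hu' hb') (by simp only [hub]; exact tendsto_const_nhds)
  have hmax : ∀ t ∈ S (p j0 0), ∀ t' ∈ S (p j0 0), om u' t = 1 → om u' t' = 1 →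
      om t t' ≤ om a' b' := by
    intro t ht t' ht' h1 h2
    have l1 : Tendsto (fun j => om (u j) t) F (𝓝 1) := h1 ▸ tendsto_om hu' tendsto_const_nhds
    have l2 : Tendsto (fun j => om (u j) t') F (𝓝 1) := h2 ▸ tendsto_om hu' tendsto_const_nhds
    have l3 : Tendsto (fun j : ℕ => (1 - 1 / ((j : ℝ) + 2)) *
        ((om (u j) t')⁻¹ * ((om (u j) t)⁻¹ * om t t'))) F (𝓝 (1 * (1⁻¹ * (1⁻¹ * om t t')))) :=
      hηlim.mul ((l2.inv₀ one_ne_zero).mul ((l1.inv₀ one_ne_zero).mul tendsto_const_nhds))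
    simp only [inv_one, one_mul] at l3
    refine le_of_tendsto_of_tendsto l3 (tendsto_om ha' hb') ?_
    filter_upwards [hp, l1.eventually_ne one_ne_zero, l2.eventually_ne one_ne_zero] with j hj n1 n2
    have e := hj 0 (Nat.zero_le _)
    have := hlt j ((om (u j) t)⁻¹ • t) (e ▸ h.smulS _ _ ht _) ((om (u j) t')⁻¹ • t')
      (e ▸ h.smulS _ _ ht' _) (by rw [om_smul_right, inv_mul_cancel₀ n1])
      (by rw [om_smul_right, inv_mul_cancel₀ n2])
    rw [om_smul_right, om_smul_left] at this
    exact this.le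
  have hpos : 0 < om a' b' := by
    obtain ⟨s, hs, s', hs', hss⟩ := hsp (p j0 0)
    have hs0 : s ≠ 0 := by
      rintro rfl
      exact hss (om_zero_left _)
    have hs0' : s' ≠ 0 := by
      rintro rfl
      exact hss (om_zero_right _)
    have n1 := h.tr hu'U hs (ne_zero_of_om_eq_one e1).1 hs0
    have n2 := h.tr hu'U hs' (ne_zero_of_om_eq_one e1).1 hs0'
    have m1 := h.smulS _ _ hs (om u' s)⁻¹
    have m2 := h.smulS _ _ hs' (om u' s')⁻¹
    have w1 : om u' ((om u' s)⁻¹ • s) = 1 := by rw [om_smul_right, inv_mul_cancel₀ n1]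
    have w2 : om u' ((om u' s')⁻¹ • s') = 1 := by rw [om_smul_right, inv_mul_cancel₀ n2]
    have q1 := hmax _ m1 _ m2 w1 w2
    have q2 := hmax _ m2 _ m1 w2 w1
    rw [om_swap] at q2
    have q3 : om ((om u' s)⁻¹ • s) ((om u' s')⁻¹ • s') ≠ 0 := by
      rw [om_smul_left, om_smul_right]
      exact mul_ne_zero (inv_ne_zero n1) (mul_ne_zero (inv_ne_zero n2) hss)
    rcases q3.lt_or_gt with h1 | h1 <;> linarith
  exact hno (h.unit_cycle hc (hT j0) hu'U (lim_mem ha' ha) (lim_mem hb' hb) e1 e2 hpos hmax)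

/-- The contraction of `Sys.contract_unit` for unstable vectors of arbitrary length. -/
lemma Sys.contract (h : Sys T G U S) {m : ℕ} (hc : ∀ α, ¬ Cnt (U α) (S α) (m + 1))
    (hno : ¬ UnitCycle T G (N * m)) (hsp : ∀ α, ∃ s ∈ S α, ∃ s' ∈ S α, om s s' ≠ 0) :
    ∃ η : ℝ, 0 < η ∧ η < 1 ∧ ∀ (p : ℕ → Fin N) (u a b : V2),
      (∀ k < N * m, T (p k) (p (k + 1))) → u ∈ U (p 0) →
      (∀ k ≤ N * m, act (Phi G p k) a ∈ S (p k)) → (∀ k ≤ N * m, act (Phi G p k) b ∈ S (p k)) →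
      om u a = 1 → om u b = 1 →
      ∃ t ∈ S (p 0), ∃ t' ∈ S (p 0), om u t = 1 ∧ om u t' = 1 ∧ om a b ≤ η * om t t' := by
  obtain ⟨η, h0, h1, hη⟩ := h.contract_unit hc hno hsp
  refine ⟨η, h0, h1, fun p u a b hT hu ha hb hua hub => ?_⟩
  have hu0 := (ne_zero_of_om_eq_one hua).1
  have hr := norm_pos_iff.2 hu0
  have hm : ∀ {x : V2}, (∀ k ≤ N * m, act (Phi G p k) x ∈ S (p k)) →
      ∀ k ≤ N * m, act (Phi G p k) (‖u‖ • x) ∈ S (p k) := by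
    intro x hx k hk
    rw [act_smul]
    exact h.smulS _ _ (hx k hk) _
  have hn : ∀ {x : V2}, om u x = 1 → om (‖u‖⁻¹ • u) (‖u‖ • x) = 1 := by
    intro x hx
    rw [om_smul_left, om_smul_right, hx, mul_one, inv_mul_cancel₀ hr.ne']
  have hn' : ∀ {x : V2}, om (‖u‖⁻¹ • u) x = 1 → om u (‖u‖⁻¹ • x) = 1 := by
    intro x hx
    rwa [om_smul_left, ← om_smul_right] at hx
  obtain ⟨hu1, hu2⟩ := exists_unit (h.smulU _) hu hu0
  obtain ⟨t, ht, t', ht', e1, e2, e3⟩ := hη p _ _ _ hT hu1 hu2 (hm ha) (hm hb) (hn hua) (hn hub)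
  refine ⟨_, h.smulS _ _ ht _, _, h.smulS _ _ ht' _, hn' e1, hn' e2, ?_⟩
  rw [om_smul_left, om_smul_right] at e3 ⊢
  have : om a b = ‖u‖⁻¹ * ‖u‖⁻¹ * (‖u‖ * (‖u‖ * om a b)) := by field_simp
  rw [this]
  calc _ ≤ ‖u‖⁻¹ * ‖u‖⁻¹ * (η * om t t') := by gcongr
    _ = _ := by ring

/-- Iterating the contraction: the width of the cone of stable directions decays exponentially. -/
lemma Sys.width (h : Sys T G U S) {L : ℕ} {η : ℝ} (h0 : 0 < η)
    (hη : ∀ (p : ℕ → Fin N) (u a b : V2), (∀ k < L, T (p k) (p (k + 1))) → u ∈ U (p 0) →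
      (∀ k ≤ L, act (Phi G p k) a ∈ S (p k)) → (∀ k ≤ L, act (Phi G p k) b ∈ S (p k)) →
      om u a = 1 → om u b = 1 →
      ∃ t ∈ S (p 0), ∃ t' ∈ S (p 0), om u t = 1 ∧ om u t' = 1 ∧ om a b ≤ η * om t t') (q : ℕ) :
    ∀ (n : ℕ) (p : ℕ → Fin N) (u s s' : V2), q * L ≤ n → (∀ k < n, T (p k) (p (k + 1))) →
      u ∈ U (p 0) → s ∈ S (p n) → s' ∈ S (p n) → om (act (Phi G p n) u) s = 1 →
      om (act (Phi G p n) u) s' = 1 →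
      ∃ t ∈ S (p 0), ∃ t' ∈ S (p 0), om u t = 1 ∧ om u t' = 1 ∧ om s s' ≤ η ^ q * om t t' := by
  induction q with
  | zero =>
    intro n p u s s' _ hT hu hs hs' h1 h2
    have m1 := h.phi_inv_mem n hT hs 0 (Nat.zero_le _)
    have m2 := h.phi_inv_mem n hT hs' 0 (Nat.zero_le _)
    rw [Phi, act_one] at m1 m2
    refine ⟨_, m1, _, m2, ?_, ?_, ?_⟩
    · rw [← om_act (Phi G p n), act_act_inv, h1]
    · rw [← om_act (Phi G p n), act_act_inv, h2]
    · rw [pow_zero, one_mul, om_act]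
  | succ q ih =>
    intro n p u s s' hn hT hu hs hs' h1 h2
    obtain ⟨n, rfl⟩ : ∃ n', n = L + n' := ⟨n - L, by rw [add_mul] at hn; omega⟩
    rw [phi_add, act_mul] at h1 h2
    have hTL : ∀ k < L, T (p k) (p (k + 1)) := fun k hk => hT k (by omega)
    obtain ⟨t, ht, t', ht', e1, e2, e3⟩ := ih n (fun i => p (L + i)) (act (Phi G p L) u) s s'
      (by rw [add_mul] at hn; omega) (fun k hk => hT (L + k) (by omega))
      (h.phi_mem hTL hu L le_rfl) hs hs' h1 h2
    obtain ⟨a, ha, b, hb, f1, f2, f3⟩ := hη p u _ _ hTL hu (h.phi_inv_mem L hTL ht)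
      (h.phi_inv_mem L hTL ht') (by rw [← om_act (Phi G p L), act_act_inv, e1])
      (by rw [← om_act (Phi G p L), act_act_inv, e2])
    refine ⟨a, ha, b, hb, f1, f2, e3.trans ?_⟩
    rw [om_act] at f3
    calc η ^ q * om t t' ≤ η ^ q * (η * om a b) := by gcongr
      _ = _ := by ring

/-- If each stable cone holds two directions then a unit cycle exists or the cocycle grows. -/
lemma Sys.grow (h : Sys T G U S) {m : ℕ} (hc : ∀ α, ¬ Cnt (U α) (S α) (m + 1))
    (hno : ¬ UnitCycle T G (N * m)) (hsp : ∀ α, ∃ s ∈ S α, ∃ s' ∈ S α, om s s' ≠ 0) :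
    Grow T G := by
  obtain ⟨η, h0, h1, hη⟩ := h.contract hc hno hsp
  obtain ⟨δ, hδ, hang⟩ := exists_pos_forall
    (P := fun α δ => ∀ u ∈ U α, ∀ s ∈ S α, δ * ‖u‖ * ‖s‖ ≤ |om u s|)
    (fun α x y hxy hy u hu s hs => le_trans (by gcongr) (hy u hu s hs)) h.angle
  obtain ⟨ρ, hρ, hwide⟩ := exists_pos_forall
    (P := fun α ρ => ∀ w ∈ U α, w ≠ 0 →
      ∃ s ∈ S α, ∃ s' ∈ S α, om w s = 1 ∧ om w s' = 1 ∧ ρ ≤ om s s' * ‖w‖ ^ 2)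
    (fun α x y hxy hy w hw hw0 => by
      obtain ⟨s, hs, s', hs', e1, e2, e3⟩ := hy w hw hw0
      exact ⟨s, hs, s', hs', e1, e2, hxy.trans e3⟩) (fun α => by
      obtain ⟨s, hs, s', hs', hss⟩ := hsp α
      have hs0 : s ≠ 0 := by
        rintro rfl
        exact hss (om_zero_left _)
      have hs0' : s' ≠ 0 := by
        rintro rfl
        exact hss (om_zero_right _)
      have p1 := norm_pos_iff.2 hs0
      have p2 := norm_pos_iff.2 hs0'
      have p3 := abs_pos.2 hss
      refine ⟨|om s s'| / (4 * ‖s‖ * ‖s'‖), by positivity, fun w hw hw0 => ?_⟩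
      have n1 := h.tr hw hs hw0 hs0
      have n2 := h.tr hw hs' hw0 hs0'
      have m1 := h.smulS _ _ hs (om w s)⁻¹
      have m2 := h.smulS _ _ hs' (om w s')⁻¹
      have w1 : om w ((om w s)⁻¹ • s) = 1 := by rw [om_smul_right, inv_mul_cancel₀ n1]
      have w2 : om w ((om w s')⁻¹ • s') = 1 := by rw [om_smul_right, inv_mul_cancel₀ n2]
      have key : |om s s'| / (4 * ‖s‖ * ‖s'‖) ≤
          |om ((om w s)⁻¹ • s) ((om w s')⁻¹ • s')| * ‖w‖ ^ 2 := by
        rw [om_smul_left, om_smul_right, abs_mul, abs_mul, abs_inv, abs_inv]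
        have a1 := abs_pos.2 n1
        have a2 := abs_pos.2 n2
        have b1 := om_bound w s
        have b2 := om_bound w s'
        rw [div_le_iff₀ (by positivity)]
        have : |om w s| * |om w s'| ≤ (2 * ‖w‖ * ‖s‖) * (2 * ‖w‖ * ‖s'‖) := by gcongr
        calc |om s s'| = |om s s'| * (|om w s|⁻¹ * |om w s'|⁻¹) * (|om w s| * |om w s'|) := by
              field_simp
          _ ≤ |om s s'| * (|om w s|⁻¹ * |om w s'|⁻¹) * ((2 * ‖w‖ * ‖s‖) * (2 * ‖w‖ * ‖s'‖)) := by
              gcongr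
          _ = _ := by ring
      rcases le_total 0 (om ((om w s)⁻¹ • s) ((om w s')⁻¹ • s')) with hp | hp
      · rw [abs_of_nonneg hp] at key
        exact ⟨_, m1, _, m2, w1, w2, key⟩
      · rw [abs_of_nonpos hp, ← om_swap] at key
        exact ⟨_, m2, _, m1, w2, w1, key⟩)
  have hc1 : 1 < √(η⁻¹) := by
    rw [Real.lt_sqrt zero_le_one, one_pow]
    exact (one_lt_inv₀ h0).2 h1
  refine ⟨√(ρ * δ ^ 2 / 2), Real.sqrt_pos.2 (by positivity), √(η⁻¹), hc1, N * m + 1, by omega,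
    fun p n hT => ?_⟩
  obtain ⟨u, hu, hu0⟩ := h.neU (p 0)
  refine ⟨u, hu0, ?_⟩
  have hun := h.phi_mem hT hu n le_rfl
  obtain ⟨s, hs, s', hs', e1, e2, e3⟩ := hwide _ _ hun (by rwa [Ne, act_eq_zero])
  set q := n / (N * m + 1)
  have hq : q * (N * m) ≤ n :=
    le_trans (Nat.mul_le_mul_left _ (Nat.le_succ _)) (Nat.div_mul_le_self n (N * m + 1))
  obtain ⟨t, ht, t', ht', f1, f2, f3⟩ := h.width h0 hη q n p u s s' hq hT hu hs hs' e1 e2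
  have g1 := hang _ u hu t ht
  have g2 := hang _ u hu t' ht'
  rw [f1, abs_one] at g1
  rw [f2, abs_one] at g2
  have g3 : om t t' * (δ * ‖u‖) ^ 2 ≤ 2 := by
    calc om t t' * (δ * ‖u‖) ^ 2 ≤ 2 * ‖t‖ * ‖t'‖ * (δ * ‖u‖) ^ 2 := by
          gcongr
          exact (le_abs_self _).trans (om_bound _ _)
      _ = 2 * ((δ * ‖u‖ * ‖t‖) * (δ * ‖u‖ * ‖t'‖)) := by ring
      _ ≤ 2 * (1 * 1) := by gcongr
      _ = 2 := by ring
  set y := act (Phi G p n) u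
  have g4 : ρ * (δ * ‖u‖) ^ 2 ≤ η ^ q * 2 * ‖y‖ ^ 2 := by
    calc ρ * (δ * ‖u‖) ^ 2 ≤ om s s' * ‖y‖ ^ 2 * (δ * ‖u‖) ^ 2 := by gcongr
      _ ≤ (η ^ q * om t t') * ‖y‖ ^ 2 * (δ * ‖u‖) ^ 2 := by gcongr
      _ = η ^ q * (om t t' * (δ * ‖u‖) ^ 2) * ‖y‖ ^ 2 := by ring
      _ ≤ η ^ q * 2 * ‖y‖ ^ 2 := by gcongr
  refine (pow_le_pow_iff_left₀ (by positivity) (norm_nonneg y) two_ne_zero).1 ?_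
  have r1 : (√(η⁻¹) ^ q) ^ 2 = (η ^ q)⁻¹ := by
    rw [← pow_mul, mul_comm, pow_mul, Real.sq_sqrt (by positivity), inv_pow]
  rw [mul_pow, mul_pow, r1, Real.sq_sqrt (by positivity)]
  calc ρ * δ ^ 2 / 2 * (η ^ q)⁻¹ * ‖u‖ ^ 2 = (ρ * (δ * ‖u‖) ^ 2) / 2 * (η ^ q)⁻¹ := by ring
    _ ≤ (η ^ q * 2 * ‖y‖ ^ 2) / 2 * (η ^ q)⁻¹ := by gcongr
    _ = ‖y‖ ^ 2 := by field_simp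

end Contraction

end BD

namespace BD

open Filter Topology

/-! ### Growth when the stable direction is unique -/

section Degenerate

variable {N : ℕ} {T : Fin N → Fin N → Prop} {G : Fin N → Fin N → SL2}

/-- A property that passes along edges spreads to all symbols. -/
lemma transitive_induction (hT : TransitiveSubshift T) {P : Fin N → Prop}
    (h : ∀ a b, T a b → P a → P b) {α : Fin N} (hα : P α) (β : Fin N) : P β := by
  obtain ⟨w, -, hw, h1, h2⟩ := hT α β
  induction w generalizing α with
  | nil => simp at h1
  | cons x l ih =>
    rw [List.head?_cons, Option.some.injEq] at h1
    subst h1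
    cases l with
    | nil =>
      rw [List.getLast?_singleton, Option.some.injEq] at h2
      exact h2 ▸ hα
    | cons y l =>
      have hw' := List.isChain_cons_cons.1 hw
      exact ih (h _ _ hw'.1 hα) hw'.2 (List.head?_cons) (by simpa using h2)

/-- The product of the weights `f` along the first `n` edges of the path `q`. -/
def wt (f : Fin N → Fin N → ℝ) (q : ℕ → Fin N) (n : ℕ) : ℝ :=
  ∏ i ∈ Finset.range n, f (q i) (q (i + 1))

lemma wt_congr (f : Fin N → Fin N → ℝ) {q q' : ℕ → Fin N} {n : ℕ} (h : ∀ i ≤ n, q i = q' i) :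
    wt f q n = wt f q' n := by
  refine Finset.prod_congr rfl fun i hi => ?_
  rw [Finset.mem_range] at hi
  rw [h i (by omega), h (i + 1) (by omega)]

lemma wt_add (f : Fin N → Fin N → ℝ) (q : ℕ → Fin N) (a b : ℕ) :
    wt f q (a + b) = wt f q a * wt f (fun i => q (a + i)) b := by
  rw [wt, Finset.prod_range_add]
  rfl

lemma wt_nonneg {f : Fin N → Fin N → ℝ} (hf : ∀ a b, 0 ≤ f a b) (q : ℕ → Fin N) (n : ℕ) :
    0 ≤ wt f q n :=
  Finset.prod_nonneg fun _ _ => hf _ _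

/-- If simple closed paths have weight less than one then so they have uniformly. -/
lemma exists_cycle_bound {f : Fin N → Fin N → ℝ}
    (h : ∀ (q : ℕ → Fin N) (c : ℕ), 1 ≤ c → c ≤ N → q c = q 0 → (∀ k < c, T (q k) (q (k + 1))) →
      wt f q c < 1) :
    ∃ η : ℝ, 0 < η ∧ η < 1 ∧ ∀ (q : ℕ → Fin N) (c : ℕ), 1 ≤ c → c ≤ N → q c = q 0 →
      (∀ k < c, T (q k) (q (k + 1))) → wt f q c ≤ η := by
  obtain ⟨δ, hδ, hb⟩ := exists_pos_forall (ι := Fin (N + 1) × (Fin (N + 1) → Fin N))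
    (P := fun z δ => ∀ q : ℕ → Fin N, (∀ i : Fin (N + 1), q i = z.2 i) → 1 ≤ z.1.1 →
      q z.1.1 = q 0 → (∀ k < z.1.1, T (q k) (q (k + 1))) → wt f q z.1.1 ≤ 1 - δ)
    (fun z x y hxy hy q h1 h2 h3 h4 => (hy q h1 h2 h3 h4).trans (by linarith)) (fun z => by
      by_cases hz : ∃ q : ℕ → Fin N, (∀ i : Fin (N + 1), q i = z.2 i) ∧ 1 ≤ z.1.1 ∧
        q z.1.1 = q 0 ∧ ∀ k < z.1.1, T (q k) (q (k + 1))
      · obtain ⟨q, h1, h2, h3, h4⟩ := hz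
        refine ⟨1 - wt f q z.1.1, sub_pos.2 (h q _ h2 (Nat.lt_succ_iff.1 z.1.2) h3 h4),
          fun q' h1' _ _ _ => ?_⟩
        rw [wt_congr f (q := q') (q' := q) fun i hi => by
          have hi' : i < N + 1 := lt_of_le_of_lt hi z.1.2
          exact (h1' ⟨i, hi'⟩).trans (h1 ⟨i, hi'⟩).symm]
        linarith
      · exact ⟨1, one_pos, fun q h1 h2 h3 h4 => absurd ⟨q, h1, h2, h3, h4⟩ hz⟩)
  refine ⟨max (1 - δ) (1 / 2), lt_max_of_lt_right (by norm_num),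
    max_lt (by linarith) (by norm_num), fun q c h1 h2 h3 h4 => le_max_of_le_left ?_⟩
  exact hb (⟨c, by omega⟩, fun i => q i) q (fun _ => rfl) h1 h3 h4

/-- Weights decay exponentially along paths, as one sees by excising closed subpaths. -/
lemma wt_decay {f : Fin N → Fin N → ℝ} (hf : ∀ a b, 0 ≤ f a b) {M η : ℝ} (hM : 1 ≤ M)
    (hfM : ∀ a b, f a b ≤ M) (h0 : 0 < η) (h1 : η < 1)
    (h : ∀ (q : ℕ → Fin N) (c : ℕ), 1 ≤ c → c ≤ N → q c = q 0 → (∀ k < c, T (q k) (q (k + 1))) →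
      wt f q c ≤ η) (n : ℕ) :
    ∀ q : ℕ → Fin N, (∀ k < n, T (q k) (q (k + 1))) → wt f q n ≤ M ^ N * η ^ (n / N) := by
  induction n using Nat.strong_induction_on with
  | _ n ih =>
  intro q hT
  have hMN : (0 : ℝ) < M ^ N := by positivity
  rcases lt_or_ge n N with hn | hn
  · rw [Nat.div_eq_of_lt hn, pow_zero, mul_one]
    calc wt f q n ≤ ∏ _i ∈ Finset.range n, M := Finset.prod_le_prod (fun _ _ => hf _ _)
          fun _ _ => hfM _ _
      _ = M ^ n := by simp
      _ ≤ M ^ N := pow_le_pow_right₀ hM hn.le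
  · obtain ⟨x, y, hxy, hq⟩ := Fintype.exists_ne_map_eq_of_card_lt 
      (fun i : Fin (N + 1) => q i) (by rw [Fintype.card_fin, Fintype.card_fin]; omega)
    wlog hlt : x < y generalizing x y
    · exact this y x hxy.symm hq.symm (lt_of_le_of_ne (not_lt.1 hlt) hxy.symm)
    obtain ⟨c, hc⟩ := Nat.exists_eq_add_of_lt (show x.1 < y.1 from hlt)
    have hy := y.2
    replace hq : q x.1 = q y.1 := hq
    rw [hc] at hq
    set k := x.1
    obtain ⟨r, rfl⟩ : ∃ r, n = k + ((c + 1) + r) := ⟨n - (k + (c + 1)), by omega⟩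
    set q' : ℕ → Fin N := fun i => if i ≤ k then q i else q (i + (c + 1)) with hq'
    have e1 : ∀ i ≤ k, q' i = q i := fun i hi => by simp [hq', hi]
    have e2 : ∀ i, q' (k + i) = q (k + ((c + 1) + i)) := by
      intro i
      rcases Nat.eq_zero_or_pos i with rfl | hi
      · simp only [add_zero, hq', le_refl, if_true]
        rw [hq]
        rfl
      · have : ¬ k + i ≤ k := by omega
        simp only [hq', this, if_false]
        congr 1
        omega
    have hT' : ∀ i < k + r, T (q' i) (q' (i + 1)) := by
      intro i hi
      rcases lt_or_ge i k with h2 | h2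
      · rw [e1 i h2.le, e1 (i + 1) h2]
        exact hT i (by omega)
      · obtain ⟨i, rfl⟩ := Nat.exists_eq_add_of_le h2
        rw [add_assoc, e2, e2]
        exact hT (k + (c + 1 + i)) (by omega)
    have hcyc := h (fun i => q (k + i)) (c + 1) (by omega) (by omega) hq.symm
      (fun i hi => hT (k + i) (by omega))
    have hrec := ih (k + r) (by omega) q' hT'
    have e3 : wt f q (k + (c + 1 + r)) =
        wt f q' (k + r) * wt f (fun i => q (k + i)) (c + 1) := by
      have e4 : wt f (fun i => q' (k + i)) r = wt f (fun i => q (k + (c + 1 + i))) r :=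
        wt_congr f fun i _ => e2 i
      rw [wt_add f q k, wt_add f (fun i => q (k + i)) (c + 1) r, wt_add f q' k r, wt_congr f e1, e4]
      ring
    have hNpos : 0 < N := by omega
    have hdiv : (k + (c + 1 + r)) / N ≤ (k + r) / N + 1 := by
      rw [← Nat.add_div_right _ hNpos]
      exact Nat.div_le_div_right (by omega)
    rw [e3]
    calc wt f q' (k + r) * wt f (fun i => q (k + i)) (c + 1)
        ≤ (M ^ N * η ^ ((k + r) / N)) * η :=
          mul_le_mul hrec hcyc (wt_nonneg hf _ _) (by positivity)
      _ = M ^ N * η ^ ((k + r) / N + 1) := by ring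
      _ ≤ M ^ N * η ^ ((k + (c + 1 + r)) / N) := by
          gcongr M ^ N * ?_
          exact pow_le_pow_of_le_one h0.le h1.le hdiv

/-- If there is an invariant line field that is nowhere expanded along closed paths then a unit
cycle exists or the cocycle grows. -/
lemma grow_of_lines [NeZero N] {σ : Fin N → V2} (hσ : ∀ α, ‖σ α‖ = 1)
    (hinv : ∀ a b, T a b → ∃ x : ℝ, act (G a b) (σ a) = x • σ b)
    (hcyc : ∀ (q : ℕ → Fin N) (c : ℕ), 1 ≤ c → q c = q 0 → (∀ k < c, T (q k) (q (k + 1))) →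
      ‖act (Phi G q c) (σ (q 0))‖ ≤ 1) (hno : ¬ UnitCycle T G N) : Grow T G := by
  have hx : ∀ a b, ∃ x : ℝ, T a b → act (G a b) (σ a) = x • σ b := by
    intro a b
    by_cases h : T a b
    · obtain ⟨x, hx⟩ := hinv a b h
      exact ⟨x, fun _ => hx⟩
    · exact ⟨0, fun h' => absurd h' h⟩
  choose x hx using hx
  have hphi : ∀ (q : ℕ → Fin N) (n : ℕ), (∀ k < n, T (q k) (q (k + 1))) →
      act (Phi G q n) (σ (q 0)) = wt x q n • σ (q n) := by
    intro q n
    induction n with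
    | zero => intro _; simp [Phi, wt, act_one]
    | succ n ih =>
      intro hT
      rw [Phi, act_mul, ih fun k hk => hT k (by omega), act_smul, hx _ _ (hT n (by omega)),
        smul_smul, wt, wt, Finset.prod_range_succ]
  have habs : ∀ (q : ℕ → Fin N) (n : ℕ), |wt x q n| = wt (fun a b => |x a b|) q n :=
    fun q n => Finset.abs_prod _ _
  have hnorm : ∀ (q : ℕ → Fin N) (n : ℕ), (∀ k < n, T (q k) (q (k + 1))) →
      ‖act (Phi G q n) (σ (q 0))‖ = wt (fun a b => |x a b|) q n := by
    intro q n hT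
    rw [hphi q n hT, norm_smul, hσ, mul_one, Real.norm_eq_abs, habs]
  have hσ0 : ∀ α, σ α ≠ 0 := fun α h => by
    have := hσ α
    rw [h, norm_zero] at this
    exact zero_ne_one this
  obtain ⟨η, h0, h1, hη⟩ := exists_cycle_bound (T := T) (f := fun a b => |x a b|)
    fun q c hc hcN hq hT => by
      refine lt_of_le_of_ne (hnorm q c hT ▸ hcyc q c hc hq hT) fun heq => hno ?_
      refine ⟨q, fun k => act (Phi G q k) (σ (q 0)), c, wt x q c, hc, hcN, orb_phi hT _, hq, ?_,
        ?_, by rw [habs, heq]⟩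
      · simpa only [Phi, act_one] using hσ0 (q 0)
      · simp only [Phi, act_one]
        rw [hphi q c hT, hq]
  obtain ⟨M, hM⟩ : ∃ M : ℝ, ∀ a b, |x a b| ≤ M := by
    obtain ⟨M, hM⟩ := (Set.finite_range fun z : Fin N × Fin N => |x z.1 z.2|).bddAbove
    exact ⟨M, fun a b => hM ⟨(a, b), rfl⟩⟩
  have hdec := wt_decay (T := T) (f := fun a b => |x a b|) (fun _ _ => abs_nonneg _)
    (le_max_right M 1) (fun a b => (hM a b).trans (le_max_left _ _)) h0 h1 hη
  set M' := max M 1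
  have hM' : 0 < M' := lt_of_lt_of_le one_pos (le_max_right _ _)
  refine ⟨1 / (2 * M' ^ N), by positivity, η⁻¹, (one_lt_inv₀ h0).2 h1, N, NeZero.one_le,
    fun p n hT => ?_⟩
  obtain ⟨w, hw0, hw⟩ := exists_om_ge (σ (p 0))
  refine ⟨w, hw0, ?_⟩
  have e1 := om_bound (act (Phi G p n) (σ (p 0))) (act (Phi G p n) w)
  rw [om_act, hnorm p n hT] at e1
  rw [hσ, one_mul] at hw
  have e2 : ‖w‖ ≤ 2 * (M' ^ N * η ^ (n / N)) * ‖act (Phi G p n) w‖ :=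
    hw.trans (e1.trans (by gcongr; exact hdec n p hT))
  calc 1 / (2 * M' ^ N) * η⁻¹ ^ (n / N) * ‖w‖
      ≤ 1 / (2 * M' ^ N) * η⁻¹ ^ (n / N) *
        (2 * (M' ^ N * η ^ (n / N)) * ‖act (Phi G p n) w‖) := by gcongr
    _ = ‖act (Phi G p n) w‖ := by
        rw [inv_pow]
        field_simp

end Degenerate

end BD

namespace BD

open Filter Topology

/-! ### Conclusion -/

section Final

variable {N : ℕ} {T : Fin N → Fin N → Prop}

lemma Concl.mono {A : Fin N → SL2} {K K' : ℕ} (hK : K ≤ K') (h : Concl T A K) :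
    Concl T A K' := by
  rcases h with ⟨w, h1, h2, h3⟩ | ⟨w, h1, h2, h3⟩ | ⟨u, w, v, h1, h2, h3, h4, h5, h6⟩
  · exact Or.inl ⟨w, h1, h2.trans hK, h3⟩
  · exact Or.inr (Or.inl ⟨w, h1, h2.trans hK, h3⟩)
  · exact Or.inr (Or.inr ⟨u, w, v, h1, h2, h3.trans hK, h4.trans hK, h5.trans hK, h6⟩)

lemma UnitCycle.concl {A : Fin N → SL2} {K : ℕ} (h : UnitCycle T (GB A) K) : Concl T A K := by
  obtain ⟨q, v, c, κ, hc, hcK, ho, hq, hv0, hv, hκ⟩ := h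
  exact concl_of_cycle (a := 0) (c := c) (by rwa [zero_add]) hc hcK (by rwa [zero_add]) hv0
    (by rwa [zero_add]) hκ

/-- Limits of uniformly transverse families at a non-hyperbolic tuple force a unit cycle. -/
lemma concl_of_angle [NeZero N] (hT : TransitiveSubshift T) (hs : ∀ a, ∃ b, T a b)
    (hp : ∀ b, ∃ a, T a b) {A : Fin N → SL2} (hA : ¬ UnifHypSub T A) {m : ℕ}
    {F : Ultrafilter (Fin N → SL2)} (hF : ↑F ≤ 𝓝 A)
    (hFm : ∀ᶠ B in (F : Filter (Fin N → SL2)), UnifHypSub T B ∧ Ncl T m B)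
    (hang : ∀ α, ∃ δ > 0, ∀ᶠ B in (F : Filter (Fin N → SL2)),
      ∀ u ∈ Bd (flip T) (dualG (GB B)) α, ∀ s ∈ Bd T (GB B) α, δ * ‖u‖ * ‖s‖ ≤ |om u s|) :
    Concl T A (N * m + N) := by
  have hTG := tg_of_nhds hF
  have hE : ∀ᶠ B in (F : Filter (Fin N → SL2)), ∃ n, Exp T (GB B) n :=
    hFm.mono fun B hB => unifHyp_exists_exp hB.1
  have hsys := sys_lim hTG hE hs hp hang
  by_contra hcon
  have hng : ¬ Grow T (GB A) := fun h => hA h.unifHyp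
  have hno1 : ¬ UnitCycle T (GB A) (N * m) := fun h => hcon (h.concl.mono (by omega))
  have hno2 : ¬ UnitCycle T (GB A) N := fun h => hcon (h.concl.mono (by omega))
  by_cases hsp : ∀ α, ∃ s ∈ limS F T (fun B => GB B) α, ∃ s' ∈ limS F T (fun B => GB B) α,
      om s s' ≠ 0
  · refine hng (hsys.grow (m := m) (fun α hcnt => ?_) hno1 hsp)
    obtain ⟨B, hB1, hB2⟩ := ((cnt_of_ulim hcnt).and hFm).exists
    exact (hB2.2 α).1 hB1
  · push Not at hsp
    obtain ⟨α, hα⟩ := hsp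
    -- uniqueness of the stable direction propagates along the edges
    have hall := transitive_induction hT (P := fun α => ∀ s ∈ limS F T (fun B => GB B) α,
      ∀ s' ∈ limS F T (fun B => GB B) α, om s s' = 0) (fun a b hab ha s hs s' hs' => by
        rw [← om_act (GB A a b)⁻¹]
        exact ha _ (hsys.bwdS a b hab s hs) _ (hsys.bwdS a b hab s' hs')) hα
    have hunit : ∀ α, ∃ s ∈ limS F T (fun B => GB B) α, ‖s‖ = 1 := by
      intro α
      obtain ⟨x, hx, hx0⟩ := hsys.neS α
      exact ⟨_, exists_unit (hsys.smulS α) hx hx0⟩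
    choose σ hσS hσ using hunit
    have hσ0 : ∀ α, σ α ≠ 0 := fun α h => by
      have := hσ α
      rw [h, norm_zero] at this
      exact zero_ne_one this
    refine hng (grow_of_lines hσ (fun a b hab => ?_) (fun q c hc hq hTq => ?_) hno2)
    · refine exists_smul_of_om (hσ0 b) ?_
      rw [← om_act_inv, hall a _ (hsys.bwdS a b hab _ (hσS b)) _ (hσS a)]
    · obtain ⟨s, hsS, hs0, -, hle⟩ := limS_cycle hTG hE hc hq hTq
      obtain ⟨x, rfl⟩ := exists_smul_of_om (hσ0 _) (hall _ _ (hσS (q 0)) s hsS)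
      have hx0 : x ≠ 0 := by
        rintro rfl
        exact hs0 (zero_smul _ _)
      rw [act_smul, norm_smul, norm_smul, hσ] at hle
      exact le_of_mul_le_mul_left hle (norm_pos_iff.2 hx0)

end Final

end BD

/-- **General boundary theorem** (Theorem B / Theorem 4.1 of
Avila–Bochi–Yoccoz): on the boundary of a connected component of the
hyperbolicity locus of a transitive subshift of finite type, either some
periodic product is `±Id`, or some periodic product is parabolic, or there is a
heteroclinic connection; moreover the lengths of the words involved admit a
bound depending only on the component. -/
theorem general_boundary {N : ℕ} (hN : 2 ≤ N) (T : Fin N → Fin N → Prop)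
    (hT : TransitiveSubshift T) (ξ : Fin N → SL2) (hξ : UnifHypSub T ξ) :
    ∃ K : ℕ, ∀ A : Fin N → SL2,
      A ∈ frontier (connectedComponentIn {B : Fin N → SL2 | UnifHypSub T B} ξ) →
      -- (i) a periodic product equal to `±Id`
      (∃ w : List (Fin N), w ≠ [] ∧ w.length ≤ K ∧ List.Chain' T (w ++ w) ∧
        ((wordProd A w : Matrix (Fin 2) (Fin 2) ℝ) = 1 ∨
          (wordProd A w : Matrix (Fin 2) (Fin 2) ℝ) = -1)) ∨
      -- (ii) a parabolic periodic product
      (∃ w : List (Fin N), w ≠ [] ∧ w.length ≤ K ∧ List.Chain' T (w ++ w) ∧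
        |trace2 (wordProd A w)| = 2 ∧
        (wordProd A w : Matrix (Fin 2) (Fin 2) ℝ) ≠ 1 ∧
        (wordProd A w : Matrix (Fin 2) (Fin 2) ℝ) ≠ -1) ∨
      -- (iii) a heteroclinic connection
      (∃ u w v : List (Fin N), u ≠ [] ∧ w ≠ [] ∧
        u.length ≤ K ∧ w.length ≤ K ∧ v.length ≤ K ∧
        List.Chain' T (u ++ u) ∧ List.Chain' T (w ++ w) ∧
        List.Chain' T (u ++ v ++ w) ∧
        2 < |trace2 (wordProd A u)| ∧ 2 < |trace2 (wordProd A w)| ∧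
        ∃ x : Fin 2 → ℝ, x ≠ 0 ∧ ∃ lam mu : ℝ,
          (wordProd A u : Matrix (Fin 2) (Fin 2) ℝ).mulVec x = lam • x ∧
          1 < |lam| ∧
          (wordProd A w : Matrix (Fin 2) (Fin 2) ℝ).mulVec
              ((wordProd A v : Matrix (Fin 2) (Fin 2) ℝ).mulVec x) =
            mu • (wordProd A v : Matrix (Fin 2) (Fin 2) ℝ).mulVec x ∧
          |mu| < 1) := by
  have hN0 : NeZero N := ⟨by omega⟩
  have hs := BD.exists_succ hN hT
  have hp : ∀ b, ∃ a, T a b := BD.exists_succ hN (BD.transitive_flip hT)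
  obtain ⟨n, hn⟩ := BD.unifHyp_exists_exp hξ
  obtain ⟨m, hm⟩ := BD.exists_ncl hn hs hp
  refine ⟨2 * (N * m) + N, fun A hA => ?_⟩
  -- a frontier point is not hyperbolic and is a limit of the component along an ultrafilter
  have hA' : ¬ UnifHypSub T A := BD.not_mem_of_frontier BD.isOpen_unifHyp hA
  obtain ⟨F, hFH, hF⟩ := mem_closure_iff_ultrafilter.1 (frontier_subset_closure hA)
  have hFm : ∀ᶠ B in (F : Filter (Fin N → SL2)), UnifHypSub T B ∧ BD.Ncl T m B :=
    Filter.mem_of_superset hFH (BD.ncl_component hs hp hξ hm)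
  -- the dichotomy is whether stable and unstable directions stay uniformly transverse
  by_cases hang : ∀ α, ∃ δ > 0, ∀ᶠ B in (F : Filter (Fin N → SL2)),
      ∀ u ∈ BD.Bd (flip T) (BD.dualG (BD.GB B)) α, ∀ s ∈ BD.Bd T (BD.GB B) α,
        δ * ‖u‖ * ‖s‖ ≤ |BD.om u s|
  · exact (BD.concl_of_angle hT hs hp hA' hF hFm hang).mono (by omega)
  · obtain ⟨α, hα⟩ := not_forall.1 hang
    exact (BD.concl_of_small_angle hs hp hF hFm hα).mono (by omega)
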